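/- arXiv:1011.5707 — 4 statements merged into one kernel-verified Lean document; each statement's English description precedes it below -/
import Mathlib

section
/- Let (X, x₀) be a pointed topological space and n ≥ 1 an integer. For every element [f] ∈ π_n^top(X, x₀), the left translation map [g] ↦ [f]·[g] and the right translation map [g] ↦ [g]·[f] are homeomorphisms of π_n^top(X, x₀) onto itself. -/
open scoped Topology Topology.Homotopy unitInterval

noncomputable section

/-- The quotient topology on the `N`-th homotopy group, induced from the compact-open
topology on the space of generalized loops. -/
instance homotopyGroupTopology (N X : Type*) [TopologicalSpace X] (x : X) :
    TopologicalSpace (HomotopyGroup N X x) :=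
  inferInstanceAs (TopologicalSpace (Quotient (GenLoop.Homotopic.setoid N x)))


open GenLoop in
theorem continuous_transAt_aux {N X : Type*} [DecidableEq N] [TopologicalSpace X] {x : X} (i : N) :
    Continuous (fun p : GenLoop N X x × GenLoop N X x => transAt i p.1 p.2) := by
  simp_rw [← fromLoop_trans_toLoop]
  exact (continuous_fromLoop i).comp (((continuous_toLoop i).comp continuous_fst).path_trans ((continuous_toLoop i).comp continuous_snd))

/-- The class of a generalized loop in the homotopy group. -/
def mkAux {N X : Type*} [TopologicalSpace X] {x : X} (p : GenLoop N X x) : HomotopyGroup N X x :=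
  Quotient.mk (GenLoop.Homotopic.setoid N x) p

theorem isQuotientMap_mkAux {N X : Type*} [TopologicalSpace X] {x : X} :
    Topology.IsQuotientMap (mkAux : GenLoop N X x → HomotopyGroup N X x) :=
  isQuotientMap_quotient_mk'

theorem mkAux_mul {N X : Type*} [DecidableEq N] [Nonempty N] [TopologicalSpace X] {x : X} (i : N)
    (p q : GenLoop N X x) : mkAux p * mkAux q = mkAux (GenLoop.transAt i q p) :=
  HomotopyGroup.mul_spec

theorem continuous_mul_left_aux (n : ℕ) (X : Type*) [TopologicalSpace X] (x₀ : X)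
    (f : HomotopyGroup (Fin (n+1)) X x₀) :
    Continuous (fun g : HomotopyGroup (Fin (n+1)) X x₀ => f * g) ∧
    Continuous (fun g : HomotopyGroup (Fin (n+1)) X x₀ => g * f) := by
  obtain ⟨f, rfl⟩ := isQuotientMap_mkAux.surjective f
  have h := @continuous_transAt_aux (Fin (n+1)) X _ _ x₀ 0
  have hQ := @isQuotientMap_mkAux (Fin (n+1)) X _ x₀
  constructor
  · rw [hQ.continuous_iff]
    refine (hQ.continuous.comp
      (h.comp (continuous_id.prodMk (continuous_const (y := f))))).congr fun g => ?_
    exact (mkAux_mul 0 f g).symm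
  · rw [hQ.continuous_iff]
    refine (hQ.continuous.comp
      (h.comp ((continuous_const (y := f)).prodMk continuous_id))).congr fun g => ?_
    exact (mkAux_mul 0 g f).symm

/-- Left and right translations by a fixed element of `π_{n+1}^{top}(X, x₀)` are
homeomorphisms of `π_{n+1}^{top}(X, x₀)` onto itself. -/
theorem translations_isHomeomorph (n : ℕ) (X : Type*) [TopologicalSpace X] (x₀ : X)
    (f : HomotopyGroup (Fin (n+1)) X x₀) :
    IsHomeomorph (fun g : HomotopyGroup (Fin (n+1)) X x₀ => f * g) ∧
    IsHomeomorph (fun g : HomotopyGroup (Fin (n+1)) X x₀ => g * f) := by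
  constructor
  · exact Homeomorph.isHomeomorph
      { Equiv.mulLeft f with
        continuous_toFun := (continuous_mul_left_aux n X x₀ f).1
        continuous_invFun := (continuous_mul_left_aux n X x₀ f⁻¹).1 }
  · exact Homeomorph.isHomeomorph
      { Equiv.mulRight f with
        continuous_toFun := (continuous_mul_left_aux n X x₀ f).2
        continuous_invFun := (continuous_mul_left_aux n X x₀ f⁻¹).2 }
end
end

section
/- Let (X, x₀) be a pointed topological space and n ≥ 1 an integer. Then π_n^top(X, x₀) is a homogeneous space: for any two elements a, b ∈ π_n^top(X, x₀) there exists a homeomorphism of π_n^top(X, x₀) onto itself carrying a to b. -/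
open scoped Topology Topology.Homotopy unitInterval

noncomputable section

theorem homotopyGroup_continuous_mul_left {n : ℕ} {X : Type*} [TopologicalSpace X] {x₀ : X}
    (c : HomotopyGroup (Fin (n+1)) X x₀) :
    Continuous (fun a : HomotopyGroup (Fin (n+1)) X x₀ => c * a) := by
  induction c using Quotient.inductionOn with
  | _ p =>
  have hT : Continuous (fun q : GenLoop (Fin (n+1)) X x₀ =>
      GenLoop.transAt (0 : Fin (n+1)) q p) := by
    simp_rw [← GenLoop.fromLoop_trans_toLoop]
    refine (GenLoop.continuous_fromLoop 0).comp ?_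
    exact Path.continuous_trans.comp
      ((GenLoop.continuous_toLoop 0).prodMk continuous_const)
  have hmk : Continuous (fun q : GenLoop (Fin (n+1)) X x₀ =>
      (Quotient.mk (GenLoop.Homotopic.setoid (Fin (n+1)) x₀) q : HomotopyGroup (Fin (n+1)) X x₀)) :=
    continuous_quot_mk
  have hq : Topology.IsQuotientMap (fun q : GenLoop (Fin (n+1)) X x₀ =>
      (Quotient.mk (GenLoop.Homotopic.setoid (Fin (n+1)) x₀) q : HomotopyGroup (Fin (n+1)) X x₀)) :=
    isQuotientMap_quot_mk
  refine hq.continuous_iff.2 ?_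
  refine (hmk.comp hT).congr fun q => ?_
  exact (HomotopyGroup.mul_spec (i := (0 : Fin (n+1))) (p := p) (q := q)).symm

/-- `π_{n+1}^{top}(X, x₀)` is a homogeneous space: any point can be carried to any other
point by a self-homeomorphism. -/
theorem homotopyGroup_homogeneous (n : ℕ) (X : Type*) [TopologicalSpace X] (x₀ : X)
    (a b : HomotopyGroup (Fin (n+1)) X x₀) :
    ∃ e : HomotopyGroup (Fin (n+1)) X x₀ ≃ₜ HomotopyGroup (Fin (n+1)) X x₀, e a = b := by
  refine ⟨{ toEquiv := Equiv.mulLeft (b * a⁻¹)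
            continuous_toFun := homotopyGroup_continuous_mul_left _
            continuous_invFun := homotopyGroup_continuous_mul_left _ }, ?_⟩
  change b * a⁻¹ * a = b
  exact inv_mul_cancel_right b a
end
end

section
/- Let (X, x₀) be a pointed topological space and n ≥ 1 an integer. For every neighborhood W of the identity element in π_n^top(X, x₀) there exists an open set U ⊆ X containing x₀ such that every homotopy class represented by an n-loop whose image is contained in U belongs to W. -/
open scoped Topology Topology.Homotopy unitInterval

noncomputable section

/-- For every neighborhood `W` of the identity in `π_{n+1}^{top}(X, x₀)` there is an open
set `U ∋ x₀` such that every class represented by a loop with image in `U` lies in `W`. -/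
theorem small_loops_in_nhds_of_one (n : ℕ) (X : Type*) [TopologicalSpace X] (x₀ : X)
    (W : Set (HomotopyGroup (Fin (n+1)) X x₀))
    (hW : W ∈ nhds (1 : HomotopyGroup (Fin (n+1)) X x₀)) :
    ∃ U : Set X, IsOpen U ∧ x₀ ∈ U ∧
      ∀ p : Ω^ (Fin (n+1)) X x₀, (∀ t, p t ∈ U) →
        (⟦p⟧ : HomotopyGroup (Fin (n+1)) X x₀) ∈ W := by
  have h1 : (1 : HomotopyGroup (Fin (n+1)) X x₀) =
      (⟦GenLoop.const⟧ : HomotopyGroup (Fin (n+1)) X x₀) := HomotopyGroup.one_def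
  rw [h1] at hW
  have hq : Continuous (fun p : Ω^ (Fin (n+1)) X x₀ =>
      (⟦p⟧ : HomotopyGroup (Fin (n+1)) X x₀)) := continuous_quotient_mk'
  have hV := hq.continuousAt.preimage_mem_nhds hW
  let l : Filter (Ω^ (Fin (n+1)) X x₀) :=
    (nhds x₀).lift' (fun U => {p : Ω^ (Fin (n+1)) X x₀ | ∀ t, p t ∈ U})
  have hmono : Monotone (fun U : Set X => {p : Ω^ (Fin (n+1)) X x₀ | ∀ t, p t ∈ U}) :=
    fun _ _ h _ hp t => h (hp t)
  have hl : Filter.Tendsto id l (nhds (GenLoop.const : Ω^ (Fin (n+1)) X x₀)) := by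
    rw [tendsto_subtype_rng, ContinuousMap.tendsto_nhds_compactOpen]
    intro K _ O hO hKO
    rcases K.eq_empty_or_nonempty with rfl | ⟨y, hy⟩
    · exact Filter.Eventually.of_forall fun _ => Set.mapsTo_empty _ _
    · have hx : x₀ ∈ O := hKO hy
      filter_upwards [Filter.mem_lift' (hO.mem_nhds hx)] with p hp t _
      exact hp t
  have hm := hl hV
  obtain ⟨S, hS, hSV⟩ := (Filter.mem_lift'_sets hmono).1 hm
  obtain ⟨U, hUS, hU, hxU⟩ := mem_nhds_iff.1 hS
  exact ⟨U, hU, hxU, fun p hp => hSV (fun t => hUS (hp t))⟩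
end
end

section
/- For every integer n ≥ 2, the n-th homotopy group π_n(ℋ_n, 0) of the n-dimensional Hawaiian earring is isomorphic as a group to the countable direct product ∏_{j∈ℕ} ℤ of copies of the integers (equivalently, to the inverse limit of the groups G_i = ℤ^i under the coordinate projections G_i → G_k for k ≤ i). -/
open scoped Topology Topology.Homotopy unitInterval

noncomputable section

/-- The `n`-sphere of radius `1/j` centered at `(1/j, 0, …, 0)` in `ℝ^{n+1}`
(it passes through the origin). -/
def hawSphere (n j : ℕ) : Set (EuclideanSpace ℝ (Fin (n+1))) :=
  Metric.sphere (EuclideanSpace.single (0 : Fin (n+1)) ((1 : ℝ)/j)) (1/j)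

/-- The `n`-dimensional Hawaiian earring: the union of the spheres `hawSphere n j`, `j ≥ 1`. -/
def hawaiian (n : ℕ) : Set (EuclideanSpace ℝ (Fin (n+1))) :=
  ⋃ j ∈ {j : ℕ | 1 ≤ j}, hawSphere n j

/-- The union `Y_i^{(n)}` of the first `i` spheres of the `n`-dimensional Hawaiian earring. -/
def Ysub (n i : ℕ) : Set (EuclideanSpace ℝ (Fin (n+1))) :=
  ⋃ j ∈ Finset.Icc 1 i, hawSphere n j

lemma zero_mem_hawSphere (n j : ℕ) : (0 : EuclideanSpace ℝ (Fin (n+1))) ∈ hawSphere n j := by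
  have : dist (0 : EuclideanSpace ℝ (Fin (n+1)))
      (EuclideanSpace.single (0 : Fin (n+1)) ((1 : ℝ)/j)) = 1/j := by
    rw [dist_zero_left, EuclideanSpace.norm_single, Real.norm_eq_abs,
      abs_of_nonneg (one_div_nonneg.mpr (Nat.cast_nonneg j))]
  exact Metric.mem_sphere.mpr this

lemma zero_mem_hawaiian (n : ℕ) : (0 : EuclideanSpace ℝ (Fin (n+1))) ∈ hawaiian n :=
  Set.mem_biUnion (by simp : (1 : ℕ) ∈ {j : ℕ | 1 ≤ j}) (zero_mem_hawSphere n 1)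

lemma zero_mem_Ysub (n i : ℕ) : (0 : EuclideanSpace ℝ (Fin (n+1))) ∈ Ysub n (i+1) :=
  Set.mem_biUnion (by simp : (1 : ℕ) ∈ Finset.Icc 1 (i+1)) (zero_mem_hawSphere n 1)

/-- The basepoint (the origin) of the Hawaiian earring. -/
def hawaiianPt (n : ℕ) : ↥(hawaiian n) := ⟨0, zero_mem_hawaiian n⟩

/-- The basepoint (the origin) of `Y_{i+1}^{(n)}`. -/
def YsubPt (n i : ℕ) : ↥(Ysub n (i+1)) := ⟨0, zero_mem_Ysub n i⟩

namespace HE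

section Functoriality
variable {N X Y Z : Type*} [TopologicalSpace X] [TopologicalSpace Y] [TopologicalSpace Z]

/-- Build a homotopy of generalized loops from an explicit map. -/
lemma homotopic_of {x : X} {f g : Ω^ N X x} (H : I × (N → I) → X) (hc : Continuous H)
    (h0 : ∀ y, H (0, y) = f y) (h1 : ∀ y, H (1, y) = g y)
    (hb : ∀ t, ∀ y ∈ Cube.boundary N, H (t, y) = x) : GenLoop.Homotopic f g :=
  ⟨{ toFun := H
     continuous_toFun := hc
     map_zero_left := h0
     map_one_left := h1
     prop' := fun t y hy => by
      change H (t, y) = f y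
      rw [hb t y hy]
      exact (f.2 y hy).symm }⟩

lemma exists_of_homotopic {x : X} {f g : Ω^ N X x} (h : GenLoop.Homotopic f g) :
    ∃ H : I × (N → I) → X, Continuous H ∧ (∀ y, H (0, y) = f y) ∧ (∀ y, H (1, y) = g y) ∧
      ∀ t, ∀ y ∈ Cube.boundary N, H (t, y) = x := by
  obtain ⟨H⟩ := h
  refine ⟨H, H.continuous, H.apply_zero, H.apply_one, fun t y hy => ?_⟩
  rw [H.eq_fst t hy]
  exact f.2 y hy

/-- Push forward a generalized loop. -/
def lmap (φ : C(X, Y)) {x : X} {y : Y} (h : φ x = y) (f : Ω^ N X x) : Ω^ N Y y :=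
  ⟨φ.comp f.1, fun t ht => by
    change φ (f.1 t) = y
    rw [f.2 t ht, h]⟩

@[simp] lemma lmap_apply (φ : C(X, Y)) {x : X} {y : Y} (h : φ x = y) (f : Ω^ N X x) (t : N → I) :
    lmap φ h f t = φ (f t) := rfl

lemma lmap_homotopic (φ : C(X, Y)) {x : X} {y : Y} (h : φ x = y) {f g : Ω^ N X x}
    (hfg : GenLoop.Homotopic f g) : GenLoop.Homotopic (lmap φ h f) (lmap φ h g) := by
  obtain ⟨H, hc, h0, h1, hb⟩ := exists_of_homotopic hfg
  refine homotopic_of (fun p => φ (H p)) (by fun_prop) ?_ ?_ ?_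
  · intro y; simp [h0]
  · intro y; simp [h1]
  · intro t y hy; simp [hb t y hy, h]

variable [DecidableEq N]

lemma transAt_apply {x : X} (i : N) (f g : Ω^ N X x) (t : N → I) :
    GenLoop.transAt i f g t = if (t i : ℝ) ≤ 1 / 2
      then f (Function.update t i <| Set.projIcc 0 1 zero_le_one (2 * t i))
      else g (Function.update t i <| Set.projIcc 0 1 zero_le_one (2 * t i - 1)) := rfl

lemma lmap_transAt (φ : C(X, Y)) {x : X} {y : Y} (h : φ x = y) (i : N) (f g : Ω^ N X x) :
    lmap φ h (GenLoop.transAt i f g) = GenLoop.transAt i (lmap φ h f) (lmap φ h g) := by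
  ext t
  simp only [lmap_apply, transAt_apply]
  split_ifs <;> rfl

/-- Class of a loop in the homotopy group. -/
def cl {x : X} (f : Ω^ N X x) : HomotopyGroup N X x := Quotient.mk _ f

lemma cl_eq {x : X} {f g : Ω^ N X x} : cl f = cl g ↔ GenLoop.Homotopic f g :=
  Quotient.eq

lemma cl_surj {x : X} (c : HomotopyGroup N X x) : ∃ f : Ω^ N X x, cl f = c :=
  Quotient.exists_rep c

variable [Nonempty N]

lemma cl_mul {x : X} (i : N) (f g : Ω^ N X x) : cl f * cl g = cl (GenLoop.transAt i g f) :=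
  HomotopyGroup.mul_spec

lemma cl_one {x : X} : cl (GenLoop.const : Ω^ N X x) = 1 := rfl

lemma cl_inv {x : X} (i : N) (f : Ω^ N X x) : (cl f)⁻¹ = cl (GenLoop.symmAt i f) :=
  HomotopyGroup.inv_spec

/-- The homomorphism induced on homotopy groups. -/
def pimap (φ : C(X, Y)) {x : X} {y : Y} (h : φ x = y) :
    HomotopyGroup N X x →* HomotopyGroup N Y y where
  toFun := Quotient.map (lmap φ h) (fun _ _ hfg => lmap_homotopic φ h hfg)
  map_one' := by
    rw [← cl_one, ← cl_one]
    change cl _ = cl _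
    congr 1
    ext t
    exact h
  map_mul' := by
    intro a b
    obtain ⟨f, rfl⟩ := cl_surj a
    obtain ⟨g, rfl⟩ := cl_surj b
    rw [cl_mul (Classical.arbitrary N)]
    change cl _ = cl _ * cl _
    rw [cl_mul (Classical.arbitrary N), lmap_transAt]

lemma pimap_cl (φ : C(X, Y)) {x : X} {y : Y} (h : φ x = y) (f : Ω^ N X x) :
    pimap φ h (cl f) = cl (lmap φ h f) := rfl

/-- A homeomorphism induces an isomorphism. -/
def piequiv (φ : X ≃ₜ Y) {x : X} {y : Y} (h : φ x = y) :
    HomotopyGroup N X x ≃* HomotopyGroup N Y y :=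
  MulEquiv.ofBijective (pimap (φ : C(X, Y)) h) (by
    have h' : φ.symm y = x := by rw [← h]; simp
    constructor
    · intro a b hab
      obtain ⟨f, rfl⟩ := cl_surj a
      obtain ⟨g, rfl⟩ := cl_surj b
      have := congrArg (pimap (N := N) (φ.symm : C(Y, X)) h') hab
      simp only [pimap_cl] at this
      convert this using 2 <;> (ext t; simp)
    · intro b
      obtain ⟨g, rfl⟩ := cl_surj b
      refine ⟨cl (lmap (φ.symm : C(Y, X)) h' g), ?_⟩
      rw [pimap_cl]
      congr 1
      ext t; simp)

/-- Splitting lemma: two loops whose supports lie over disjoint families of lines in direction `a`. -/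
lemma class_split [T1Space X] {x : X} (a : N) (f f1 f2 : Ω^ N X x)
    (hl : ∀ y : N → I,
      ((∀ s, f1 (Function.update y a s) = x) ∧
        ∀ s, f (Function.update y a s) = f2 (Function.update y a s)) ∨
      ((∀ s, f2 (Function.update y a s) = x) ∧
        ∀ s, f (Function.update y a s) = f1 (Function.update y a s))) :
    cl f = cl f1 * cl f2 := by
  classical
  set U1 : Set (N → I) := {y | ∀ s, f2 (Function.update y a s) = x} with hU1
  set U2 : Set (N → I) := {y | ∀ s, f1 (Function.update y a s) = x} with hU2
  have cf : ∀ f : Ω^ N X x, Continuous f := fun f => f.1.continuous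
  have cl1 : ∀ g : Ω^ N X x, IsClosed {y : N → I | ∀ s, g (Function.update y a s) = x} := by
    intro g
    rw [Set.ofPred_forall]
    refine isClosed_iInter fun s => ?_
    have : Continuous fun y : N → I => g (Function.update y a s) := by
      refine (cf g).comp ?_
      fun_prop
    exact (isClosed_singleton (x := x)).preimage this
  have hcov : ∀ y, y ∈ U1 ∨ y ∈ U2 := fun y => by
    rcases hl y with h | h
    · exact Or.inr h.1
    · exact Or.inl h.1
  have hf1 : ∀ y ∈ U1, f y = f1 y := by
    intro y hy
    have hy' : f2 y = x := by simpa using hy (y a)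
    rcases hl y with h | h
    · have h1 := h.1 (y a); have h2 := h.2 (y a)
      simp only [Function.update_eq_self] at h1 h2
      rw [h2, h1, hy']
    · simpa using h.2 (y a)
  have hf2 : ∀ y ∈ U2, f y = f2 y := by
    intro y hy
    have hy' : f1 y = x := by simpa using hy (y a)
    rcases hl y with h | h
    · simpa using h.2 (y a)
    · have h1 := h.1 (y a); have h2 := h.2 (y a)
      simp only [Function.update_eq_self] at h1 h2
      rw [h2, h1, hy']
  let ψ : I × (N → I) → (N → I) := fun p =>
    Function.update p.2 a (Set.projIcc 0 1 zero_le_one ((1 + (p.1 : ℝ)) * p.2 a - p.1))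
  let φ : I × (N → I) → (N → I) := fun p =>
    Function.update p.2 a (Set.projIcc 0 1 zero_le_one ((1 + (p.1 : ℝ)) * p.2 a))
  have cψ : Continuous ψ := by
    refine continuous_snd.update a ?_
    refine continuous_projIcc.comp ?_
    fun_prop
  have cφ : Continuous φ := by
    refine continuous_snd.update a ?_
    refine continuous_projIcc.comp ?_
    fun_prop
  let H : I × (N → I) → X := fun p => if p.2 ∈ U1 then f1 (ψ p) else f2 (φ p)
  have hH1 : ∀ p : I × (N → I), p.2 ∈ U1 → H p = f1 (ψ p) := fun p hp => if_pos hp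
  have hH2 : ∀ p : I × (N → I), p.2 ∈ U2 → H p = f2 (φ p) := by
    intro p hp
    by_cases h : p.2 ∈ U1
    · rw [hH1 p h]
      rw [hp, h]
    · exact if_neg h
  have cH : Continuous H := by
    rw [← continuousOn_univ]
    have : (Set.univ : Set (I × (N → I))) = (Prod.snd ⁻¹' U1) ∪ (Prod.snd ⁻¹' U2) := by
      ext p; simpa using hcov p.2
    rw [this]
    refine ContinuousOn.union_of_isClosed ?_ ?_ ((cl1 f2).preimage continuous_snd)
      ((cl1 f1).preimage continuous_snd)
    · exact (((cf f1).comp cψ).continuousOn).congr fun p hp => hH1 p hp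
    · exact (((cf f2).comp cφ).continuousOn).congr fun p hp => hH2 p hp
  rw [cl_mul a, cl_eq]
  refine homotopic_of H cH ?_ ?_ ?_
  · intro y
    rcases hcov y with h | h
    · rw [hH1 (0, y) h, hf1 y h]; congr 1; simp [ψ]
    · rw [hH2 (0, y) h, hf2 y h]; congr 1; simp [φ]
  · intro y
    rw [transAt_apply]
    rcases hcov y with h | h
    · rw [hH1 (1, y) h]
      split_ifs with hy
      · rw [h]
        refine f1.2 _ ⟨a, Or.inl ?_⟩
        simp only [ψ, Function.update_self]
        apply Set.projIcc_of_le_left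
        simp; linarith
      · congr 1
        simp only [ψ]
        congr 2
        change (1 + ((1:I):ℝ)) * (y a:ℝ) - ((1:I):ℝ) = 2 * y a - 1
        rw [Set.Icc.coe_one]; ring
    · rw [hH2 (1, y) h]
      split_ifs with hy
      · congr 1
        simp only [φ]
        congr 2
        change (1 + ((1:I):ℝ)) * (y a:ℝ) = 2 * y a
        rw [Set.Icc.coe_one]; ring
      · rw [h]
        refine f2.2 _ ⟨a, Or.inr ?_⟩
        simp only [φ, Function.update_self]
        apply Set.projIcc_of_right_le
        simp; linarith
  · rintro t y ⟨b, hb⟩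
    have key : ∀ z : N → I, (∀ c, c ≠ a → z c = y c) → (y a = 0 → z a = 0) → (y a = 1 → z a = 1) →
        z ∈ Cube.boundary N := by
      intro z h1 h2 h3
      refine ⟨b, ?_⟩
      by_cases hba : b = a
      · subst hba
        rcases hb with hb | hb
        · exact Or.inl (h2 hb)
        · exact Or.inr (h3 hb)
      · rw [h1 b hba]; exact hb
    rcases hcov y with h | h
    · rw [hH1 (t, y) h]
      refine f1.2 _ (key _ ?_ ?_ ?_)
      · intro c hc; simp [ψ, hc]
      · intro h; simp only [ψ, Function.update_self, h]
        apply Set.projIcc_of_le_left; simp; exact t.2.1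
      · intro h; simp only [ψ, Function.update_self, h]
        apply Set.projIcc_of_right_le; simp
    · rw [hH2 (t, y) h]
      refine f2.2 _ (key _ ?_ ?_ ?_)
      · intro c hc; simp [φ, hc]
      · intro h; simp only [φ, Function.update_self, h]
        apply Set.projIcc_of_le_left; simp
      · intro h; simp only [φ, Function.update_self, h]
        apply Set.projIcc_of_right_le; simp; exact t.2.1

end Functoriality
end HE

namespace HE

/-! ### The sphere model -/

/-- The round sphere of radius one through the origin. -/
def Sph (n : ℕ) : Type := {p : ℝ × (Fin n → ℝ) // p.1 ^ 2 + ∑ i, p.2 i ^ 2 = 2 * p.1}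

instance (n : ℕ) : TopologicalSpace (Sph n) :=
  inferInstanceAs (TopologicalSpace {p : ℝ × (Fin n → ℝ) // p.1 ^ 2 + ∑ i, p.2 i ^ 2 = 2 * p.1})

instance (n : ℕ) : T2Space (Sph n) :=
  inferInstanceAs (T2Space {p : ℝ × (Fin n → ℝ) // p.1 ^ 2 + ∑ i, p.2 i ^ 2 = 2 * p.1})

variable {n : ℕ}

/-- base point -/
def bp : Sph n := ⟨0, by simp⟩

def ht (x : Sph n) : ℝ := x.1.1
def co (i : Fin n) (x : Sph n) : ℝ := x.1.2 i

lemma sph_eq (x : Sph n) : ht x ^ 2 + ∑ i, co i x ^ 2 = 2 * ht x := x.2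

lemma sph_ext {x y : Sph n} (h0 : ht x = ht y) (h : ∀ i, co i x = co i y) : x = y :=
  Subtype.ext (Prod.ext h0 (funext h))

@[simp] lemma ht_bp : ht (bp : Sph n) = 0 := rfl
@[simp] lemma co_bp (i : Fin n) : co i (bp : Sph n) = 0 := rfl

@[fun_prop] lemma continuous_ht : Continuous (ht : Sph n → ℝ) :=
  continuous_fst.comp continuous_subtype_val
@[fun_prop] lemma continuous_co (i : Fin n) : Continuous (co i : Sph n → ℝ) :=
  (continuous_apply i).comp (continuous_snd.comp continuous_subtype_val)

lemma continuous_sph {Z : Type*} [TopologicalSpace Z] {f : Z → Sph n}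
    (h0 : Continuous fun z => ht (f z)) (h : ∀ i, Continuous fun z => co i (f z)) :
    Continuous f :=
  Continuous.subtype_mk (p := fun p : ℝ × (Fin n → ℝ) => p.1 ^ 2 + ∑ i, p.2 i ^ 2 = 2 * p.1)
    (f := fun z => ((f z).1 : ℝ × (Fin n → ℝ))) (h0.prodMk (continuous_pi h)) (fun z => (f z).2)

lemma ht_nonneg (x : Sph n) : 0 ≤ ht x := by
  have := sph_eq x
  have h2 : 0 ≤ ∑ i, co i x ^ 2 := Finset.sum_nonneg fun i _ => sq_nonneg _
  nlinarith [sq_nonneg (ht x)]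

lemma ht_le (x : Sph n) : ht x ≤ 2 := by
  have := sph_eq x
  have h2 : 0 ≤ ∑ i, co i x ^ 2 := Finset.sum_nonneg fun i _ => sq_nonneg _
  nlinarith [sq_nonneg (ht x - 2)]

lemma co_zero_of_sum {x : Sph n} (h : ∑ i, co i x ^ 2 = 0) (i : Fin n) : co i x = 0 := by
  have := (Finset.sum_eq_zero_iff_of_nonneg (fun i _ => sq_nonneg (co i x))).1 h i
    (Finset.mem_univ i)
  simpa using this

lemma eq_bp_of_ht {x : Sph n} (h : ht x = 0) : x = bp := by
  refine sph_ext h fun i => ?_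
  have := sph_eq x
  rw [h] at this
  rw [co_bp]
  apply co_zero_of_sum
  linarith

/-- threshold -/
def kap (n : ℕ) : ℝ := 1 / (2 * (n + 1))

lemma kap_pos : 0 < kap n := by unfold kap; positivity
lemma kap_le : kap n ≤ 1 / 2 := by
  unfold kap
  have : (0 : ℝ) ≤ n := Nat.cast_nonneg n
  rw [div_le_div_iff₀ (by positivity) (by positivity)]
  linarith

lemma exists_kap (x : Sph n) (h : |ht x - 1| ≤ 1 / 2) : ∃ i, kap n ≤ |co i x| := by
  by_contra! hc
  have h1 : ∑ i, co i x ^ 2 ≤ ∑ i : Fin n, (kap n) ^ 2 :=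
    Finset.sum_le_sum fun i _ => by
      rw [← sq_abs]
      exact pow_le_pow_left₀ (abs_nonneg _) (hc i).le 2
  simp only [Finset.sum_const, Finset.card_univ, Fintype.card_fin, nsmul_eq_mul] at h1
  have h2 : (n : ℝ) * kap n ^ 2 ≤ 1 / 4 := by
    have hn : (0 : ℝ) ≤ n := Nat.cast_nonneg n
    have : (n : ℝ) * kap n ≤ 1 / 2 := by
      unfold kap
      rw [mul_one_div, div_le_div_iff₀ (by positivity) (by positivity)]
      linarith
    have h3 := kap_le (n := n)
    have h4 := kap_pos (n := n)
    nlinarith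
  have := sph_eq x
  have h5 := abs_le.1 h
  nlinarith

/-! ### The quotient map from the cube -/

def qD (y : Fin n → I) : ℝ := ∏ i, ((y i : ℝ) * (1 - y i))
def qw (y : Fin n → I) (i : Fin n) : ℝ := 2 * (y i : ℝ) - 1
def qden (y : Fin n → I) : ℝ := qD y ^ 2 + ∑ i, qw y i ^ 2

lemma qD_nonneg (y : Fin n → I) : 0 ≤ qD y :=
  Finset.prod_nonneg fun i _ => mul_nonneg (y i).2.1 (by linarith [(y i).2.2])

lemma qD_eq_zero {y : Fin n → I} : qD y = 0 ↔ ∃ i, y i = 0 ∨ y i = 1 := by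
  unfold qD
  rw [Finset.prod_eq_zero_iff]
  constructor
  · rintro ⟨i, -, h⟩
    refine ⟨i, ?_⟩
    rcases mul_eq_zero.1 h with h | h
    · exact Or.inl (Subtype.ext h)
    · exact Or.inr (Subtype.ext (show (y i : ℝ) = 1 by linarith))
  · rintro ⟨i, h | h⟩ <;> exact ⟨i, Finset.mem_univ i, by simp [h]⟩

lemma qden_pos (y : Fin n → I) : 0 < qden y := by
  unfold qden
  have h2 : 0 ≤ ∑ i, qw y i ^ 2 := Finset.sum_nonneg fun i _ => sq_nonneg _
  by_contra! hc
  have h3 : ∑ i, qw y i ^ 2 = 0 := le_antisymm (by nlinarith [sq_nonneg (qD y)]) h2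
  have h4 : qD y = 0 := by
    have : qD y ^ 2 = 0 := le_antisymm (by linarith) (sq_nonneg _)
    simpa using this
  obtain ⟨i, hi⟩ := qD_eq_zero.1 h4
  have := (Finset.sum_eq_zero_iff_of_nonneg (fun i _ => sq_nonneg (qw y i))).1 h3 i
    (Finset.mem_univ i)
  have h5 : qw y i = 0 := by simpa using this
  unfold qw at h5
  rcases hi with hi | hi <;> rw [hi] at h5 <;> norm_num at h5

def qmap (y : Fin n → I) : Sph n :=
  ⟨(2 / qden y * qD y ^ 2, fun i => 2 / qden y * (qD y * qw y i)), by
    have h := qden_pos y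
    have e : ∑ i, (2 / qden y * (qD y * qw y i)) ^ 2 =
        (2 / qden y * qD y) ^ 2 * ∑ i, qw y i ^ 2 := by
      rw [Finset.mul_sum]
      exact Finset.sum_congr rfl fun i _ => by ring
    change (2 / qden y * qD y ^ 2) ^ 2 + ∑ i, (2 / qden y * (qD y * qw y i)) ^ 2 = _
    rw [e]
    have e2 : ∑ i, qw y i ^ 2 = qden y - qD y ^ 2 := by unfold qden; ring
    rw [e2]
    field_simp
    ring⟩

lemma ht_qmap (y : Fin n → I) : ht (qmap y) = 2 / qden y * qD y ^ 2 := rfl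
lemma co_qmap (y : Fin n → I) (i : Fin n) : co i (qmap y) = 2 / qden y * (qD y * qw y i) := rfl

@[fun_prop] lemma continuous_qmap : Continuous (qmap : (Fin n → I) → Sph n) := by
  have cD : Continuous (qD : (Fin n → I) → ℝ) := by unfold qD; fun_prop
  have cw : ∀ i, Continuous (fun y : Fin n → I => qw y i) := by unfold qw; fun_prop
  have cden : Continuous (qden : (Fin n → I) → ℝ) := by unfold qden; fun_prop
  refine continuous_sph ?_ fun i => ?_
  · simp only [ht_qmap]
    exact (continuous_const.div cden fun y => (qden_pos y).ne').mul (cD.pow 2)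
  · simp only [co_qmap]
    exact (continuous_const.div cden fun y => (qden_pos y).ne').mul (cD.mul (cw i))

lemma qmap_eq_bp {y : Fin n → I} : qmap y = bp ↔ ∃ i, y i = 0 ∨ y i = 1 := by
  rw [← qD_eq_zero]
  constructor
  · intro h
    have := congrArg ht h
    rw [ht_qmap, ht_bp] at this
    have h2 := qden_pos y
    rcases mul_eq_zero.1 this with h | h
    · exact absurd h (by positivity)
    · simpa using h
  · intro h
    apply eq_bp_of_ht
    rw [ht_qmap, h]; simp

lemma co_qmap_nonneg {y : Fin n → I} {i : Fin n} (h : 1 / 2 ≤ (y i : ℝ)) : 0 ≤ co i (qmap y) := by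
  rw [co_qmap]
  have := qden_pos y
  exact mul_nonneg (by positivity) (mul_nonneg (qD_nonneg y) (by unfold qw; linarith))

lemma co_qmap_nonpos {y : Fin n → I} {i : Fin n} (h : (y i : ℝ) ≤ 1 / 2) : co i (qmap y) ≤ 0 := by
  rw [co_qmap]
  have := qden_pos y
  exact mul_nonpos_of_nonneg_of_nonpos (by positivity)
    (mul_nonpos_of_nonneg_of_nonpos (qD_nonneg y) (by unfold qw; linarith))

/-- The loop given by the quotient map. -/
def qloop (n : ℕ) : Ω^ (Fin n) (Sph n) bp :=
  ⟨⟨qmap, continuous_qmap⟩, fun y ⟨i, hi⟩ => qmap_eq_bp.2 ⟨i, hi⟩⟩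

/-! ### Masked maps -/

def mask (F : ℝ) (G : Fin n → I) : Sph n := if 1 ≤ F then qmap G else bp

lemma continuous_mask {Z : Type*} [TopologicalSpace Z] {F : Z → ℝ} {G : Z → Fin n → I}
    (hF : Continuous F) (hG : Continuous G) (h : ∀ z, F z = 1 → ∃ i, G z i = 0 ∨ G z i = 1) :
    Continuous fun z => mask (F z) (G z) := by
  unfold mask
  refine Continuous.if_le (continuous_qmap.comp hG) continuous_const continuous_const hF ?_
  intro z hz
  exact qmap_eq_bp.2 (h z hz.symm)

lemma mask_bp {F : ℝ} {G : Fin n → I} (h : F < 1) : mask F G = bp := if_neg (not_le.2 h)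
lemma mask_bp' {F : ℝ} {G : Fin n → I} (h : ∃ i, G i = 0 ∨ G i = 1) : mask F G = bp := by
  unfold mask
  split_ifs
  · exact qmap_eq_bp.2 h
  · rfl
lemma mask_q {F : ℝ} {G : Fin n → I} (h : 1 ≤ F) : mask F G = qmap G := if_pos h

/-- clamping -/
def cp (v : ℝ) : I := Set.projIcc 0 1 zero_le_one (1 / 2 + v)
@[fun_prop] lemma continuous_cp : Continuous cp := by unfold cp; fun_prop
lemma cp_one {v : ℝ} (h : 1 / 2 ≤ v) : cp v = 1 := Set.projIcc_of_right_le _ (by linarith)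
lemma cp_zero {v : ℝ} (h : v ≤ -(1 / 2)) : cp v = 0 := Set.projIcc_of_le_left _ (by linarith)
lemma cp_ge {v : ℝ} (h : 0 ≤ v) : (1 : ℝ) / 2 ≤ cp v := by
  unfold cp; rw [Set.coe_projIcc]
  exact le_max_of_le_right (le_min (by norm_num) (by linarith))
lemma cp_le {v : ℝ} (h : v ≤ 0) : (cp v : ℝ) ≤ 1 / 2 := by
  unfold cp; rw [Set.coe_projIcc]
  exact max_le (by norm_num) ((min_le_right _ _).trans (by linarith))

def L0 (n : ℕ) : ℝ := 2 / kap n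

/-- collapse coordinates -/
def ecoord (x : Sph n) (i : Fin n) : I := cp (L0 n * co i x)

@[fun_prop] lemma continuous_ecoord : Continuous (ecoord : Sph n → Fin n → I) := by
  refine continuous_pi fun i => ?_
  unfold ecoord; fun_prop

lemma ecoord_one {x : Sph n} {i : Fin n} (h : kap n / 2 ≤ co i x) : ecoord x i = 1 := by
  refine cp_one ?_
  have := kap_pos (n := n)
  unfold L0
  rw [div_mul_eq_mul_div, le_div_iff₀ this]
  linarith
lemma ecoord_zero {x : Sph n} {i : Fin n} (h : co i x ≤ -(kap n / 2)) : ecoord x i = 0 := by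
  refine cp_zero ?_
  have := kap_pos (n := n)
  unfold L0
  rw [div_mul_eq_mul_div, div_le_iff₀ this]
  linarith

def rho (x : Sph n) : Sph n := mask (ht x) (ecoord x)

lemma continuous_rho : Continuous (rho : Sph n → Sph n) := by
  refine continuous_mask continuous_ht continuous_ecoord fun x hx => ?_
  obtain ⟨i, hi⟩ := exists_kap x (by rw [hx]; norm_num)
  have := kap_pos (n := n)
  refine ⟨i, ?_⟩
  rcases le_abs.1 hi with h | h
  · exact Or.inr (ecoord_one (by linarith))
  · exact Or.inl (ecoord_zero (by linarith))

lemma rho_bp : rho (bp : Sph n) = bp := mask_bp (by simp)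

lemma co_mul_rho (x : Sph n) (i : Fin n) : 0 ≤ co i x * co i (rho x) := by
  unfold rho mask
  have hL : 0 < L0 n := div_pos two_pos kap_pos
  split_ifs
  · rcases le_total 0 (co i x) with h | h
    · exact mul_nonneg h (co_qmap_nonneg (cp_ge (mul_nonneg hL.le h)))
    · exact mul_nonneg_of_nonpos_of_nonpos h
        (co_qmap_nonpos (cp_le (mul_nonpos_of_nonneg_of_nonpos hL.le h)))
  · simp

/-- the inner product relative to the centre -/
def ipr (x y : Sph n) : ℝ := (ht x - 1) * (ht y - 1) + ∑ i, co i x * co i y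

lemma ipr_rho (x : Sph n) : -1 < ipr x (rho x) := by
  unfold ipr
  have h1 : 0 ≤ ∑ i, co i x * co i (rho x) := Finset.sum_nonneg fun i _ => co_mul_rho x i
  have hx := ht_nonneg x
  have hx2 := ht_le x
  have hr := ht_nonneg (rho x)
  have hr2 := ht_le (rho x)
  rcases lt_or_ge (ht x) 1 with h | h
  · have : rho x = bp := mask_bp h
    rw [this] at h1 ⊢
    simp only [ht_bp]
    linarith
  · rcases eq_or_lt_of_le hx2 with h2 | h2
    · have e : ∑ i, co i x ^ 2 = 0 := by
        have := sph_eq x; rw [h2] at this; linarith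
      have e2 : ecoord x = fun _ => cp 0 := by
        funext i; unfold ecoord; rw [co_zero_of_sum e i, mul_zero]
      have e3 : (cp 0 : ℝ) = 1 / 2 := le_antisymm (cp_le le_rfl) (cp_ge le_rfl)
      have : ht (rho x) = 2 := by
        unfold rho
        rw [mask_q h, e2, ht_qmap]
        have hw : ∑ i, qw (fun _ : Fin n => cp 0) i ^ 2 = 0 :=
          Finset.sum_eq_zero fun i _ => by unfold qw; rw [e3]; norm_num
        have hp := qden_pos (fun _ : Fin n => cp 0)
        unfold qden at hp ⊢
        rw [hw, add_zero] at hp ⊢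
        exact div_mul_cancel₀ 2 hp.ne'
      rw [this, h2]; linarith
    · nlinarith

/-- Ambient normalized line. -/
def slu (t : I) (x y : Sph n) : ℝ × (Fin n → ℝ) :=
  ((1 - (t : ℝ)) * (ht x - 1) + t * (ht y - 1), fun i => (1 - (t : ℝ)) * co i x + t * co i y)
def sln (t : I) (x y : Sph n) : ℝ := (slu t x y).1 ^ 2 + ∑ i, (slu t x y).2 i ^ 2

lemma sln_eq (t : I) (x y : Sph n) :
    sln t x y = (1 - 2 * (t : ℝ)) ^ 2 + 2 * t * (1 - t) * (1 + ipr x y) := by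
  unfold sln slu ipr
  have hx : ∑ i, co i x ^ 2 = 1 - (ht x - 1) ^ 2 := by have := sph_eq x; linarith
  have hy : ∑ i, co i y ^ 2 = 1 - (ht y - 1) ^ 2 := by have := sph_eq y; linarith
  have : ∑ i, ((1 - (t : ℝ)) * co i x + t * co i y) ^ 2 = (1 - (t : ℝ)) ^ 2 * ∑ i, co i x ^ 2
      + t ^ 2 * ∑ i, co i y ^ 2 + 2 * (1 - t) * t * ∑ i, co i x * co i y := by
    simp only [Finset.mul_sum, ← Finset.sum_add_distrib]
    exact Finset.sum_congr rfl fun i _ => by ring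
  simp only [this, hx, hy]
  ring

lemma sln_pos (t : I) {x y : Sph n} (h : -1 < ipr x y) : 0 < sln t x y := by
  rw [sln_eq]
  have h0 := t.2.1
  have h1 := t.2.2
  by_cases ht : (t : ℝ) = 1 / 2
  · rw [ht]; nlinarith
  · have : 0 < (1 - 2 * (t : ℝ)) ^ 2 := by
      apply sq_pos_of_ne_zero
      intro h; apply ht; linarith
    have h2 : 0 ≤ 2 * (t : ℝ) * (1 - t) * (1 + ipr x y) :=
      mul_nonneg (mul_nonneg (by linarith) (by linarith)) (by linarith)
    linarith

/-- Normalized line between two non-antipodal points. -/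
def slerp (t : I) (x y : Sph n) (h : -1 < ipr x y) : Sph n :=
  ⟨(1 + (slu t x y).1 / √(sln t x y), fun i => (slu t x y).2 i / √(sln t x y)), by
    have hp := sln_pos t h
    have hs : √(sln t x y) ^ 2 = sln t x y := Real.sq_sqrt hp.le
    have hs0 : 0 < √(sln t x y) := Real.sqrt_pos.2 hp
    simp only [div_pow, hs, ← Finset.sum_div]
    have e : ∑ i, (slu t x y).2 i ^ 2 = sln t x y - (slu t x y).1 ^ 2 := by unfold sln; ring
    rw [e]
    have : (1 + (slu t x y).1 / √(sln t x y)) ^ 2 =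
        1 + 2 * ((slu t x y).1 / √(sln t x y)) + (slu t x y).1 ^ 2 / sln t x y := by
      rw [← hs]; simp only [hs]; rw [add_sq, div_pow, hs]; ring
    rw [this, sub_div, div_self hp.ne']
    ring⟩

/-- the homotopy from the identity to `rho` -/
def rhoH (p : I × Sph n) : Sph n := slerp p.1 p.2 (rho p.2) (ipr_rho p.2)

lemma continuous_rhoH : Continuous (rhoH : I × Sph n → Sph n) := by
  have cr := continuous_rho (n := n)
  have c1 : Continuous fun p : I × Sph n => (slu p.1 p.2 (rho p.2)).1 := by
    unfold slu; fun_prop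
  have c2 : ∀ i, Continuous fun p : I × Sph n => (slu p.1 p.2 (rho p.2)).2 i := by
    intro i; unfold slu; fun_prop
  have c3 : Continuous fun p : I × Sph n => √(sln p.1 p.2 (rho p.2)) := by
    refine Real.continuous_sqrt.comp ?_
    unfold sln
    exact (c1.pow 2).add (continuous_finsetSum _ fun i _ => (c2 i).pow 2)
  have hne : ∀ p : I × Sph n, √(sln p.1 p.2 (rho p.2)) ≠ 0 := fun p =>
    (Real.sqrt_pos.2 (sln_pos p.1 (ipr_rho p.2))).ne'
  refine continuous_sph ?_ fun i => ?_
  · exact continuous_const.add (c1.div c3 hne)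
  · exact (c2 i).div c3 hne

lemma rhoH_zero (x : Sph n) : rhoH (0, x) = x := by
  have : sln 0 x (rho x) = 1 := by rw [sln_eq]; simp
  refine sph_ext ?_ fun i => ?_
  · change 1 + (slu 0 x (rho x)).1 / √(sln 0 x (rho x)) = _
    rw [this]; simp [slu]
  · change (slu 0 x (rho x)).2 i / √(sln 0 x (rho x)) = _
    rw [this]; simp [slu]

lemma rhoH_one (x : Sph n) : rhoH (1, x) = rho x := by
  have : sln 1 x (rho x) = 1 := by rw [sln_eq]; norm_num
  refine sph_ext ?_ fun i => ?_
  · change 1 + (slu 1 x (rho x)).1 / √(sln 1 x (rho x)) = _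
    rw [this]; simp [slu]
  · change (slu 1 x (rho x)).2 i / √(sln 1 x (rho x)) = _
    rw [this]; simp [slu]

lemma rhoH_bp (t : I) : rhoH (t, (bp : Sph n)) = bp := by
  have : sln t (bp : Sph n) (rho bp) = 1 := by
    rw [sln_eq, rho_bp]; simp [ipr]; ring
  refine sph_ext ?_ fun i => ?_
  · change 1 + (slu t bp (rho bp)).1 / √(sln t (bp : Sph n) (rho bp)) = _
    rw [this]; simp [slu, rho_bp]; ring
  · change (slu t bp (rho bp)).2 i / √(sln t (bp : Sph n) (rho bp)) = _
    rw [this]; simp [slu, rho_bp]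

end HE

namespace HE

variable {n : ℕ}

/-! ### Stair functions -/

def St (n : ℕ) (v : ℝ) : ℝ := v + (min 1 (2 * n * Int.fract v) - Int.fract v)

lemma St_eq (v : ℝ) : St n v = ⌊v⌋ + min 1 (2 * n * Int.fract v) := by
  unfold St
  have := Int.floor_add_fract v
  linarith

lemma St_continuous (hn : 0 < n) : Continuous (St n) := by
  have hn' : (1 : ℝ) ≤ n := by exact_mod_cast hn
  unfold St
  refine continuous_id.add ?_
  refine ContinuousOn.comp_fract'' (f := fun r : ℝ => min 1 (2 * n * r) - r) ?_ ?_
  · exact Continuous.continuousOn (by fun_prop)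
  · have e : min (1 : ℝ) (2 * n * 1) = 1 := min_eq_left (by linarith)
    simp only [e]; simp

lemma St_int (k : ℤ) : St n (k : ℝ) = k := by
  rw [St_eq]; simp

lemma St_top (hn : 0 < n) {k : ℤ} {v : ℝ} (h1 : k + 1 / (2 * (n : ℝ)) ≤ v) (h2 : v ≤ k + 1) :
    St n v = k + 1 := by
  have hn' : (0 : ℝ) < n := by exact_mod_cast hn
  rcases eq_or_lt_of_le h2 with h | h
  · have := St_int (n := n) (k + 1)
    push_cast at this
    rw [h, this]
  · have hpos : (0 : ℝ) < 1 / (2 * (n : ℝ)) := by positivity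
    have hf : ⌊v⌋ = k := Int.floor_eq_iff.2 ⟨by linarith, h⟩
    rw [St_eq, hf, min_eq_left]
    have : Int.fract v = v - k := by rw [← hf]; rfl
    rw [this]
    have : 1 / (2 * (n : ℝ)) ≤ v - k := by linarith
    rw [div_le_iff₀ (by positivity)] at this
    linarith

lemma St_near (v : ℝ) : |St n v - v| ≤ 1 := by
  have h0 := Int.fract_nonneg v
  have h1 := (Int.fract_lt_one v).le
  have h2 : (0 : ℝ) ≤ min 1 (2 * n * Int.fract v) := le_min (by norm_num) (by positivity)
  have h3 : min (1 : ℝ) (2 * n * Int.fract v) ≤ 1 := min_le_left _ _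
  unfold St
  rw [abs_le]
  constructor <;> linarith

/-- The stair reparametrization of type `i` with grid `1/M`. -/
def Th (M : ℕ) (i : Fin n) (s : I) : I :=
  Set.projIcc 0 1 zero_le_one ((n * St n ((M * (s : ℝ) - i) / n) + i) / M)

lemma Th_continuous (hn : 0 < n) (M : ℕ) (i : Fin n) : Continuous (Th M i) := by
  have := St_continuous hn
  unfold Th
  fun_prop

lemma projIcc_near (v : ℝ) (s : I) : |(Set.projIcc 0 1 zero_le_one v : I) - (s : ℝ)| ≤ |v - s| := by
  have h0 := s.2.1
  have h1 := s.2.2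
  rw [Set.coe_projIcc]
  rcases le_total v 0 with h | h
  · rw [max_eq_left ((min_le_right _ _).trans h), abs_le]
    rw [abs_of_nonpos (by linarith)]
    constructor <;> linarith
  · rcases le_total v 1 with h' | h'
    · rw [min_eq_right h', max_eq_right h]
    · rw [min_eq_left h', abs_of_nonneg (by simpa using h1), abs_of_nonneg (by linarith)]
      simp; linarith

lemma Th_near (hn : 0 < n) {M : ℕ} (hM : 0 < M) (i : Fin n) (s : I) :
    |(Th M i s : ℝ) - s| ≤ n / M := by
  have hn' : (0 : ℝ) < n := by exact_mod_cast hn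
  have hM' : (0 : ℝ) < M := by exact_mod_cast hM
  refine (projIcc_near _ s).trans ?_
  have h := St_near (n := n) ((M * (s : ℝ) - i) / n)
  have : (n * St n ((M * (s : ℝ) - i) / n) + i) / M - s =
      n / M * (St n ((M * (s : ℝ) - i) / n) - (M * (s : ℝ) - i) / n) := by
    field_simp; ring
  rw [this, abs_mul, abs_of_pos (by positivity)]
  have : (0 : ℝ) < n / M := by positivity
  nlinarith

/-- `s` lies on a wall of type `i`. -/
def wall (M : ℕ) (i : Fin n) (s : I) : Prop :=
  ∃ k : ℤ, (n * k + (i : ℕ) : ℝ) < M * s ∧ (M * s : ℝ) < n * k + (i : ℕ) + 1 / 2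

lemma wall_unique {M : ℕ} {i j : Fin n} {s : I} (hi : wall M i s) (hj : wall M j s) : i = j := by
  obtain ⟨k, h1, h2⟩ := hi
  obtain ⟨l, h3, h4⟩ := hj
  have e : (n * k + (i : ℕ) : ℤ) = n * l + (j : ℕ) := by
    have a1 : ((n * k + (i : ℕ) : ℤ) : ℝ) < ((n * l + (j : ℕ) + 1 : ℤ) : ℝ) := by
      push_cast; linarith
    have a2 : ((n * l + (j : ℕ) : ℤ) : ℝ) < ((n * k + (i : ℕ) + 1 : ℤ) : ℝ) := by
      push_cast; linarith
    have := Int.cast_lt.1 a1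
    have := Int.cast_lt.1 a2
    omega
  have hi' := i.2
  have hj' := j.2
  have e2 := congrArg (· % (n : ℤ)) e
  simp only [Int.mul_add_emod_self_left] at e2
  rw [Int.emod_eq_of_lt (by omega) (by omega), Int.emod_eq_of_lt (by omega) (by omega)] at e2
  exact Fin.ext (by omega)

/-- Grid values. -/
def grd (n M : ℕ) (i : Fin n) : Set I :=
  Set.range fun k : ℤ => Set.projIcc (0 : ℝ) 1 zero_le_one ((n * k + (i : ℕ)) / M)

lemma grd_finite {M : ℕ} (hM : 0 < M) (i : Fin n) : (grd n M i).Finite := by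
  have hn : 0 < n := i.pos
  have hM' : (0 : ℝ) < M := by exact_mod_cast hM
  refine ((Finset.Icc (-1 : ℤ) (M + 1)).image
    fun k : ℤ => Set.projIcc (0 : ℝ) 1 zero_le_one ((n * k + (i : ℕ)) / M)).finite_toSet.subset ?_
  rintro _ ⟨k, rfl⟩
  simp only [Finset.coe_image, Set.mem_image, Finset.coe_Icc, Set.mem_Icc]
  have hin : ((i : ℕ) : ℝ) ≤ n := by exact_mod_cast i.2.le
  have hi0 : (0 : ℝ) ≤ ((i : ℕ) : ℝ) := Nat.cast_nonneg _
  have hn1 : (1 : ℝ) ≤ n := by exact_mod_cast hn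
  by_cases h1 : k < -1
  · refine ⟨-1, by omega, ?_⟩
    have hk : (k : ℝ) ≤ -1 := by exact_mod_cast h1.le
    rw [Set.projIcc_of_le_left, Set.projIcc_of_le_left]
    · exact div_nonpos_of_nonpos_of_nonneg (by nlinarith) hM'.le
    · exact div_nonpos_of_nonpos_of_nonneg (by push_cast; linarith) hM'.le
  · by_cases h2 : M + 1 < k
    · refine ⟨M + 1, by omega, ?_⟩
      have hk : (M + 1 : ℝ) ≤ k := by exact_mod_cast h2.le
      rw [Set.projIcc_of_right_le, Set.projIcc_of_right_le]
      · rw [le_div_iff₀ hM']; nlinarith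
      · rw [le_div_iff₀ hM']; push_cast; nlinarith
    · exact ⟨k, by omega, rfl⟩

lemma Th_mem_grd {M : ℕ} {i : Fin n} {s : I} (h : ¬ wall M i s) : Th M i s ∈ grd n M i := by
  have hn : 0 < n := i.pos
  have hn' : (0 : ℝ) < n := by exact_mod_cast hn
  set v : ℝ := (M * (s : ℝ) - (i : ℕ)) / n with hv
  have hu : (M * (s : ℝ)) = n * v + (i : ℕ) := by rw [hv]; field_simp; ring
  have h1 := Int.floor_le v
  have h2 := Int.lt_floor_add_one v
  rcases eq_or_lt_of_le h1 with h3 | h3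
  · refine ⟨⌊v⌋, ?_⟩
    have := St_int (n := n) ⌊v⌋
    unfold Th
    rw [← hv]
    rw [h3] at this
    rw [this]
    simp only [h3]
  · refine ⟨⌊v⌋ + 1, ?_⟩
    have h4 : ⌊v⌋ + 1 / (2 * (n : ℝ)) ≤ v := by
      by_contra! h4
      refine h ⟨⌊v⌋, ?_, ?_⟩
      · rw [hu]; nlinarith
      · rw [hu]
        have : (n : ℝ) * v < n * (⌊v⌋ + 1 / (2 * (n : ℝ))) := by nlinarith
        have e : n * ((⌊v⌋ : ℝ) + 1 / (2 * (n : ℝ))) = n * ⌊v⌋ + 1 / 2 := by field_simp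
        linarith
    unfold Th
    rw [← hv, St_top hn h4 h2.le]
    push_cast
    rfl

/-- `Th` of type `i` is constant on cells of a different type. -/
lemma Th_cell {M : ℕ} {i : Fin n} {m : ℤ} (hm : m % n ≠ (i : ℕ)) {s s' : I}
    (h1 : (m : ℝ) ≤ M * s) (h2 : (M * s : ℝ) ≤ m + 1) (h1' : (m : ℝ) ≤ M * s')
    (h2' : (M * s' : ℝ) ≤ m + 1) : Th M i s = Th M i s' := by
  have hn : 0 < n := i.pos
  have hn' : (0 : ℝ) < n := by exact_mod_cast hn
  have hi := i.2
  obtain ⟨k, hk1, hk2⟩ : ∃ k : ℤ, n * k + (i : ℕ) + 1 ≤ m ∧ m + 1 ≤ n * k + n + (i : ℕ) := by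
    refine ⟨(m - (i : ℕ)) / n, ?_, ?_⟩
    · have e := Int.mul_ediv_add_emod (m - (i : ℕ)) n
      have : 0 ≤ (m - (i : ℕ)) % n := Int.emod_nonneg _ (by omega)
      have : (m - (i : ℕ)) % n ≠ 0 := by
        intro h0
        apply hm
        rw [h0] at e
        have : m = (i : ℕ) + n * ((m - (i : ℕ)) / n) := by linarith
        rw [this, Int.add_mul_emod_self_left, Int.emod_eq_of_lt (by omega) (by omega)]
      omega
    · have e := Int.mul_ediv_add_emod (m - (i : ℕ)) n
      have := Int.emod_lt_of_pos (m - (i : ℕ)) (b := n) (by omega)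
      omega
  have key : ∀ s : I, (m : ℝ) ≤ M * s → (M * s : ℝ) ≤ m + 1 →
      St n ((M * (s : ℝ) - (i : ℕ)) / n) = k + 1 := by
    intro s h1 h2
    have hk1' : (n * k + (i : ℕ) + 1 : ℝ) ≤ m := by exact_mod_cast hk1
    have hk2' : (m + 1 : ℝ) ≤ n * k + n + (i : ℕ) := by exact_mod_cast hk2
    apply St_top hn
    · rw [le_div_iff₀ hn', add_mul]
      have : 1 / (2 * (n : ℝ)) * n = 1 / 2 := by field_simp
      rw [this]; linarith
    · rw [div_le_iff₀ hn']; linarith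
  unfold Th
  have hkey := key s' h1' h2'
  rw [key s h1 h2, hkey]

/-- `M` is a fine enough grid for `f`. -/
def Fine (f : (Fin n → I) → Sph n) (M : ℕ) : Prop :=
  ∀ x y : Fin n → I, (∀ a, |(x a : ℝ) - y a| ≤ (n + 1) / M) →
    |ht (f x) - ht (f y)| ≤ kap n / 2 ∧ ∀ i, |co i (f x) - co i (f y)| ≤ kap n / 2

lemma exists_fine {f : (Fin n → I) → Sph n} (hf : Continuous f) :
    ∃ M1 : ℕ, 0 < M1 ∧ ∀ M ≥ M1, Fine f M := by
  have hk := kap_pos (n := n)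
  have hu : UniformContinuous fun x => ((f x).1 : ℝ × (Fin n → ℝ)) :=
    CompactSpace.uniformContinuous_of_continuous (continuous_subtype_val.comp hf)
  obtain ⟨δ, hδ, h⟩ := Metric.uniformContinuous_iff.1 hu (kap n / 2) (by linarith)
  obtain ⟨M1, hM1⟩ := exists_nat_gt ((n + 1) / δ)
  have hM1' : (0 : ℝ) < M1 := lt_of_le_of_lt (by positivity) hM1
  refine ⟨M1, by exact_mod_cast hM1', fun M hM x y hxy => ?_⟩
  have hMM : (M1 : ℝ) ≤ M := by exact_mod_cast hM
  have hd : dist x y < δ := by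
    rw [dist_pi_lt_iff hδ]
    intro a
    refine lt_of_le_of_lt (hxy a) ?_
    rw [div_lt_iff₀ (by linarith)]
    rw [div_lt_iff₀ hδ] at hM1
    nlinarith
  have h3 := (h hd).le
  rw [Prod.dist_eq, max_le_iff] at h3
  refine ⟨h3.1, fun i => ?_⟩
  exact (dist_le_pi_dist _ _ i).trans h3.2

/-- convex combination in `I` -/
def icomb (t a b : I) : I := ⟨(1 - t) * a + t * b, by
  have h1 := t.2.1; have h2 := t.2.2; have h3 := a.2.1; have h4 := a.2.2
  have h5 := b.2.1; have h6 := b.2.2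
  constructor
  · exact add_nonneg (mul_nonneg (by linarith) h3) (mul_nonneg h1 h5)
  · nlinarith⟩

lemma icomb_zero (a b : I) : icomb 0 a b = a := Subtype.ext (by simp [icomb])
lemma icomb_one (a b : I) : icomb 1 a b = b := Subtype.ext (by simp [icomb])
lemma icomb_self (t a : I) : icomb t a a = a := Subtype.ext (by simp [icomb]; ring)
@[fun_prop] lemma continuous_icomb {Z : Type*} [TopologicalSpace Z] {t a b : Z → I}
    (ht : Continuous t) (ha : Continuous a) (hb : Continuous b) :
    Continuous fun z => icomb (t z) (a z) (b z) :=
  Continuous.subtype_mk (by fun_prop) _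

/-- Data of a normal form. -/
structure NF (f : (Fin n → I) → Sph n) (M : ℕ) where
  Γ : (Fin n → I) → Fin n → I
  cont : Continuous Γ
  K : I × (Fin n → I) → Sph n
  Kcont : Continuous K
  K0 : ∀ x, K (0, x) = f x
  K1 : ∀ x, K (1, x) = mask (ht (f x)) (Γ x)
  Kb : ∀ t x, f x = bp → K (t, x) = bp
  ht_lt : ∀ x, mask (ht (f x)) (Γ x) ≠ bp → 3 / 2 < ht (f x)
  val : ∀ x i, (Γ x i = 0 ∨ Γ x i = 1) ∨ ∃ a, wall M i (x a)
  dep : ∀ x y i, (∀ a, Th M i (x a) = Th M i (y a)) → Γ x i = Γ y i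

lemma exists_tau (F : Set ℝ) (hF : F.Finite) {κ : ℝ} (hκ : 0 < κ) :
    ∃ τ L : ℝ, 0 < τ ∧ τ < κ ∧ 0 < L ∧ 1 / (2 * κ) ≤ L ∧
      ∀ v ∈ F, v ≠ τ ∧ 1 / 2 ≤ L * |v - τ| := by
  obtain ⟨τ, hτ, hτF⟩ := ((Set.Ioo_infinite hκ).sdiff hF).nonempty
  have : ∃ ε : ℝ, 0 < ε ∧ ∀ v ∈ F, ε ≤ |v - τ| := by
    by_cases hne : F.Nonempty
    · obtain ⟨w, hw, hmin⟩ := Set.exists_min_image F (fun v => |v - τ|) hF hne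
      refine ⟨|w - τ|, abs_pos.2 (sub_ne_zero.2 fun h => hτF (h ▸ hw)), hmin⟩
    · rw [Set.not_nonempty_iff_eq_empty] at hne
      exact ⟨1, one_pos, by simp [hne]⟩
  obtain ⟨ε, hε, h⟩ := this
  refine ⟨τ, 1 / (2 * κ) + 1 / (2 * ε), hτ.1, hτ.2, by positivity, ?_, fun v hv => ⟨?_, ?_⟩⟩
  · have : 0 < 1 / (2 * ε) := by positivity
    linarith
  · rintro rfl; exact hτF hv
  · have h1 := h v hv
    have h2 : 0 < 1 / (2 * κ) := by positivity
    calc (1 : ℝ) / 2 = 1 / (2 * ε) * ε := by field_simp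
      _ ≤ _ := by
        apply mul_le_mul _ h1 hε.le (by positivity)
        linarith

theorem exists_NF (hn : 0 < n) {f : (Fin n → I) → Sph n} (hf : Continuous f) {M : ℕ} (hM : 0 < M)
    (hfine : Fine f M) : Nonempty (NF f M) := by
  have hk := kap_pos (n := n)
  have hM' : (0 : ℝ) < M := by exact_mod_cast hM
  set F : Set ℝ := ⋃ i : Fin n, Set.image (fun x => co i (f x)) (Set.pi Set.univ fun _ => grd n M i) with hF
  have hFf : F.Finite := Set.finite_iUnion fun i =>
    (Set.Finite.pi' fun _ => grd_finite hM i).image _ |>.subset (by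
      apply Set.image_mono
      intro x hx a
      exact hx a (Set.mem_univ a))
  obtain ⟨τ, L, hτ0, hτ1, hL0, hL, hv⟩ := exists_tau F hFf (κ := kap n / 4) (by linarith)
  let Γ : (Fin n → I) → Fin n → I := fun x i => cp (L * (co i (f fun a => Th M i (x a)) - τ))
  have cΓ : Continuous Γ := by
    refine continuous_pi fun i => ?_
    have := Th_continuous hn M i
    fun_prop
  have hLk : 1 / 2 ≤ L * (kap n / 4) := by
    rw [div_le_iff₀ (by positivity)] at hL
    linarith
  have near : ∀ x i, |co i (f fun a => Th M i (x a)) - co i (f x)| ≤ kap n / 2 := by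
    intro x i
    refine (hfine _ _ fun a => ?_).2 i
    refine (Th_near hn hM i (x a)).trans ?_
    gcongr
    linarith
  have big : ∀ x i, kap n ≤ co i (f x) → Γ x i = 1 := by
    intro x i h
    have := (abs_le.1 (near x i)).1
    apply cp_one
    refine hLk.trans ?_
    apply mul_le_mul_of_nonneg_left _ hL0.le
    linarith
  have small : ∀ x i, co i (f x) ≤ - kap n → Γ x i = 0 := by
    intro x i h
    have := (abs_le.1 (near x i)).2
    apply cp_zero
    have : L * (co i (f fun a => Th M i (x a)) - τ) ≤ L * -(kap n / 4) := by
      apply mul_le_mul_of_nonneg_left _ hL0.le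
      linarith
    linarith
  have hex : ∀ x, |ht (f x) - 1| ≤ 1 / 2 →
      ∃ i, (ecoord (f x) i = 0 ∧ Γ x i = 0) ∨ (ecoord (f x) i = 1 ∧ Γ x i = 1) := by
    intro x hx
    obtain ⟨i, hi⟩ := exists_kap (f x) hx
    refine ⟨i, ?_⟩
    rcases le_abs.1 hi with h | h
    · exact Or.inr ⟨ecoord_one (by linarith), big x i h⟩
    · exact Or.inl ⟨ecoord_zero (by linarith), small x i (by linarith)⟩
  let K2 : I × (Fin n → I) → Sph n := fun p =>
    mask (ht (f p.2)) (fun i => icomb p.1 (ecoord (f p.2) i) (Γ p.2 i))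
  have cK2 : Continuous K2 := by
    refine continuous_mask (by fun_prop) (by fun_prop) ?_
    rintro ⟨t, x⟩ h
    obtain ⟨i, h1⟩ := hex x (by simp only at h; rw [h]; norm_num)
    refine ⟨i, ?_⟩
    rcases h1 with ⟨h1, h2⟩ | ⟨h1, h2⟩ <;> simp only [h1, h2, icomb_self] <;> simp
  let h1 : I × (Fin n → I) → Sph n := fun p => rhoH (p.1, f p.2)
  let u1 : I → I := fun t => Set.projIcc 0 1 zero_le_one (2 * (t : ℝ))
  let u2 : I → I := fun t => Set.projIcc 0 1 zero_le_one (2 * (t : ℝ) - 1)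
  let K : I × (Fin n → I) → Sph n := fun p =>
    if (p.1 : ℝ) ≤ 1 / 2 then rhoH (u1 p.1, f p.2) else K2 (u2 p.1, p.2)
  refine ⟨⟨Γ, cΓ, K, ?_, ?_, ?_, ?_, ?_, ?_, ?_⟩⟩
  · refine Continuous.if_le ?_ ?_ (by fun_prop) continuous_const ?_
    · refine continuous_rhoH.comp ?_
      fun_prop
    · exact cK2.comp (by fun_prop)
    · intro p hp
      have e1 : u1 p.1 = 1 := Set.projIcc_of_right_le _ (by linarith)
      have e2 : u2 p.1 = 0 := Set.projIcc_of_le_left _ (by linarith)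
      rw [e1, e2, rhoH_one]
      simp only [K2, icomb_zero]
      rfl
  · intro x
    have e1 : u1 0 = 0 := Set.projIcc_of_le_left _ (by simp)
    simp [K, e1, rhoH_zero]
  · intro x
    have e1 : u2 1 = 1 := Set.projIcc_of_right_le _ (by norm_num)
    simp only [K]
    rw [if_neg (by norm_num), e1]
    simp only [K2, icomb_one]
  · intro t x hx
    simp only [K]
    split_ifs
    · rw [hx, rhoH_bp]
    · exact mask_bp (by simp [hx])
  · intro x hx
    by_contra! hc
    apply hx
    rcases lt_or_ge (ht (f x)) 1 with h | h
    · exact mask_bp h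
    · obtain ⟨i, h1⟩ := hex x (by rw [abs_le]; constructor <;> linarith)
      exact mask_bp' ⟨i, by tauto⟩
  · intro x i
    by_cases h : ∃ a, wall M i (x a)
    · exact Or.inr h
    · left
      push Not at h
      have hmem : co i (f fun a => Th M i (x a)) ∈ F := by
        rw [hF]
        refine Set.mem_iUnion.2 ⟨i, _, ?_, rfl⟩
        intro a _
        exact Th_mem_grd (h a)
      have h2 := (hv _ hmem).2
      rcases le_total 0 (co i (f fun a => Th M i (x a)) - τ) with h3 | h3
      · rw [abs_of_nonneg h3] at h2
        exact Or.inr (cp_one h2)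
      · rw [abs_of_nonpos h3] at h2
        exact Or.inl (cp_zero (by linarith))
  · intro x y i h
    simp only [Γ]
    congr 5
    funext a
    exact h a

/-- For a nontrivial value every coordinate lies on a wall, and types give a bijection. -/
lemma NF.perm {f : (Fin n → I) → Sph n} {M : ℕ} (N : NF f M) {x : Fin n → I}
    (h : mask (ht (f x)) (N.Γ x) ≠ bp) : ∃ π : Equiv.Perm (Fin n), ∀ i, wall M i (x (π i)) := by
  have h1 : ∀ i, ∃ a, wall M i (x a) := fun i => by
    rcases N.val x i with h2 | h2
    · exact absurd (mask_bp' ⟨i, h2⟩) h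
    · exact h2
  choose π hπ using h1
  have hinj : Function.Injective π := fun i j hij => wall_unique (hπ i) (by rw [hij]; exact hπ j)
  exact ⟨Equiv.ofBijective π (Finite.injective_iff_bijective.1 hinj), hπ⟩

end HE

namespace HE

variable {n : ℕ}

/-! ### Signed permutations acting on the sphere -/

/-- permutation of the coordinates of the sphere -/
def Tperm (π : Equiv.Perm (Fin n)) : C(Sph n, Sph n) where
  toFun x := ⟨(ht x, fun i => co (π i) x), by
    have := sph_eq x
    rw [← this]
    congr 1
    exact Equiv.sum_comp π (fun i => co i x ^ 2)⟩
  continuous_toFun := continuous_sph continuous_ht fun i => continuous_co (π i)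

/-- sign changes of the coordinates of the sphere -/
def Tsgn (A : Finset (Fin n)) : C(Sph n, Sph n) where
  toFun x := ⟨(ht x, fun i => if i ∈ A then - co i x else co i x), by
    have := sph_eq x
    rw [← this]
    congr 1
    refine Finset.sum_congr rfl fun i _ => ?_
    dsimp only
    split_ifs <;> ring⟩
  continuous_toFun := continuous_sph continuous_ht fun i => by
    change Continuous fun x => if i ∈ A then - co i x else co i x
    split_ifs <;> fun_prop

/-- reflections in the plane of coordinates `a`, `b` -/
def rotv (θ : ℝ) (a b : Fin n) (x : Sph n) (i : Fin n) : ℝ :=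
  if i = a then Real.cos θ * co a x + Real.sin θ * co b x
  else if i = b then Real.sin θ * co a x - Real.cos θ * co b x else co i x

lemma rotv_sum (θ : ℝ) {a b : Fin n} (hab : a ≠ b) (x : Sph n) :
    ∑ i, rotv θ a b x i ^ 2 = ∑ i, co i x ^ 2 := by
  rw [← sub_eq_zero, ← Finset.sum_sub_distrib]
  rw [Finset.sum_eq_add a b hab]
  · simp only [rotv, if_true, if_neg hab.symm]
    have := Real.sin_sq_add_cos_sq θ
    linear_combination (co a x ^ 2 + co b x ^ 2) * this
  · intro c _ hc
    simp [rotv, hc.1, hc.2]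
  · simp
  · simp

def Trot (θ : ℝ) {a b : Fin n} (hab : a ≠ b) (x : Sph n) : Sph n :=
  ⟨(ht x, rotv θ a b x), by
    change ht x ^ 2 + ∑ i, rotv θ a b x i ^ 2 = _
    rw [rotv_sum θ hab]; exact sph_eq x⟩

lemma Tperm_bp (π : Equiv.Perm (Fin n)) : Tperm π bp = bp := eq_bp_of_ht rfl
lemma Tsgn_bp (A : Finset (Fin n)) : Tsgn A bp = bp := eq_bp_of_ht rfl

section
variable [Nonempty (Fin n)]

/-- good self maps: those preserving the powers of `q` -/
def Good (T : C(Sph n, Sph n)) : Prop :=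
  ∃ h : T bp = bp, pimap (N := Fin n) T h (cl (qloop n)) ∈ Subgroup.zpowers (cl (qloop n))

lemma Good.comp {T U : C(Sph n, Sph n)} (hT : Good T) (hU : Good U) : Good (T.comp U) := by
  obtain ⟨h1, h2⟩ := hT
  obtain ⟨h3, k, hk⟩ := hU
  refine ⟨by simp [h1, h3], ?_⟩
  have : pimap (N := Fin n) (T.comp U) (by simp [h1, h3]) (cl (qloop n)) =
    pimap T h1 (pimap U h3 (cl (qloop n))) := rfl
  rw [this, ← hk]
  simp only [map_zpow]
  exact Subgroup.zpow_mem _ h2 k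

lemma qw_symm (y : Fin n → I) (i j : Fin n) :
    qw (fun k => if k = i then σ (y k) else y k) j = if j = i then - qw y j else qw y j := by
  simp only [qw]
  split_ifs with h
  · simp; ring
  · rfl

lemma qD_symm (y : Fin n → I) (i : Fin n) :
    qD (fun k => if k = i then σ (y k) else y k) = qD y := by
  unfold qD
  refine Finset.prod_congr rfl fun k _ => ?_
  dsimp only
  split_ifs with h
  · simp; ring
  · rfl

lemma Good_single (i : Fin n) : Good (Tsgn {i}) := by
  refine ⟨Tsgn_bp _, ?_⟩
  have : pimap (N := Fin n) (Tsgn {i}) (Tsgn_bp _) (cl (qloop n)) = (cl (qloop n))⁻¹ := by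
    rw [cl_inv i, pimap_cl]
    congr 1
    apply GenLoop.ext
    intro y
    rw [lmap_apply]
    change Tsgn {i} (qmap y) = qmap (fun k => if k = i then σ (y i) else y k)
    have e : (fun k => if k = i then σ (y i) else y k) =
        (fun k => if k = i then σ (y k) else y k) := by
      funext k; split_ifs with h
      · rw [h]
      · rfl
    rw [e]
    have hden : qden (fun k => if k = i then σ (y k) else y k) = qden y := by
      unfold qden
      rw [qD_symm]
      congr 1
      refine Finset.sum_congr rfl fun k _ => ?_
      rw [qw_symm]
      split_ifs <;> ring
    refine sph_ext ?_ fun j => ?_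
    · rw [ht_qmap, hden, qD_symm]; rfl
    · rw [co_qmap, hden, qD_symm, qw_symm]
      change (if j ∈ ({i} : Finset (Fin n)) then - co j (qmap y) else co j (qmap y)) = _
      rw [co_qmap]
      simp only [Finset.mem_singleton]
      split_ifs <;> ring
  rw [this]
  exact Subgroup.inv_mem _ (Subgroup.mem_zpowers _)

lemma Good_one : Good (ContinuousMap.id (Sph n)) := ⟨rfl, Subgroup.mem_zpowers _⟩

lemma Good_sgn (A : Finset (Fin n)) : Good (Tsgn A) := by
  induction A using Finset.induction_on with
  | empty =>
    convert Good_one (n := n)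
    ext x
    exact sph_ext rfl fun i => by change (if i ∈ (∅ : Finset (Fin n)) then - co i x else co i x) = co i x; simp
  | insert a A ha ih =>
    convert (Good_single a).comp ih
    ext x
    refine sph_ext rfl fun i => ?_
    change (if i ∈ insert a A then - co i x else co i x) = if i ∈ ({a} : Finset (Fin n)) then
      -(if i ∈ A then - co i x else co i x) else (if i ∈ A then - co i x else co i x)
    simp only [Finset.mem_insert, Finset.mem_singleton]
    by_cases h : i = a
    · subst h; simp [ha]
    · simp [h]

lemma Good_swap {a b : Fin n} (hab : a ≠ b) : Good (Tperm (Equiv.swap a b)) := by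
  obtain ⟨h1, h2⟩ := Good_single b
  refine ⟨Tperm_bp _, ?_⟩
  convert h2 using 1
  rw [pimap_cl, pimap_cl, cl_eq]
  refine homotopic_of (fun p => Trot ((1 - (p.1 : ℝ)) * (Real.pi / 2)) hab (qmap p.2)) ?_ ?_ ?_ ?_
  · refine continuous_sph ?_ fun i => ?_
    · change Continuous fun p : I × (Fin n → I) => ht (qmap p.2)
      fun_prop
    · change Continuous fun p : I × (Fin n → I) =>
        rotv ((1 - (p.1 : ℝ)) * (Real.pi / 2)) a b (qmap p.2) i
      unfold rotv
      split_ifs <;> fun_prop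
  · intro y
    refine sph_ext rfl fun i => ?_
    change rotv ((1 - ((0 : I) : ℝ)) * (Real.pi / 2)) a b (qmap y) i =
      co (Equiv.swap a b i) (qmap y)
    unfold rotv
    by_cases h1 : i = a
    · subst h1; simp
    · by_cases h2 : i = b
      · subst h2; simp [hab.symm]
      · simp [h1, h2, Equiv.swap_apply_of_ne_of_ne]
  · intro y
    refine sph_ext rfl fun i => ?_
    change rotv ((1 - ((1 : I) : ℝ)) * (Real.pi / 2)) a b (qmap y) i =
      if i ∈ ({b} : Finset (Fin n)) then - co i (qmap y) else co i (qmap y)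
    unfold rotv
    by_cases h1 : i = a
    · subst h1; simp [hab]
    · by_cases h2 : i = b
      · subst h2; simp [hab.symm]
      · simp [h1, h2]
  · intro t y hy
    have : qmap y = bp := qmap_eq_bp.2 hy
    apply eq_bp_of_ht
    change ht (qmap y) = 0
    rw [this]; rfl

lemma Good_perm (π : Equiv.Perm (Fin n)) : Good (Tperm π) := by
  induction π using Equiv.Perm.swap_induction_on with
  | one => exact Good_one
  | swap_mul f x y hxy ih =>
    convert ih.comp (Good_swap hxy)
    ext z
    exact sph_ext rfl fun i => rfl

/-- The class of a signed permutation of the cube. -/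
lemma signed_mem (A : Finset (Fin n)) (π : Equiv.Perm (Fin n)) (f : Ω^ (Fin n) (Sph n) bp)
    (hf : ∀ y, f y = qmap fun i => if i ∈ A then σ (y (π i)) else y (π i)) :
    cl f ∈ Subgroup.zpowers (cl (qloop n)) := by
  obtain ⟨h, h2⟩ := (Good_sgn A).comp (Good_perm π)
  convert h2 using 1
  rw [pimap_cl]
  congr 1
  apply GenLoop.ext
  intro y
  rw [hf, lmap_apply]
  set y' : Fin n → I := fun i => if i ∈ A then σ (y (π i)) else y (π i) with hy'
  have hw : ∀ i, qw y' i = if i ∈ A then - qw y (π i) else qw y (π i) := by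
    intro i
    simp only [qw, hy']
    split_ifs
    · simp; ring
    · rfl
  have hD : qD y' = qD y := by
    unfold qD
    rw [← Equiv.prod_comp π (fun i => (y i : ℝ) * (1 - y i))]
    refine Finset.prod_congr rfl fun k _ => ?_
    simp only [hy']
    split_ifs with h
    · simp; ring
    · rfl
  have hden : qden y' = qden y := by
    unfold qden
    rw [hD, ← Equiv.sum_comp π (fun i => qw y i ^ 2)]
    congr 1
    refine Finset.sum_congr rfl fun k _ => ?_
    rw [hw]
    split_ifs <;> ring
  refine sph_ext ?_ fun j => ?_
  · rw [ht_qmap, hden, hD]; rfl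
  · rw [co_qmap, hden, hD, hw]
    change _ = if j ∈ A then - co (π j) (qmap y) else co (π j) (qmap y)
    rw [co_qmap]
    split_ifs <;> ring

end

end HE

namespace HE

variable {n : ℕ}

/-! ### Cutting into cells -/

section cut
variable {X : Type*} [TopologicalSpace X] {x0 : X}

/-- vanishing on the integer hyperplanes of the grid -/
def Wl (M : ℕ) (h : Ω^ (Fin n) X x0) : Prop :=
  ∀ x : Fin n → I, ∀ a, ∀ k : ℤ, (M * (x a : ℝ) = k) → h x = x0

open Classical in
/-- restriction to the part above an integer hyperplane -/
def resGe {M : ℕ} (h : Ω^ (Fin n) X x0) (hw : Wl M h) (b : Fin n) (m : ℤ) : Ω^ (Fin n) X x0 :=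
  ⟨⟨fun x => if (m : ℝ) ≤ M * (x b : ℝ) then h x else x0, by
    refine Continuous.if_le h.1.continuous continuous_const continuous_const (by fun_prop) ?_
    intro x hx
    exact hw x b m hx.symm⟩, fun x hx => by
      change (if (m : ℝ) ≤ M * (x b : ℝ) then h x else x0) = x0
      split_ifs
      · exact h.2 x hx
      · rfl⟩

open Classical in
/-- restriction to the part below an integer hyperplane -/
def resLe {M : ℕ} (h : Ω^ (Fin n) X x0) (hw : Wl M h) (b : Fin n) (m : ℤ) : Ω^ (Fin n) X x0 :=
  ⟨⟨fun x => if M * (x b : ℝ) ≤ m then h x else x0, by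
    refine Continuous.if_le h.1.continuous continuous_const (by fun_prop) continuous_const ?_
    intro x hx
    exact hw x b m hx⟩, fun x hx => by
      change (if M * (x b : ℝ) ≤ m then h x else x0) = x0
      split_ifs
      · exact h.2 x hx
      · rfl⟩

lemma resGe_pos {M : ℕ} {h : Ω^ (Fin n) X x0} {hw : Wl M h} {b : Fin n} {m : ℤ} {x : Fin n → I}
    (hx : (m : ℝ) ≤ M * (x b : ℝ)) : resGe h hw b m x = h x := if_pos hx
lemma resGe_neg {M : ℕ} {h : Ω^ (Fin n) X x0} {hw : Wl M h} {b : Fin n} {m : ℤ} {x : Fin n → I}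
    (hx : ¬ (m : ℝ) ≤ M * (x b : ℝ)) : resGe h hw b m x = x0 := if_neg hx
lemma resLe_pos {M : ℕ} {h : Ω^ (Fin n) X x0} {hw : Wl M h} {b : Fin n} {m : ℤ} {x : Fin n → I}
    (hx : M * (x b : ℝ) ≤ m) : resLe h hw b m x = h x := if_pos hx
lemma resLe_neg {M : ℕ} {h : Ω^ (Fin n) X x0} {hw : Wl M h} {b : Fin n} {m : ℤ} {x : Fin n → I}
    (hx : ¬ M * (x b : ℝ) ≤ m) : resLe h hw b m x = x0 := if_neg hx

lemma Wl_resGe {M : ℕ} (h : Ω^ (Fin n) X x0) (hw : Wl M h) (b : Fin n) (m : ℤ) :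
    Wl M (resGe h hw b m) := by
  intro x a k hk
  by_cases hx : (m : ℝ) ≤ M * (x b : ℝ)
  · rw [resGe_pos hx]; exact hw x a k hk
  · rw [resGe_neg hx]
lemma Wl_resLe {M : ℕ} (h : Ω^ (Fin n) X x0) (hw : Wl M h) (b : Fin n) (m : ℤ) :
    Wl M (resLe h hw b m) := by
  intro x a k hk
  by_cases hx : M * (x b : ℝ) ≤ m
  · rw [resLe_pos hx]; exact hw x a k hk
  · rw [resLe_neg hx]

/-- restriction to a cell -/
def resCell {M : ℕ} (h : Ω^ (Fin n) X x0) (hw : Wl M h) (b : Fin n) (m : ℤ) : Ω^ (Fin n) X x0 :=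
  resLe (resGe h hw b m) (Wl_resGe h hw b m) b (m + 1)

lemma Wl_resCell {M : ℕ} (h : Ω^ (Fin n) X x0) (hw : Wl M h) (b : Fin n) (m : ℤ) :
    Wl M (resCell h hw b m) := Wl_resLe _ _ _ _

lemma resCell_pos {M : ℕ} {h : Ω^ (Fin n) X x0} {hw : Wl M h} {b : Fin n} {m : ℤ} {x : Fin n → I}
    (hx : (m : ℝ) ≤ M * (x b : ℝ)) (hx' : M * (x b : ℝ) ≤ m + 1) : resCell h hw b m x = h x := by
  unfold resCell
  rw [resLe_pos (by push_cast; exact hx'), resGe_pos hx]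
lemma resCell_neg {M : ℕ} {h : Ω^ (Fin n) X x0} {hw : Wl M h} {b : Fin n} {m : ℤ} {x : Fin n → I}
    (hx : ¬ ((m : ℝ) ≤ M * (x b : ℝ) ∧ M * (x b : ℝ) ≤ m + 1)) : resCell h hw b m x = x0 := by
  unfold resCell
  by_cases h1 : M * (x b : ℝ) ≤ m + 1
  · rw [resLe_pos (by push_cast; exact h1), resGe_neg (fun h2 => hx ⟨h2, h1⟩)]
  · rw [resLe_neg (by push_cast; exact h1)]

lemma cut [T1Space X] [Nonempty (Fin n)] (G : Subgroup (HomotopyGroup (Fin n) X x0))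
    {M : ℕ} (hM : 0 < M) (h : Ω^ (Fin n) X x0)
    (hw : Wl M h) {a b : Fin n} (hab : a ≠ b) (hG : ∀ m : ℤ, cl (resCell h hw b m) ∈ G) :
    cl h ∈ G := by
  have hM' : (0 : ℝ) < M := by exact_mod_cast hM
  have step : ∀ k : ℕ, cl (resGe h hw b (M - k)) ∈ G := by
    intro k
    induction k with
    | zero =>
      convert G.one_mem
      rw [← cl_one]
      congr 1
      apply GenLoop.ext
      intro x
      change _ = x0
      by_cases hx : (((M : ℤ) - (0 : ℕ) : ℤ) : ℝ) ≤ M * (x b : ℝ)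
      · rw [resGe_pos hx]
        apply h.2
        refine ⟨b, Or.inr ?_⟩
        apply Subtype.ext
        have := (x b).2.2
        push_cast at hx
        change (x b : ℝ) = 1
        nlinarith
      · rw [resGe_neg hx]
    | succ k ih =>
      set m : ℤ := M - (k + 1 : ℕ) with hm
      have hm1 : (M : ℤ) - k = m + 1 := by rw [hm]; push_cast; ring
      rw [hm1] at ih
      have : cl (resGe h hw b m) = cl (resCell h hw b m) * cl (resGe h hw b (m + 1)) := by
        apply class_split a
        intro y
        have hb : ∀ s, Function.update y a s b = y b := fun s => by
          rw [Function.update_of_ne hab.symm]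
        by_cases hy : ((m + 1 : ℤ) : ℝ) ≤ M * (y b : ℝ)
        · left
          constructor
          · intro s
            by_cases h2 : (m : ℝ) ≤ M * (Function.update y a s b : ℝ) ∧
              M * (Function.update y a s b : ℝ) ≤ m + 1
            · rw [resCell_pos h2.1 h2.2]
              apply hw _ b (m + 1)
              rw [hb] at h2 ⊢
              push_cast at hy ⊢
              linarith
            · exact resCell_neg h2
          · intro s
            rw [resGe_pos, resGe_pos]
            · rw [hb]; exact hy
            · rw [hb]; push_cast at hy; linarith
        · right
          constructor
          · intro s
            rw [resGe_neg]
            rw [hb]; exact hy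
          · intro s
            push_cast at hy
            by_cases h2 : (m : ℝ) ≤ M * (Function.update y a s b : ℝ)
            · rw [resGe_pos h2, resCell_pos h2]
              rw [hb]; linarith
            · rw [resGe_neg h2, resCell_neg (fun h => h2 h.1)]
      rw [this]
      exact G.mul_mem (hG m) ih
  have := step M
  convert this using 2
  apply GenLoop.ext
  intro x
  rw [resGe_pos]
  have := (x b).2.1
  push_cast
  rw [sub_self]; positivity

lemma cut_all [T1Space X] (hn : 2 ≤ n) [Nonempty (Fin n)]
    (G : Subgroup (HomotopyGroup (Fin n) X x0))
    {M : ℕ} (hM : 0 < M) (A : Finset (Fin n)) :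
    ∀ (h : Ω^ (Fin n) X x0) (_ : Wl M h), (∀ (c : Fin n → ℤ) (h' : Ω^ (Fin n) X x0), Wl M h' →
      (∀ x : Fin n → I, (∀ a ∈ A, (c a : ℝ) ≤ M * (x a : ℝ) ∧ M * (x a : ℝ) ≤ c a + 1) →
        h' x = h x) →
      (∀ x : Fin n → I, (¬ ∀ a ∈ A, (c a : ℝ) ≤ M * (x a : ℝ) ∧ M * (x a : ℝ) ≤ c a + 1) →
        h' x = x0) → cl h' ∈ G) → cl h ∈ G := by
  induction A using Finset.induction_on with
  | empty =>
    intro h hw H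
    exact H 0 h hw (fun _ _ => rfl) (fun x hx => absurd (by simp) hx)
  | insert b A hb ih =>
    intro h hw H
    apply ih h hw
    intro c h' hw' h1 h2
    obtain ⟨a, hab⟩ : ∃ a : Fin n, a ≠ b := by
      have : Nontrivial (Fin n) := Fin.nontrivial_iff_two_le.2 hn
      exact exists_ne b
    refine cut G hM h' hw' hab fun m => ?_
    have hc : ∀ a ∈ A, Function.update c b m a = c a := by
      intro a ha
      rw [Function.update_of_ne]
      rintro rfl; exact hb ha
    refine H (Function.update c b m) _ (Wl_resCell _ _ _ _) ?_ ?_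
    · intro x hx
      have hxb := hx b (Finset.mem_insert_self b A)
      rw [Function.update_self] at hxb
      rw [resCell_pos hxb.1 hxb.2, h1]
      intro a ha
      rw [← hc a ha]
      exact hx a (Finset.mem_insert_of_mem ha)
    · intro x hx
      by_cases hxb : (m : ℝ) ≤ M * (x b : ℝ) ∧ M * (x b : ℝ) ≤ m + 1
      · rw [resCell_pos hxb.1 hxb.2]
        apply h2
        intro h3
        apply hx
        intro a ha
        rcases Finset.mem_insert.1 ha with rfl | ha
        · rw [Function.update_self]; exact hxb
        · rw [hc a ha]; exact h3 a ha
      · exact resCell_neg hxb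

end cut

lemma qlin_homotopic {Γ Γ' : (Fin n → I) → Fin n → I} (hΓ : Continuous Γ) (hΓ' : Continuous Γ')
    (hb : ∀ x ∈ Cube.boundary (Fin n), ∃ i, Γ x i = Γ' x i ∧ (Γ x i = 0 ∨ Γ x i = 1))
    {f g : Ω^ (Fin n) (Sph n) bp} (hf : ∀ x, f x = qmap (Γ x)) (hg : ∀ x, g x = qmap (Γ' x)) :
    GenLoop.Homotopic f g := by
  refine homotopic_of (fun p => qmap fun i => icomb p.1 (Γ p.2 i) (Γ' p.2 i)) (by fun_prop) ?_ ?_ ?_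
  · intro y; simp only [icomb_zero]; rw [hf]
  · intro y; simp only [icomb_one]; rw [hg]
  · intro t y hy
    obtain ⟨i, h1, h2⟩ := hb y hy
    refine qmap_eq_bp.2 ⟨i, ?_⟩
    simp only [← h1, icomb_self]
    exact h2

lemma wall_cell {M : ℕ} {i : Fin n} {s : I} {m : ℤ} (h : wall M i s) (h1 : (m : ℝ) ≤ M * (s : ℝ))
    (h2 : M * (s : ℝ) ≤ m + 1) : m % n = (i : ℕ) ∧ (m : ℝ) < M * s ∧ (M * s : ℝ) < m + 1 / 2 := by
  obtain ⟨k, hk1, hk2⟩ := h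
  have : m = n * k + (i : ℕ) := by
    have a1 : ((n * k + (i : ℕ) : ℤ) : ℝ) < ((m + 1 : ℤ) : ℝ) := by
      push_cast; linarith
    have a2 : (m : ℝ) < ((n * k + (i : ℕ) + 1 : ℤ) : ℝ) := by
      push_cast; linarith
    have := Int.cast_lt.1 a1
    have := Int.cast_lt.1 a2
    omega
  have hi := i.2
  subst this
  refine ⟨?_, by push_cast; exact hk1, by push_cast; exact hk2⟩
  rw [Int.mul_add_emod_self_left, Int.emod_eq_of_lt (by omega) (by omega)]

/-- the normal form as a loop -/
def NF.loop {f : Ω^ (Fin n) (Sph n) bp} {M : ℕ} (N : NF f M) : Ω^ (Fin n) (Sph n) bp :=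
  ⟨⟨fun x => mask (ht (f x)) (N.Γ x), by
    have h : (fun x => mask (ht (f x)) (N.Γ x)) = fun x => N.K (1, x) := by
      funext x; rw [N.K1]
    rw [h]
    exact N.Kcont.comp (by fun_prop)⟩, fun x hx => mask_bp (by
      have : f x = bp := f.2 x hx
      rw [this]; simp)⟩

lemma NF.loop_apply {f : Ω^ (Fin n) (Sph n) bp} {M : ℕ} (N : NF f M) (x : Fin n → I) :
    N.loop x = mask (ht (f x)) (N.Γ x) := rfl

lemma NF.homotopic {f : Ω^ (Fin n) (Sph n) bp} {M : ℕ} (N : NF f M) :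
    GenLoop.Homotopic f N.loop :=
  homotopic_of N.K N.Kcont N.K0 N.K1 fun t y hy => N.Kb t y (f.2 y hy)

lemma NF.wall_all {f : (Fin n → I) → Sph n} {M : ℕ} (N : NF f M) {x : Fin n → I}
    (h : mask (ht (f x)) (N.Γ x) ≠ bp) (a : Fin n) :
    ∃ i : Fin n, wall M i (x a) := by
  obtain ⟨π, hπ⟩ := N.perm h
  exact ⟨π.symm a, by simpa using hπ (π.symm a)⟩

lemma NF.Wl {f : Ω^ (Fin n) (Sph n) bp} {M : ℕ} (N : NF f M) : Wl M N.loop := by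
  intro x a k hk
  by_contra hne
  obtain ⟨i, l, h1, h2⟩ := N.wall_all hne a
  rw [hk] at h1 h2
  have a1 : ((n * l + (i : ℕ) : ℤ) : ℝ) < (k : ℝ) := by push_cast; exact h1
  have a2 : (k : ℝ) < ((n * l + (i : ℕ) + 1 : ℤ) : ℝ) := by push_cast; linarith
  have := Int.cast_lt.1 a1
  have := Int.cast_lt.1 a2
  omega

/-- clipping to a cell -/
def clip (M : ℕ) (c : ℤ) (s : I) : I :=
  Set.projIcc 0 1 zero_le_one (max (c / M : ℝ) (min ((c + 1) / M) s))
@[fun_prop] lemma continuous_clip (M : ℕ) (c : ℤ) : Continuous (clip M c) := by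
  unfold clip; fun_prop

lemma clip_val {M : ℕ} (hM : 0 < M) {c : ℤ} (h0 : 0 ≤ c) (h1 : c + 1 ≤ M) (s : I) :
    M * (clip M c s : ℝ) = max (c : ℝ) (min (c + 1) (M * s)) := by
  have hM' : (0 : ℝ) < M := by exact_mod_cast hM
  have h0' : (0 : ℝ) ≤ c := by exact_mod_cast h0
  have h1' : (c : ℝ) + 1 ≤ M := by exact_mod_cast h1
  have hd : (c / M : ℝ) ≤ 1 := by rw [div_le_one hM']; linarith
  have hd2 : ((c + 1) / M : ℝ) ≤ 1 := by rw [div_le_one hM']; linarith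
  unfold clip
  rw [Set.projIcc_of_mem _ ⟨le_max_of_le_left (by positivity),
    max_le hd ((min_le_left _ _).trans hd2)⟩]
  change M * max (c / M : ℝ) (min ((c + 1) / M) s) = _
  rw [mul_max_of_nonneg _ _ hM'.le, mul_min_of_nonneg _ _ hM'.le]
  congr 1
  · field_simp
  · congr 1; field_simp

lemma box_mem [Nonempty (Fin n)] {f : Ω^ (Fin n) (Sph n) bp} {M : ℕ} (hM : 0 < M)
    (hfine : Fine f M) (N : NF f M) (c : Fin n → ℤ) (h : Ω^ (Fin n) (Sph n) bp)
    (h1 : ∀ x : Fin n → I, (∀ a, (c a : ℝ) ≤ M * (x a : ℝ) ∧ M * (x a : ℝ) ≤ c a + 1) →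
        h x = N.loop x)
    (h2 : ∀ x : Fin n → I, (¬ ∀ a, (c a : ℝ) ≤ M * (x a : ℝ) ∧ M * (x a : ℝ) ≤ c a + 1) →
        h x = bp) : cl h ∈ Subgroup.zpowers (cl (qloop n)) := by
  have hM' : (0 : ℝ) < M := by exact_mod_cast hM
  have hκ := kap_le (n := n)
  by_cases htriv : ∀ x, h x = bp
  · convert Subgroup.one_mem _
    rw [← cl_one]; congr 1
    apply GenLoop.ext
    exact htriv
  push Not at htriv
  obtain ⟨x0, hx0⟩ := htriv
  have hbox0 : ∀ a, (c a : ℝ) ≤ M * (x0 a : ℝ) ∧ M * (x0 a : ℝ) ≤ c a + 1 := by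
    by_contra hc
    exact hx0 (h2 x0 hc)
  rw [h1 x0 hbox0] at hx0
  obtain ⟨π, hπ⟩ := N.perm hx0
  have hht := N.ht_lt x0 hx0
  have hcell : ∀ i, c (π i) % n = (i : ℕ) ∧ (c (π i) : ℝ) < M * x0 (π i) ∧
      (M * x0 (π i) : ℝ) < c (π i) + 1 / 2 :=
    fun i => wall_cell (hπ i) (hbox0 (π i)).1 (hbox0 (π i)).2
  have hty : ∀ (a i : Fin n), c a % n = (i : ℕ) → a = π i := by
    intro a i hai
    have := (hcell (π.symm a)).1
    rw [Equiv.apply_symm_apply] at this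
    have h3 : π.symm a = i := Fin.ext (by omega)
    rw [← h3]; simp
  have hc0 : ∀ a, 0 ≤ c a ∧ c a + 1 ≤ M := by
    intro a
    obtain ⟨-, h3, h4⟩ := hcell (π.symm a)
    rw [Equiv.apply_symm_apply] at h3 h4
    have h5 := (x0 a).2.1
    have h6 := (x0 a).2.2
    have h7 : (0 : ℝ) ≤ M * x0 a := mul_nonneg hM'.le h5
    have h8 : (M * x0 a : ℝ) ≤ M := by nlinarith
    constructor
    · have : (-1 : ℝ) < c a := by linarith
      have : (-1 : ℤ) < c a := by exact_mod_cast this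
      omega
    · have : (c a : ℝ) < M := by linarith
      have : c a < (M : ℤ) := by exact_mod_cast this
      omega
  -- clipped coordinates
  let clp : (Fin n → I) → (Fin n → I) := fun x a => clip M (c a) (x a)
  have cclp : Continuous clp := by
    refine continuous_pi fun a => ?_
    fun_prop
  have hval : ∀ x a, M * (clp x a : ℝ) = max (c a : ℝ) (min (c a + 1) (M * x a)) :=
    fun x a => clip_val hM (hc0 a).1 (hc0 a).2 (x a)
  have hclbox : ∀ x a, (c a : ℝ) ≤ M * (clp x a : ℝ) ∧ M * (clp x a : ℝ) ≤ c a + 1 := by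
    intro x a
    rw [hval]
    exact ⟨le_max_left _ _, max_le (by linarith) (min_le_left _ _)⟩
  let Γ : (Fin n → I) → Fin n → I := fun x => N.Γ (clp x)
  have cΓ : Continuous Γ := N.cont.comp cclp
  -- endpoint property
  have hend : ∀ x i, (M * (x (π i) : ℝ) ≤ c (π i) ∨ c (π i) + 1 ≤ M * (x (π i) : ℝ)) →
      Γ x i = 0 ∨ Γ x i = 1 := by
    intro x i hx
    rcases N.val (clp x) i with h3 | ⟨a, ha⟩
    · exact h3
    · exfalso
      obtain ⟨h4, h5, h6⟩ := wall_cell ha (hclbox x a).1 (hclbox x a).2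
      have := hty a i h4
      subst this
      rw [hval] at h5 h6
      rcases hx with hx | hx
      · rw [max_eq_left ((min_le_right _ _).trans hx)] at h5
        exact lt_irrefl _ h5
      · rw [min_eq_left hx, max_eq_right (by linarith)] at h6
        linarith
  have hh : ∀ x, h x = qmap (Γ x) := by
    intro x
    by_cases hx : ∀ a, (c a : ℝ) ≤ M * (x a : ℝ) ∧ M * (x a : ℝ) ≤ c a + 1
    · have e : clp x = x := by
        funext a
        apply Subtype.ext
        have h3 := hval x a
        rw [min_eq_right (hx a).2, max_eq_right (hx a).1] at h3
        exact mul_left_cancel₀ hM'.ne' h3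
      rw [h1 x hx, N.loop_apply]
      simp only [Γ, e]
      apply mask_q
      have h3 := (hfine x0 x fun a => ?_).1
      · have := (abs_le.1 h3).2
        linarith
      · have h4 := hx a
        have h5 := hbox0 a
        have h6 : |M * (x0 a : ℝ) - M * (x a : ℝ)| ≤ 1 := by
          rw [abs_le]; constructor <;> linarith [h4.1, h4.2, h5.1, h5.2]
        rw [← mul_sub, abs_mul, abs_of_pos hM'] at h6
        rw [le_div_iff₀ hM']
        have : (0 : ℝ) ≤ n := Nat.cast_nonneg n
        linarith
    · rw [h2 x hx]
      symm
      rw [qmap_eq_bp]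
      push Not at hx
      obtain ⟨a, ha⟩ := hx
      refine ⟨π.symm a, hend x _ ?_⟩
      rw [Equiv.apply_symm_apply]
      rcases lt_or_ge (M * (x a : ℝ)) (c a) with h3 | h3
      · exact Or.inl h3.le
      · exact Or.inr (ha h3).le
  have hdep : ∀ x y i, x (π i) = y (π i) → Γ x i = Γ y i := by
    intro x y i hxy
    apply N.dep
    intro a
    by_cases hai : a = π i
    · subst hai
      simp only [clp, hxy]
    · apply Th_cell (m := c a) (fun h3 => hai (hty a i h3)) (hclbox x a).1 (hclbox x a).2
        (hclbox y a).1 (hclbox y a).2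
  let α : Fin n → I := Γ 0
  let β : Fin n → I := Γ 1
  have hα : ∀ i, α i = 0 ∨ α i = 1 := fun i => hend 0 i (Or.inl (by
    have : (0 : ℝ) ≤ c (π i) := by exact_mod_cast (hc0 (π i)).1
    simpa using this))
  have hβ : ∀ i, β i = 0 ∨ β i = 1 := fun i => hend 1 i (Or.inr (by
    have : (c (π i) : ℝ) + 1 ≤ M := by exact_mod_cast (hc0 (π i)).2
    simpa using this))
  let Γ' : (Fin n → I) → Fin n → I := fun x i => icomb (x (π i)) (α i) (β i)
  have cΓ' : Continuous Γ' := by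
    refine continuous_pi fun i => ?_
    fun_prop
  have hbd : ∀ x ∈ Cube.boundary (Fin n), ∃ i, Γ x i = Γ' x i ∧ (Γ x i = 0 ∨ Γ x i = 1) := by
    rintro x ⟨a, ha⟩
    refine ⟨π.symm a, ?_⟩
    rcases ha with ha | ha
    · have e : Γ x (π.symm a) = α (π.symm a) := hdep _ _ _ (by simp [ha])
      refine ⟨?_, by rw [e]; exact hα _⟩
      rw [e]; simp [Γ', ha, icomb_zero]
    · have e : Γ x (π.symm a) = β (π.symm a) := hdep _ _ _ (by simp [ha])
      refine ⟨?_, by rw [e]; exact hβ _⟩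
      rw [e]; simp [Γ', ha, icomb_one]
  let g : Ω^ (Fin n) (Sph n) bp := ⟨⟨fun x => qmap (Γ' x), by fun_prop⟩, fun x hx => by
    obtain ⟨i, h3, h4⟩ := hbd x hx
    exact qmap_eq_bp.2 ⟨i, by rw [← h3]; exact h4⟩⟩
  have hgg : cl h = cl g := cl_eq.2 (qlin_homotopic cΓ cΓ' hbd hh fun x => rfl)
  rw [hgg]
  by_cases hab : ∃ i, α i = β i
  · obtain ⟨i, hi⟩ := hab
    convert Subgroup.one_mem _
    rw [← cl_one]; congr 1
    apply GenLoop.ext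
    intro x
    refine qmap_eq_bp.2 ⟨i, ?_⟩
    simp only [Γ', ← hi, icomb_self]
    exact hα i
  · push Not at hab
    classical
    apply signed_mem (Finset.univ.filter fun i => α i = 1) π
    intro y
    change qmap (Γ' y) = _
    congr 1
    funext i
    simp only [Γ', Finset.mem_filter, Finset.mem_univ, true_and]
    have := hab i
    rcases hα i with h3 | h3 <;> rcases hβ i with h4 | h4
    · exact absurd (h3.trans h4.symm) this
    · rw [if_neg (by rw [h3]; exact zero_ne_one), h3, h4]
      apply Subtype.ext; simp [icomb]
    · rw [if_pos h3, h3, h4]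
      apply Subtype.ext; simp [icomb]
    · exact absurd (h3.trans h4.symm) this

theorem all_zpowers (hn : 2 ≤ n) [Nonempty (Fin n)] (z : HomotopyGroup (Fin n) (Sph n) bp) :
    z ∈ Subgroup.zpowers (cl (qloop n)) := by
  obtain ⟨f, rfl⟩ := cl_surj z
  obtain ⟨M, hM, hfine⟩ := exists_fine (f := f) f.1.continuous
  have hfine := hfine M le_rfl
  obtain ⟨N⟩ := exists_NF (by omega) f.1.continuous hM hfine
  rw [cl_eq.2 N.homotopic]
  refine cut_all hn _ hM Finset.univ N.loop N.Wl ?_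
  intro c h' _ h1 h2
  refine box_mem hM hfine N c h' ?_ ?_
  · intro x hx; exact h1 x fun a _ => hx a
  · intro x hx; exact h2 x fun h => hx fun a => h a (Finset.mem_univ a)

end HE

namespace HE

variable {n : ℕ}

/-! ### The infinite wedge -/

/-- Sequences of points of the sphere with at most one nontrivial entry. -/
def XX (n : ℕ) : Type := {x : ℕ → Sph n // ∀ j k, j ≠ k → x j = bp ∨ x k = bp}

instance (n : ℕ) : TopologicalSpace (XX n) :=
  inferInstanceAs (TopologicalSpace {x : ℕ → Sph n // ∀ j k, j ≠ k → x j = bp ∨ x k = bp})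

instance (n : ℕ) : T2Space (XX n) :=
  inferInstanceAs (T2Space {x : ℕ → Sph n // ∀ j k, j ≠ k → x j = bp ∨ x k = bp})

def xb : XX n := ⟨fun _ => bp, fun _ _ _ => Or.inl rfl⟩

lemma XX_ext {x y : XX n} (h : ∀ k, x.1 k = y.1 k) : x = y := Subtype.ext (funext h)

lemma continuous_XX {Z : Type*} [TopologicalSpace Z] {f : Z → XX n}
    (h : ∀ k, Continuous fun z => (f z).1 k) : Continuous f :=
  Continuous.subtype_mk (p := fun x : ℕ → Sph n => ∀ j k, j ≠ k → x j = bp ∨ x k = bp)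
    (f := fun z => ((f z).1 : ℕ → Sph n)) (continuous_pi h) (fun z => (f z).2)

/-- projections -/
def rr (k : ℕ) : C(XX n, Sph n) := ⟨fun x => x.1 k, (continuous_apply k).comp continuous_subtype_val⟩

lemma rr_apply (k : ℕ) (x : XX n) : rr k x = x.1 k := rfl
lemma rr_xb (k : ℕ) : rr k (xb : XX n) = bp := rfl

/-- inclusion of sphere zero -/
def i0 : C(Sph n, XX n) where
  toFun x := ⟨fun k => if k = 0 then x else bp, fun j k hjk => by
    by_cases h : j = 0
    · right; exact if_neg (by omega)
    · left; exact if_neg h⟩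
  continuous_toFun := continuous_XX fun k => by
    change Continuous fun x => if k = 0 then x else bp
    split_ifs <;> fun_prop

/-- shift -/
def sh : C(XX n, XX n) where
  toFun x := ⟨fun k => Nat.casesOn k bp x.1, fun j k hjk => by
    cases j with
    | zero => exact Or.inl rfl
    | succ j => cases k with
      | zero => exact Or.inr rfl
      | succ k => exact x.2 j k (by omega)⟩
  continuous_toFun := continuous_XX fun k => by
    cases k with
    | zero => exact continuous_const
    | succ k => exact (rr k).continuous

lemma i0_bp : i0 (bp : Sph n) = xb := XX_ext fun k => by
  change (if k = 0 then bp else bp) = bp; simp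
lemma sh_xb : sh (xb : XX n) = xb := XX_ext fun k => by cases k <;> rfl
lemma rr_i0_zero (x : Sph n) : rr 0 (i0 x) = x := rfl
lemma rr_i0_succ (k : ℕ) (x : Sph n) : rr (k + 1) (i0 x) = bp := rfl
lemma rr_sh_zero (x : XX n) : rr 0 (sh x) = bp := rfl
lemma rr_sh_succ (k : ℕ) (x : XX n) : rr (k + 1) (sh x) = rr k x := rfl

/-! ### Contracting walls -/

def Ch (u : ℝ) : ℝ := u + (max 0 (2 * Int.fract u - 1) - Int.fract u)

lemma Ch_continuous : Continuous Ch := by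
  unfold Ch
  refine continuous_id.add ?_
  refine ContinuousOn.comp_fract'' (f := fun r : ℝ => max 0 (2 * r - 1) - r) ?_ ?_
  · exact Continuous.continuousOn (by fun_prop)
  · norm_num

lemma Ch_near (u : ℝ) : |Ch u - u| ≤ 1 := by
  have h0 := Int.fract_nonneg u
  have h1 := (Int.fract_lt_one u).le
  unfold Ch
  have h2 : (0 : ℝ) ≤ max 0 (2 * Int.fract u - 1) := le_max_left _ _
  have h3 : max 0 (2 * Int.fract u - 1) ≤ 1 := max_le (by norm_num) (by linarith)
  rw [abs_le]; constructor <;> linarith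

lemma Ch_wall {u : ℝ} {k : ℤ} (h1 : (k : ℝ) ≤ u) (h2 : u < k + 1 / 2) : Ch u = k := by
  have hf : ⌊u⌋ = k := Int.floor_eq_iff.2 ⟨h1, by linarith⟩
  have : Int.fract u = u - k := by rw [← hf]; rfl
  unfold Ch
  rw [this, max_eq_left (by linarith)]
  ring

def chi (M : ℕ) (s : I) : I := Set.projIcc 0 1 zero_le_one (Ch (M * (s : ℝ)) / M)

@[fun_prop] lemma continuous_chi (M : ℕ) : Continuous (chi M) := by
  have := Ch_continuous
  unfold chi
  fun_prop

lemma chi_wall {M : ℕ} (hM : 0 < M) {s : I} {k : ℤ} (h1 : (k : ℝ) ≤ M * s)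
    (h2 : (M * s : ℝ) < k + 1 / 2) : M * (chi M s : ℝ) = k := by
  have hM' : (0 : ℝ) < M := by exact_mod_cast hM
  have hs0 := s.2.1
  have hs1 := s.2.2
  have h3 : (-1 : ℝ) < k := by
    have : (0 : ℝ) ≤ M * s := by positivity
    linarith
  have h4 : (0 : ℤ) ≤ k := by
    have : (-1 : ℤ) < k := by exact_mod_cast h3
    omega
  have h4' : (0 : ℝ) ≤ k := by exact_mod_cast h4
  unfold chi
  rw [Ch_wall h1 h2, Set.projIcc_of_mem _ ⟨by positivity, by
    rw [div_le_one hM']; nlinarith⟩]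
  change M * ((k : ℝ) / M) = k
  field_simp

lemma chi_zero {M : ℕ} (hM : 0 < M) : chi M 0 = 0 := by
  have hM' : (0 : ℝ) < M := by exact_mod_cast hM
  have := chi_wall hM (s := 0) (k := 0) (by simp) (by simp)
  apply Subtype.ext
  simpa [hM.ne'] using this

lemma chi_one {M : ℕ} (hM : 0 < M) : chi M 1 = 1 := by
  have hM' : (0 : ℝ) < M := by exact_mod_cast hM
  have := chi_wall hM (s := 1) (k := M) (by simp) (by simp)
  apply Subtype.ext
  have h2 : (M : ℝ) * (chi M 1 : ℝ) = M * 1 := by rw [this]; simp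
  exact mul_left_cancel₀ hM'.ne' h2

lemma chi_near {M : ℕ} (hM : 0 < M) (s : I) : |(chi M s : ℝ) - s| ≤ 1 / M := by
  have hM' : (0 : ℝ) < M := by exact_mod_cast hM
  refine (projIcc_near _ s).trans ?_
  have := Ch_near (M * (s : ℝ))
  have e : Ch (M * (s : ℝ)) / M - s = (Ch (M * (s : ℝ)) - M * s) / M := by field_simp
  rw [e, abs_div, abs_of_pos hM']
  gcongr

/-! ### Splitting off the first sphere -/

lemma loop_coe {X : Type*} [TopologicalSpace X] {N : Type*} {x : X} (f : Ω^ N X x) (y : N → I)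
    (hy : y ∈ Cube.boundary N) : f y = x := f.2 y hy

lemma split_first [Nonempty (Fin n)] (hn : 2 ≤ n) (f : Ω^ (Fin n) (XX n) xb) :
    ∃ (f0 : Ω^ (Fin n) (Sph n) bp) (f' : Ω^ (Fin n) (XX n) xb),
      cl f = cl (lmap i0 i0_bp f0) * cl (lmap sh sh_xb f') := by
  have h0n : 0 < n := by omega
  let ff : ℕ → Ω^ (Fin n) (Sph n) bp := fun k => lmap (rr k) (rr_xb k) f
  have hff : ∀ k x, ff k x = (f x).1 k := fun k x => rfl
  choose P hP hfine using fun k => exists_fine (f := ff k) (ff k).1.continuous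
  let M : ℕ → ℕ := fun k => P 0 * (if k = 0 then 1 else P k)
  have hM : ∀ k, 0 < M k := fun k => Nat.mul_pos (hP 0) (by split_ifs; exacts [one_pos, hP k])
  have hMP : ∀ k, P k ≤ M k := by
    intro k
    by_cases h : k = 0
    · subst h; simp [M]
    · simp only [M, if_neg h]
      exact Nat.le_mul_of_pos_left _ (hP 0)
  have hfM : ∀ k, Fine (ff k) (M k) := fun k => hfine k (M k) (hMP k)
  have hM0 : M 0 = P 0 := by simp [M]
  have N : ∀ k, NF (ff k) (M k) := fun k =>
    (exists_NF h0n (ff k).1.continuous (hM k) (hfM k)).some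
  let g : ℕ → Ω^ (Fin n) (Sph n) bp := fun k => (N k).loop
  have hg0 : ∀ k x, ff k x = bp → g k x = bp := by
    intro k x hx
    change mask _ _ = bp
    rw [← (N k).K1]
    exact (N k).Kb 1 x hx
  -- step 1
  have ex1 : ∀ (t : I) x, ∀ j k, j ≠ k → (N j).K (t, x) = bp ∨ (N k).K (t, x) = bp := by
    intro t x j k hjk
    rcases (f x).2 j k hjk with h | h
    · exact Or.inl ((N j).Kb t x h)
    · exact Or.inr ((N k).Kb t x h)
  let G1 : Ω^ (Fin n) (XX n) xb := ⟨⟨fun x => ⟨fun k => (N k).K (1, x), ex1 1 x⟩,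
    continuous_XX fun k => (N k).Kcont.comp (by fun_prop)⟩, fun x hx =>
      XX_ext fun k => (N k).Kb 1 x (loop_coe (ff k) x hx)⟩
  have s1 : GenLoop.Homotopic f G1 := by
    refine homotopic_of (fun p => ⟨fun k => (N k).K p, ex1 p.1 p.2⟩) ?_ ?_ ?_ ?_
    · exact continuous_XX fun k => (N k).Kcont
    · intro y; exact XX_ext fun k => (N k).K0 y
    · intro y; rfl
    · intro t y hy; exact XX_ext fun k => (N k).Kb t y (loop_coe (ff k) y hy)
  have hG1 : ∀ x k, (G1 x).1 k = g k x := fun x k => (N k).K1 x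
  -- directions
  let a0 : Fin n := ⟨1, by omega⟩
  let a1 : Fin n := ⟨0, by omega⟩
  have ha : a1 ≠ a0 := by simp [a0, a1]
  let ψ : I × (Fin n → I) → Fin n → I := fun p =>
    Function.update p.2 a0 (icomb p.1 (p.2 a0) (chi (P 0) (p.2 a0)))
  have cψ : Continuous ψ := continuous_snd.update a0 (by fun_prop)
  have ψb : ∀ t, ∀ y ∈ Cube.boundary (Fin n), ψ (t, y) ∈ Cube.boundary (Fin n) := by
    rintro t y ⟨b, hb⟩
    refine ⟨b, ?_⟩
    by_cases hba : b = a0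
    · subst hba
      simp only [ψ, Function.update_self]
      rcases hb with hb | hb <;> rw [hb]
      · rw [chi_zero (hP 0), icomb_self]; simp
      · rw [chi_one (hP 0), icomb_self]; simp
    · simp only [ψ, Function.update_of_ne hba]; exact hb
  have ψnear : ∀ t y a, |(y a : ℝ) - ψ (t, y) a| ≤ (n + 1) / M 0 := by
    intro t y a
    have hP' : (0 : ℝ) < P 0 := by exact_mod_cast hP 0
    rw [hM0]
    by_cases hba : a = a0
    · rw [hba]
      simp only [ψ, Function.update_self]
      have h1 := chi_near (hP 0) (y a0)
      have e : (y a0 : ℝ) - (icomb t (y a0) (chi (P 0) (y a0)) : I) =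
          - (t * ((chi (P 0) (y a0) : ℝ) - y a0)) := by
        simp only [icomb]; ring
      rw [e, abs_neg, abs_mul, abs_of_nonneg t.2.1]
      have h2 := t.2.2
      have h3 := abs_nonneg ((chi (P 0) (y a0) : ℝ) - y a0)
      have h4 : (1 : ℝ) / P 0 ≤ (n + 1) / P 0 := by
        gcongr; linarith [Nat.cast_nonneg (α := ℝ) n]
      nlinarith
    · simp only [ψ, Function.update_of_ne hba]
      simp; positivity
  let E : I × (Fin n → I) → ℕ → Sph n := fun p k =>
    if k = 0 then g 0 p.2 else g k (ψ p)
  have hκ := kap_le (n := n)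
  have key0 : ∀ p k, k ≠ 0 → g 0 p.2 = bp ∨ g k (ψ p) = bp := by
    intro p k hk
    by_cases h : g 0 p.2 = bp
    · exact Or.inl h
    · right
      apply hg0
      have h1 := (N 0).ht_lt p.2 h
      have h2 := (abs_le.1 (hfM 0 p.2 (ψ p) (ψnear p.1 p.2)).1).2
      rcases (f (ψ p)).2 0 k (Ne.symm hk) with h3 | h3
      · exfalso
        have : ff 0 (ψ p) = bp := h3
        rw [this, ht_bp] at h2
        linarith
      · exact h3
  have ex2 : ∀ p j k, j ≠ k → E p j = bp ∨ E p k = bp := by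
    intro p j k hjk
    by_cases hj : j = 0
    · subst hj
      have hk : k ≠ 0 := Ne.symm hjk
      simp only [E, if_true, if_neg hk]
      exact key0 p k hk
    · by_cases hk : k = 0
      · subst hk
        simp only [E, if_true, if_neg hj]
        exact (key0 p j hj).symm
      · simp only [E, if_neg hk, if_neg hj]
        rcases (f (ψ p)).2 j k hjk with h | h
        · exact Or.inl (hg0 j _ h)
        · exact Or.inr (hg0 k _ h)
  have cE : ∀ k, Continuous fun p => E p k := by
    intro k
    have cg : Continuous (g k) := (g k).1.continuous
    by_cases hk : k = 0
    · subst hk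
      simp only [E, if_true]
      exact cg.comp continuous_snd
    · simp only [E, if_neg hk]
      exact cg.comp cψ
  have bE : ∀ t, ∀ y ∈ Cube.boundary (Fin n), ∀ k, E (t, y) k = bp := by
    intro t y hy k
    simp only [E]
    split_ifs
    · exact loop_coe _ _ hy
    · exact loop_coe _ _ (ψb t y hy)
  let G2 : Ω^ (Fin n) (XX n) xb := ⟨⟨fun x => ⟨E (1, x), ex2 (1, x)⟩,
    continuous_XX fun k => (cE k).comp (by fun_prop)⟩, fun x hx => XX_ext (bE 1 x hx)⟩
  have s2 : GenLoop.Homotopic G1 G2 := by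
    refine homotopic_of (fun p => ⟨E p, ex2 p⟩) ?_ ?_ ?_ ?_
    · exact continuous_XX cE
    · intro y
      refine XX_ext fun k => ?_
      rw [hG1]
      have e : ψ (0, y) = y := by simp [ψ, icomb_zero]
      simp only [E, e]
      split_ifs with h
      · rw [h]
      · rfl
    · intro y; rfl
    · intro t y hy; exact XX_ext (bE t y hy)
  let f' : Ω^ (Fin n) (XX n) xb := ⟨⟨fun x => ⟨fun k => g (k + 1) (ψ (1, x)), fun j k hjk => by
      rcases (f (ψ (1, x))).2 (j + 1) (k + 1) (by omega) with h | h
      · exact Or.inl (hg0 _ _ h)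
      · exact Or.inr (hg0 _ _ h)⟩,
    continuous_XX fun k => by
      have cg : Continuous (g (k + 1)) := (g (k + 1)).1.continuous
      change Continuous fun x => g (k + 1) (ψ (1, x))
      exact cg.comp (cψ.comp (by fun_prop))⟩, fun x hx =>
        XX_ext fun k => loop_coe (g (k + 1)) _ (ψb 1 x hx)⟩
  refine ⟨g 0, f', ?_⟩
  rw [cl_eq.2 (s1.trans s2)]
  apply class_split a1
  intro y
  have hy0 : ∀ s, Function.update y a1 s a0 = y a0 := fun s => by
    rw [Function.update_of_ne ha.symm]
  by_cases hw : ∃ i : Fin n, wall (M 0) i (y a0)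
  · right
    obtain ⟨i, l, hl1, hl2⟩ := hw
    rw [hM0] at hl1 hl2
    have hch := chi_wall (hP 0) (s := y a0) (k := n * l + (i : ℕ)) (by push_cast; exact hl1.le)
      (by push_cast; exact hl2)
    have hz : ∀ s k, k ≠ 0 → g k (ψ (1, Function.update y a1 s)) = bp := by
      intro s k hk
      refine (N k).Wl _ a0 ((if k = 0 then 1 else P k : ℕ) * (n * l + (i : ℕ))) ?_
      simp only [ψ, Function.update_self, hy0, icomb_one]
      push_cast at hch ⊢
      rw [← hch]
      simp only [M]
      push_cast
      ring
    constructor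
    · intro s
      refine XX_ext fun k => ?_
      cases k with
      | zero => rfl
      | succ k => exact hz s (k + 1) (by omega)
    · intro s
      refine XX_ext fun k => ?_
      cases k with
      | zero => rfl
      | succ k => exact hz s (k + 1) (by omega)
  · left
    have hz : ∀ s, g 0 (Function.update y a1 s) = bp := by
      intro s
      by_contra hne
      apply hw
      have := (N 0).wall_all hne a0
      rwa [hy0] at this
    constructor
    · intro s
      rw [lmap_apply, hz s, i0_bp]
    · intro s
      refine XX_ext fun k => ?_
      cases k with
      | zero => exact hz s
      | succ k => rfl

end HE

namespace HE

variable {n : ℕ}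

section
variable [Nonempty (Fin n)]

lemma pimap_const {X Y : Type*} [TopologicalSpace X] [TopologicalSpace Y] {x : X} {y : Y}
    (φ : C(X, Y)) (h : φ x = y) (f : Ω^ (Fin n) X x) (hc : ∀ t, φ (f t) = y) :
    pimap φ h (cl f) = 1 := by
  rw [pimap_cl, ← cl_one]
  congr 1
  apply GenLoop.ext
  exact hc

/-- all projections are null -/
def AllNull (f : Ω^ (Fin n) (XX n) xb) : Prop := ∀ k, pimap (rr k) (rr_xb k) (cl f) = 1

lemma step_null (hn : 2 ≤ n) (f : Ω^ (Fin n) (XX n) xb) (hf : AllNull f) :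
    ∃ f' : Ω^ (Fin n) (XX n) xb, AllNull f' ∧ GenLoop.Homotopic f (lmap sh sh_xb f') := by
  obtain ⟨f0, f', h⟩ := split_first hn f
  have h0 := hf 0
  rw [h, map_mul] at h0
  have e1 : pimap (rr 0) (rr_xb 0) (cl (lmap i0 i0_bp f0)) = cl f0 := by
    rw [pimap_cl]
    congr 1
  have e2 : pimap (rr 0) (rr_xb 0) (cl (lmap sh sh_xb f')) = 1 :=
    pimap_const _ _ _ fun t => rfl
  rw [e1, e2, mul_one] at h0
  have h1 : cl (lmap i0 i0_bp f0) = pimap i0 i0_bp (cl f0) := rfl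
  rw [h1, h0, map_one, one_mul] at h
  refine ⟨f', fun k => ?_, cl_eq.1 h⟩
  have h2 := hf (k + 1)
  rw [h] at h2
  exact h2

/-- Infinite concatenation, one coordinate. -/
def Wc (K : ℕ → I × (Fin n → I) → XX n) : ℕ → ℕ → ℝ → (Fin n → I) → Sph n
  | 0, j, T, x => (K j (Set.projIcc 0 1 zero_le_one T, x)).1 0
  | d + 1, j, T, x => if T ≤ 1 then (K j (Set.projIcc 0 1 zero_le_one T, x)).1 (d + 1)
      else Wc K d (j + 1) (T - 1) x

variable {K : ℕ → I × (Fin n → I) → XX n}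

lemma Wc_le {d j : ℕ} {T : ℝ} (hT : T ≤ 1) (x : Fin n → I) :
    Wc K d j T x = (K j (Set.projIcc 0 1 zero_le_one T, x)).1 d := by
  cases d with
  | zero => rfl
  | succ d => simp only [Wc]; rw [if_pos hT]

lemma Wc_gt {d j : ℕ} {T : ℝ} (hT : 1 < T) (x : Fin n → I) :
    Wc K (d + 1) j T x = Wc K d (j + 1) (T - 1) x := by
  simp only [Wc]; rw [if_neg (not_le.2 hT)]

lemma Wc_cont (hc : ∀ j, Continuous (K j))
    (hs : ∀ j x d, (K j (1, x)).1 (d + 1) = (K (j + 1) (0, x)).1 d) (d : ℕ) :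
    ∀ j, Continuous fun p : ℝ × (Fin n → I) => Wc K d j p.1 p.2 := by
  have c0 : ∀ j d, Continuous fun p : ℝ × (Fin n → I) =>
      (K j (Set.projIcc 0 1 zero_le_one p.1, p.2)).1 d := by
    intro j d
    exact (rr d).continuous.comp ((hc j).comp (by fun_prop))
  induction d with
  | zero => intro j; exact c0 j 0
  | succ d ih =>
    intro j
    simp only [Wc]
    refine Continuous.if_le (c0 j (d + 1)) ?_ continuous_fst continuous_const ?_
    · exact (ih (j + 1)).comp (g := fun p : ℝ × (Fin n → I) => Wc K d (j + 1) p.1 p.2)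
        (f := fun p : ℝ × (Fin n → I) => (p.1 - 1, p.2)) (by fun_prop)
    · intro p hp
      rw [hp, Wc_le (by norm_num)]
      rw [Set.projIcc_of_right_le _ le_rfl, Set.projIcc_of_le_left _ (by norm_num)]
      exact hs j p.2 d

lemma Wc_end (he : ∀ j x, (K j (1, x)).1 0 = bp) (d : ℕ) :
    ∀ j (T : ℝ) x, (d + 1 : ℝ) ≤ T → (hs : ∀ j x d, (K j (1, x)).1 (d + 1) = (K (j + 1) (0, x)).1 d) →
      Wc K d j T x = bp := by
  induction d with
  | zero =>
    intro j T x hT _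
    simp only [Wc]
    rw [Set.projIcc_of_right_le _ (by simpa using hT)]
    exact he j x
  | succ d ih =>
    intro j T x hT hs
    push_cast at hT
    have : (0 : ℝ) ≤ d := Nat.cast_nonneg d
    rw [Wc_gt (by linarith)]
    exact ih (j + 1) (T - 1) x (by linarith) hs

lemma Wc_disj (he : ∀ j x, (K j (1, x)).1 0 = bp) (d : ℕ) :
    ∀ d' j (T : ℝ) x, d ≠ d' → Wc K d j T x = bp ∨ Wc K d' j T x = bp := by
  induction d with
  | zero =>
    intro d' j T x hd
    rcases le_or_gt T 1 with hT | hT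
    · rw [Wc_le hT, Wc_le hT]
      exact (K j _).2 0 d' hd
    · left
      simp only [Wc]
      rw [Set.projIcc_of_right_le _ hT.le]
      exact he j x
  | succ d ih =>
    intro d' j T x hd
    rcases le_or_gt T 1 with hT | hT
    · rw [Wc_le hT, Wc_le hT]
      exact (K j _).2 (d + 1) d' hd
    · cases d' with
      | zero =>
        right
        simp only [Wc]
        rw [Set.projIcc_of_right_le _ hT.le]
        exact he j x
      | succ d' =>
        rw [Wc_gt hT, Wc_gt hT]
        exact ih d' (j + 1) (T - 1) x (by omega)

lemma Wc_bd {x : Fin n → I} (hb : ∀ j t, K j (t, x) = xb) (d : ℕ) :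
    ∀ j (T : ℝ), Wc K d j T x = bp := by
  induction d with
  | zero => intro j T; simp only [Wc]; rw [hb]; rfl
  | succ d ih =>
    intro j T
    rcases le_or_gt T 1 with hT | hT
    · rw [Wc_le hT, hb]; rfl
    · rw [Wc_gt hT]; exact ih _ _

/-- Loops all of whose projections are null are null. -/
theorem null_of_allNull (hn : 2 ≤ n) (f : Ω^ (Fin n) (XX n) xb) (hf : AllNull f) : cl f = 1 := by
  choose nxt hnxt1 hnxt2 using fun g : {g : Ω^ (Fin n) (XX n) xb // AllNull g} =>
    step_null hn g.1 g.2
  let F : ℕ → {g : Ω^ (Fin n) (XX n) xb // AllNull g} := fun j =>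
    Nat.rec ⟨f, hf⟩ (fun _ g => ⟨nxt g, hnxt1 g⟩) j
  have hF : ∀ j, GenLoop.Homotopic (F j).1 (lmap sh sh_xb (F (j + 1)).1) := fun j => hnxt2 (F j)
  choose K Kc K0 K1 Kb using fun j => exists_of_homotopic (hF j)
  have hs : ∀ j x d, (K j (1, x)).1 (d + 1) = (K (j + 1) (0, x)).1 d := by
    intro j x d
    rw [K1, K0]; rfl
  have he : ∀ j x, (K j (1, x)).1 0 = bp := by
    intro j x
    rw [K1]; rfl
  let T : ℕ → I → ℝ := fun k t => (t : ℝ) / max (1 - (t : ℝ)) (1 / ((k : ℝ) + 2))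
  have hpos : ∀ (k : ℕ) (t : I), 0 < max (1 - (t : ℝ)) (1 / ((k : ℝ) + 2)) := fun k t =>
    lt_max_of_lt_right (by positivity)
  have cT : ∀ k, Continuous (T k) := by
    intro k
    refine Continuous.div (by fun_prop) (by fun_prop) fun t => (hpos k t).ne'
  have hW1 : ∀ k x, Wc K k 0 (T k 1) x = bp := by
    intro k x
    apply Wc_end he _ _ _ _ _ hs
    have : T k 1 = k + 2 := by
      simp only [T]
      rw [max_eq_right (by simp; positivity)]
      simp
    rw [this]; linarith
  have hWT : ∀ k (t : I) x, (t : ℝ) < 1 → Wc K k 0 (T k t) x = Wc K k 0 ((t : ℝ) / (1 - t)) x := by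
    intro k t x ht1
    have hk : (0 : ℝ) ≤ k := Nat.cast_nonneg k
    have h1 : 0 < 1 - (t : ℝ) := by linarith
    rcases le_total (1 / ((k : ℝ) + 2)) (1 - (t : ℝ)) with h | h
    · simp only [T]; rw [max_eq_left h]
    · have h2 : (1 - (t : ℝ)) * (k + 2) ≤ 1 := by
        rwa [le_div_iff₀ (by positivity)] at h
      rw [Wc_end he k 0 (T k t) x _ hs, Wc_end he k 0 _ x _ hs]
      · rw [le_div_iff₀ h1]; nlinarith
      · simp only [T]
        rw [max_eq_right h, div_div_eq_mul_div, div_one]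
        nlinarith
  have ex : ∀ p : I × (Fin n → I), ∀ j k, j ≠ k →
      Wc K j 0 (T j p.1) p.2 = bp ∨ Wc K k 0 (T k p.1) p.2 = bp := by
    rintro ⟨t, x⟩ j k hjk
    rcases eq_or_lt_of_le t.2.2 with h | h
    · have : t = 1 := Subtype.ext h
      subst this
      exact Or.inl (hW1 j x)
    · rw [hWT j t x h, hWT k t x h]
      exact Wc_disj he j k 0 _ x hjk
  rw [← cl_one, cl_eq]
  refine homotopic_of (fun p => ⟨fun k => Wc K k 0 (T k p.1) p.2, ex p⟩) ?_ ?_ ?_ ?_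
  · refine continuous_XX fun k => ?_
    exact (Wc_cont Kc hs k 0).comp (f := fun p : I × (Fin n → I) => (T k p.1, p.2))
      (g := fun p : ℝ × (Fin n → I) => Wc K k 0 p.1 p.2)
      (((cT k).comp continuous_fst).prodMk continuous_snd)
  · intro y
    refine XX_ext fun k => ?_
    change Wc K k 0 (T k 0) y = (f y).1 k
    have : T k 0 = 0 := by simp [T]
    rw [this, Wc_le zero_le_one, Set.projIcc_of_le_left _ le_rfl]
    have e := K0 0 y
    have e2 : K 0 (⟨0, by simp⟩, y) = K 0 (0, y) := rfl
    rw [e2, e]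
    rfl
  · intro y
    exact XX_ext fun k => hW1 k y
  · intro t y hy
    exact XX_ext fun k => Wc_bd (fun j t => Kb j t y hy) k 0 _

/-- the total projection -/
def pitot (n : ℕ) [Nonempty (Fin n)] :
    HomotopyGroup (Fin n) (XX n) xb →* (ℕ → HomotopyGroup (Fin n) (Sph n) bp) :=
  MonoidHom.mk' (fun z k => pimap (rr k) (rr_xb k) z) (fun a b => by
    funext k; exact map_mul _ a b)

lemma pitot_inj (hn : 2 ≤ n) : Function.Injective (pitot n) := by
  rw [injective_iff_map_eq_one]
  intro z hz
  obtain ⟨f, rfl⟩ := cl_surj z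
  exact null_of_allNull hn f fun k => congrFun hz k

lemma pitot_surj : Function.Surjective (pitot n) := by
  intro w
  choose f hf using fun k => cl_surj (w k)
  let a : Fin n := Classical.arbitrary _
  let u : ℕ → ℝ → ℝ := fun k s => 2 ^ (k + 1) * (s - 1) + 2
  let rp : ℕ → (Fin n → I) → Fin n → I := fun k x =>
    Function.update x a (Set.projIcc 0 1 zero_le_one (u k (x a)))
  have crp : ∀ k, Continuous (rp k) := fun k =>
    continuous_id.update a (by simp only [u]; fun_prop)
  have hp1 : ∀ k : ℕ, (2 : ℝ) ≤ 2 ^ (k + 1) := fun k => by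
    rw [pow_succ]; linarith [one_le_pow₀ (n := k) (one_le_two (α := ℝ))]
  have hbd : ∀ (t : I) k, ∀ x ∈ Cube.boundary (Fin n), Function.update x a
      (Set.projIcc 0 1 zero_le_one ((1 - (t : ℝ)) * u k (x a) + t * (x a))) ∈
        Cube.boundary (Fin n) := by
    rintro t k x ⟨b, hb⟩
    refine ⟨b, ?_⟩
    have ht0 := t.2.1
    have ht1 := t.2.2
    have := hp1 k
    by_cases hba : b = a
    · subst hba
      rw [Function.update_self]
      rcases hb with hb | hb
      · left
        apply Set.projIcc_of_le_left
        simp only [u, hb, Set.Icc.coe_zero]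
        nlinarith
      · right
        apply Set.projIcc_of_right_le
        simp only [u, hb, Set.Icc.coe_one]
        nlinarith
    · rw [Function.update_of_ne hba]; exact hb
  have hdis : ∀ x j k, j < k → f j (rp j x) = bp ∨ f k (rp k x) = bp := by
    intro x j k hjk
    by_cases h1 : 1 ≤ u j (x a)
    · left
      apply loop_coe
      refine ⟨a, Or.inr ?_⟩
      simp only [rp, Function.update_self]
      exact Set.projIcc_of_right_le _ h1
    · right
      apply loop_coe
      refine ⟨a, Or.inl ?_⟩
      simp only [rp, Function.update_self]
      apply Set.projIcc_of_le_left
      simp only [u] at h1 ⊢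
      have h2 : (2 : ℝ) ^ (j + 1) ≤ 2 ^ k := pow_le_pow_right₀ one_le_two (by omega)
      have h3 := (x a).2.2
      rw [pow_succ 2 k]
      nlinarith
  let F : Ω^ (Fin n) (XX n) xb := ⟨⟨fun x => ⟨fun k => f k (rp k x), fun j k hjk => by
      rcases lt_or_gt_of_ne hjk with h | h
      · exact hdis x j k h
      · exact (hdis x k j h).symm⟩,
    continuous_XX fun k => by
      have c : Continuous (f k) := (f k).1.continuous
      exact c.comp (crp k)⟩, fun x hx => XX_ext fun k => by
        change f k (rp k x) = bp
        apply loop_coe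
        have := hbd 0 k x hx
        simpa [rp] using this⟩
  refine ⟨cl F, ?_⟩
  funext k
  rw [← hf k]
  change cl (lmap (rr k) (rr_xb k) F) = cl (f k)
  rw [cl_eq]
  have c : Continuous (f k) := (f k).1.continuous
  refine homotopic_of (fun p => f k (Function.update p.2 a
      (Set.projIcc 0 1 zero_le_one ((1 - (p.1 : ℝ)) * u k (p.2 a) + p.1 * (p.2 a))))) ?_ ?_ ?_ ?_
  · exact c.comp (continuous_snd.update a (by simp only [u]; fun_prop))
  · intro y
    simp
    rfl
  · intro y
    simp
  · intro t y hy
    exact loop_coe _ _ (hbd t k y hy)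

end
end HE

namespace HE

/-! ### A combinatorial degree -/

section Degree
variable {n : ℕ}

/-- sign indicator of a coordinate -/
def hs (i : Fin n) (x : Sph n) : ℤ := if 0 ≤ co i x then 1 else 0

/-- contribution of a chain of points -/
def AA (a : ℕ → Sph n) : ℤ :=
  if 1 ≤ ht (a 0) then ∏ i : Fin n, (hs i (a (i + 1)) - hs i (a i)) else 0

/-- index map skipping `k` -/
def dd (k j : ℕ) : ℕ := if j < k then j else j + 1

def Close (x y : Sph n) : Prop :=
  |ht x - ht y| ≤ kap n / 2 ∧ ∀ i, |co i x - co i y| ≤ kap n / 2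

lemma alg_zero (x : Fin n → ℕ → ℤ) :
    ∑ k ∈ Finset.range (n + 2), (-1 : ℤ) ^ k *
      ∏ i : Fin n, (x i (dd k (i + 1)) - x i (dd k i)) = 0 := by
  let T : ℕ → ℤ := fun k => ∏ i : Fin n,
    if (i : ℕ) < k then x i (i + 1) - x i i else x i (i + 2) - x i (i + 1)
  let D : ℕ → ℤ := fun k => ∏ i : Fin n, (x i (dd k (i + 1)) - x i (dd k i))
  have h0 : D 0 = T 0 := by simp [D, T, dd]
  have hl : D (n + 1) = T n := by
    refine Finset.prod_congr rfl fun i _ => ?_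
    have := i.2
    simp [dd, this, Nat.lt_succ_of_lt this]
  have hm : ∀ k < n, D (k + 1) = T (k + 1) + T k := by
    intro k hk
    symm
    refine Finset.prod_add_prod_eq (i := (⟨k, hk⟩ : Fin n)) (Finset.mem_univ _) ?_ ?_ ?_
    · simp [dd]
    · intro j _ hj
      have hj' : (j : ℕ) ≠ k := fun h => hj (Fin.ext h)
      rcases lt_or_gt_of_ne hj' with h | h
      · simp [dd, h, h.trans (Nat.lt_succ_self k)]
      · have e1 : ¬ ((j : ℕ) < k + 1) := by omega
        have e2 : ¬ ((j : ℕ) + 1 < k + 1) := by omega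
        simp only [dd, e1, e2, if_false]
    · intro j _ hj
      have hj' : (j : ℕ) ≠ k := fun h => hj (Fin.ext h)
      rcases lt_or_gt_of_ne hj' with h | h
      · simp [dd, h, h.trans (Nat.lt_succ_self k)]
      · have e1 : ¬ ((j : ℕ) < k + 1) := by omega
        have e2 : ¬ ((j : ℕ) + 1 < k + 1) := by omega
        have e3 : ¬ ((j : ℕ) < k) := by omega
        simp only [dd, e1, e2, e3, if_false]
  have hsum : ∀ m ≤ n, ∑ k ∈ Finset.range (m + 1), (-1 : ℤ) ^ k * D k = (-1) ^ m * T m := by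
    intro m
    induction m with
    | zero => intro _; simp [h0]
    | succ m ih =>
      intro hmn
      rw [Finset.sum_range_succ, ih (by omega), hm m (by omega)]
      ring
  change ∑ k ∈ Finset.range (n + 2), (-1 : ℤ) ^ k * D k = 0
  rw [Finset.sum_range_succ, hsum n le_rfl, hl]
  ring

lemma hs_eq_of_close {x y z : Sph n} {i : Fin n} (h : kap n ≤ |co i x|) (hy : Close x y)
    (hz : Close x z) : hs i y = hs i z := by
  have hk := kap_pos (n := n)
  have h1 := abs_le.1 (hy.2 i)
  have h2 := abs_le.1 (hz.2 i)
  unfold hs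
  rcases le_total 0 (co i x) with h0 | h0
  · rw [abs_of_nonneg h0] at h
    rw [if_pos (by linarith), if_pos (by linarith)]
  · rw [abs_of_nonpos h0] at h
    rw [if_neg (by linarith), if_neg (by linarith)]

lemma AA_alt (a : ℕ → Sph n) (h : ∀ j k, Close (a j) (a k)) :
    ∑ k ∈ Finset.range (n + 2), (-1 : ℤ) ^ k * AA (fun j => a (dd k j)) = 0 := by
  by_cases hc : (1 ≤ ht (a 0)) ↔ (1 ≤ ht (a 1))
  · have e : ∀ k, AA (fun j => a (dd k j)) = if 1 ≤ ht (a 0) then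
        ∏ i : Fin n, (hs i (a (dd k (i + 1))) - hs i (a (dd k i))) else 0 := by
      intro k
      unfold AA
      congr 1
      by_cases hk : 0 < k
      · simp [dd, hk]
      · simp only [dd, hk, if_false, zero_add, hc]
    simp only [e]
    split_ifs
    · exact alg_zero fun i j => hs i (a j)
    · simp
  · have hk := kap_le (n := n)
    have h01 := abs_le.1 (h 0 1).1
    obtain ⟨i, hi⟩ := exists_kap (a 0) (by
      rw [abs_le]
      by_cases h1 : 1 ≤ ht (a 0)
      · have h2 : ¬ 1 ≤ ht (a 1) := fun h2 => hc ⟨fun _ => h2, fun _ => h1⟩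
        constructor <;> linarith
      · have h2 : 1 ≤ ht (a 1) := by by_contra h2; exact hc ⟨fun h => absurd h h1, fun h => absurd h h2⟩
        constructor <;> linarith)
    refine Finset.sum_eq_zero fun k _ => ?_
    have : AA (fun j => a (dd k j)) = 0 := by
      unfold AA
      split_ifs
      · refine Finset.prod_eq_zero (Finset.mem_univ i) ?_
        rw [hs_eq_of_close hi (h 0 _) (h 0 _), sub_self]
      · rfl
    rw [this, mul_zero]

open Equiv in
/-- vertices of the simplex of a permutation -/
def vert (π : Perm (Fin (n + 1))) (j : ℕ) : Fin (n + 1) → ℤ :=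
  fun c => if (π.symm c : ℕ) < j then 1 else 0

open Equiv in
def vert' (π : Perm (Fin (n + 1))) (j : ℕ) : Fin (n + 1) → ℤ :=
  fun c => if 1 ≤ (π.symm c : ℕ) ∧ (π.symm c : ℕ) ≤ j then 1 else 0

lemma vert_range (π : Equiv.Perm (Fin (n + 1))) (j : ℕ) (c) : vert π j c = 0 ∨ vert π j c = 1 := by
  unfold vert; split_ifs <;> simp

/-- adjacent lattice points have close images -/
def LClose {m : ℕ} (F : (Fin m → ℤ) → Sph n) : Prop :=
  ∀ v v', (∀ c, |v c - v' c| ≤ 1) → Close (F v) (F v')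

lemma vert_close {F : (Fin (n + 1) → ℤ) → Sph n} (hF : LClose F) (v : Fin (n + 1) → ℤ)
    (π : Equiv.Perm (Fin (n + 1))) (j k : ℕ) : Close (F (v + vert π j)) (F (v + vert π k)) := by
  apply hF
  intro c
  rcases vert_range π j c with h | h <;> rcases vert_range π k c with h' | h' <;>
    simp [h, h']

lemma AA_congr {a b : ℕ → Sph n} (h : ∀ j ≤ n, a j = b j) : AA a = AA b := by
  unfold AA
  rw [h 0 (Nat.zero_le _)]
  congr 1
  refine Finset.prod_congr rfl fun i _ => ?_
  rw [h i i.2.le, h (i + 1) i.2]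

def BB (F : (Fin (n + 1) → ℤ) → Sph n) (π : Equiv.Perm (Fin (n + 1))) (v : Fin (n + 1) → ℤ) : ℤ :=
  AA (fun j => F (v + vert' π j))

lemma inner_cancel (F : (Fin (n + 1) → ℤ) → Sph n) (v : Fin (n + 1) → ℤ) (k : ℕ) (hk : k < n) :
    ∑ π : Equiv.Perm (Fin (n + 1)), (Equiv.Perm.sign π : ℤ) *
      AA (fun j => F (v + vert π (dd (k + 1) j))) = 0 := by
  let s : Equiv.Perm (Fin (n + 1)) := Equiv.swap ⟨k, by omega⟩ ⟨k + 1, by omega⟩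
  have hs : Equiv.Perm.sign s = -1 := Equiv.Perm.sign_swap (by simp [Fin.ext_iff])
  have hv : ∀ π : Equiv.Perm (Fin (n + 1)), ∀ j, j ≠ k + 1 → vert (π * s) j = vert π j := by
    intro π j hj
    funext c
    unfold vert
    have e : (π * s).symm c = s (π.symm c) := by
      rw [Equiv.symm_apply_eq]
      simp [s]
    rw [e]
    congr 1
    by_cases h1 : π.symm c = ⟨k, by omega⟩
    · rw [h1]; simp only [s, Equiv.swap_apply_left]; apply propext; omega
    · by_cases h2 : π.symm c = ⟨k + 1, by omega⟩
      · rw [h2]; simp only [s, Equiv.swap_apply_right]; apply propext; omega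
      · simp only [s]; rw [Equiv.swap_apply_of_ne_of_ne h1 h2]
  have hd : ∀ j, dd (k + 1) j ≠ k + 1 := by intro j; unfold dd; split_ifs <;> omega
  have key : ∑ π : Equiv.Perm (Fin (n + 1)), (Equiv.Perm.sign π : ℤ) *
      AA (fun j => F (v + vert π (dd (k + 1) j))) = - ∑ π : Equiv.Perm (Fin (n + 1)),
      (Equiv.Perm.sign π : ℤ) * AA (fun j => F (v + vert π (dd (k + 1) j))) := by
    conv_lhs => rw [← Equiv.sum_comp (Equiv.mulRight s)]
    rw [← Finset.sum_neg_distrib]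
    refine Finset.sum_congr rfl fun π _ => ?_
    simp only [Equiv.coe_mulRight, Equiv.Perm.sign_mul, hs, hv π _ (hd _)]
    simp
  omega

lemma local_zero {F : (Fin (n + 1) → ℤ) → Sph n} (hF : LClose F) (v : Fin (n + 1) → ℤ) :
    ∑ π : Equiv.Perm (Fin (n + 1)), (Equiv.Perm.sign π : ℤ) *
      (BB F π (v + Pi.single (π 0) 1) - BB F π v) = 0 := by
  have h1 : ∑ k ∈ Finset.range (n + 2), (-1 : ℤ) ^ k * ∑ π : Equiv.Perm (Fin (n + 1)),
      (Equiv.Perm.sign π : ℤ) * AA (fun j => F (v + vert π (dd k j))) = 0 := by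
    simp only [Finset.mul_sum]
    rw [Finset.sum_comm]
    refine Finset.sum_eq_zero fun π _ => ?_
    have := AA_alt (fun j => F (v + vert π j)) (fun j k => vert_close hF v π j k)
    calc _ = ∑ k ∈ Finset.range (n + 2), (Equiv.Perm.sign π : ℤ) * ((-1 : ℤ) ^ k *
        AA (fun j => F (v + vert π (dd k j)))) := Finset.sum_congr rfl fun k _ => by ring
      _ = 0 := by rw [← Finset.mul_sum, this, mul_zero]
  rw [Finset.sum_range_succ, Finset.sum_range_succ', Finset.sum_eq_zero (fun k hk => by
    rw [inner_cancel F v k (Finset.mem_range.1 hk), mul_zero])] at h1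
  have e0 : ∀ π : Equiv.Perm (Fin (n + 1)), AA (fun j => F (v + vert π (dd 0 j))) =
      BB F π (v + Pi.single (π 0) 1) := by
    intro π
    unfold BB
    congr 1
    funext j
    congr 1
    funext c
    simp only [Pi.add_apply, dd, Nat.not_lt_zero, if_false, vert, vert']
    by_cases hc : c = π 0
    · subst hc; simp
    · have hne : (π.symm c : ℕ) ≠ 0 := by
        intro h
        apply hc
        rw [← Equiv.symm_apply_eq]
        exact Fin.ext h
      rw [Pi.single_eq_of_ne hc, add_zero]
      congr 2
      apply propext
      omega
  have el : ∑ π : Equiv.Perm (Fin (n + 1)), (Equiv.Perm.sign π : ℤ) *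
      AA (fun j => F (v + vert π (dd (n + 1) j))) = (-1) ^ n * ∑ π : Equiv.Perm (Fin (n + 1)),
      (Equiv.Perm.sign π : ℤ) * BB F π v := by
    rw [← Equiv.sum_comp (Equiv.mulRight (finRotate (n + 1))), Finset.mul_sum]
    refine Finset.sum_congr rfl fun π _ => ?_
    have e : AA (fun j => F (v + vert (π * finRotate (n + 1)) (dd (n + 1) j))) = BB F π v := by
      unfold BB
      refine AA_congr fun j hj => ?_
      congr 2
      funext c
      simp only [dd, if_pos (Nat.lt_succ_of_le hj), vert, vert']
      congr 1
      obtain ⟨d, hd⟩ : ∃ d, c = π (finRotate (n + 1) d) :=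
        ⟨(finRotate (n + 1)).symm (π.symm c), by simp⟩
      have e1 : (π * finRotate (n + 1)).symm c = d := by
        rw [Equiv.symm_apply_eq, hd]; rfl
      have e2 : π.symm c = finRotate (n + 1) d := by rw [hd]; simp
      rw [e1, e2]
      apply propext
      by_cases hdl : d = Fin.last n
      · rw [hdl, finRotate_last]; simp; omega
      · have : (d : ℕ) < n := by
          have := d.2
          have : (d : ℕ) ≠ n := fun h => hdl (Fin.ext h)
          omega
        rw [coe_finRotate_of_ne_last hdl]
        omega
    simp only [Equiv.coe_mulRight, Equiv.Perm.sign_mul, sign_finRotate, e]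
    push_cast
    ring_nf
  rw [el] at h1
  simp only [e0] at h1
  simp only [mul_sub, Finset.sum_sub_distrib]
  have e3 : (-1 : ℤ) ^ (n + 1) * ((-1) ^ n * ∑ π : Equiv.Perm (Fin (n + 1)),
      (Equiv.Perm.sign π : ℤ) * BB F π v) = - ∑ π : Equiv.Perm (Fin (n + 1)),
      (Equiv.Perm.sign π : ℤ) * BB F π v := by
    rw [← mul_assoc, ← pow_add]
    rw [show n + 1 + n = 2 * n + 1 by ring, pow_succ, pow_mul]
    simp
  rw [e3] at h1
  simpa [sub_eq_add_neg] using h1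

end Degree
end HE

namespace HE

section Degree2
variable {n : ℕ}

/-- permutations fixing the time axis -/
def PP (n : ℕ) : Finset (Equiv.Perm (Fin (n + 1))) := Finset.univ.filter fun π => π 0 = 0

def vertS (π : Equiv.Perm (Fin (n + 1))) (j : ℕ) : Fin n → ℤ := fun b => vert' π j b.succ

/-- the local contribution -/
def term (G : (Fin n → ℤ) → Sph n) (π : Equiv.Perm (Fin (n + 1))) (w : Fin n → ℤ) : ℤ :=
  AA (fun j => G (w + vertS π j))

/-- the combinatorial degree -/
def deg (G : (Fin n → ℤ) → Sph n) : ℤ :=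
  ∑ π ∈ PP n, (Equiv.Perm.sign π : ℤ) * ∑ᶠ w, term G π w

lemma vertS_zero (π : Equiv.Perm (Fin (n + 1))) : vertS π 0 = 0 := by
  funext b
  simp only [vertS, vert', Pi.zero_apply]
  rw [if_neg (by omega)]

lemma vertS_range (π : Equiv.Perm (Fin (n + 1))) (j : ℕ) (c) :
    vertS π j c = 0 ∨ vertS π j c = 1 := by
  unfold vertS vert'; split_ifs <;> simp

lemma term_ne {G : (Fin n → ℤ) → Sph n} {π : Equiv.Perm (Fin (n + 1))} {w : Fin n → ℤ}
    (h : term G π w ≠ 0) : 1 ≤ ht (G w) := by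
  by_contra hc
  apply h
  refine if_neg ?_
  change ¬ 1 ≤ ht (G (w + vertS π 0))
  rwa [vertS_zero, add_zero]

lemma term_zero {G : (Fin n → ℤ) → Sph n} {π : Equiv.Perm (Fin (n + 1))} {w : Fin n → ℤ}
    (h : G w = bp) : term G π w = 0 := by
  by_contra hc
  have := term_ne hc
  rw [h, ht_bp] at this
  norm_num at this

def FS (G : (Fin n → ℤ) → Sph n) : Prop := {w | G w ≠ bp}.Finite

lemma term_fin {G : (Fin n → ℤ) → Sph n} (h : FS G) (π : Equiv.Perm (Fin (n + 1))) :
    (Function.support (term G π)).Finite :=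
  h.subset fun _ hw hb => hw (term_zero hb)

lemma BB_cons (F : (Fin (n + 1) → ℤ) → Sph n) {π : Equiv.Perm (Fin (n + 1))} (hπ : π 0 = 0)
    (t : ℤ) (w : Fin n → ℤ) :
    BB F π (Fin.cons t w) = term (fun w => F (Fin.cons t w)) π w := by
  unfold BB term
  congr 1
  funext j
  congr 1
  funext c
  refine Fin.cases ?_ (fun b => ?_) c
  · have : π.symm 0 = 0 := by rw [Equiv.symm_apply_eq, hπ]
    simp [vert', this]
  · simp [vertS]

lemma BB_zero {F : (Fin (n + 1) → ℤ) → Sph n} {π : Equiv.Perm (Fin (n + 1))}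
    {v : Fin (n + 1) → ℤ} (h : F v = bp) : BB F π v = 0 := by
  have : vert' π 0 = 0 := by
    funext b
    simp only [vert', Pi.zero_apply]
    rw [if_neg (by omega)]
  refine if_neg ?_
  change ¬ 1 ≤ ht (F (v + vert' π 0))
  rw [this, add_zero, h, ht_bp]
  norm_num

lemma deg_step {F : (Fin (n + 1) → ℤ) → Sph n} (hF : LClose F)
    (hs : ∀ t : ℤ, FS fun w => F (Fin.cons t w)) (t : ℤ) :
    deg (fun w => F (Fin.cons (t + 1) w)) = deg (fun w => F (Fin.cons t w)) := by
  have hfin : ∀ (t : ℤ) π, (Function.support fun w => BB F π (Fin.cons t w)).Finite :=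
    fun t π => (hs t).subset fun w hw hb => hw (BB_zero hb)
  have hsh : ∀ (c : Fin (n + 1)) (w : Fin n → ℤ), (Fin.cons t w : Fin (n + 1) → ℤ) + Pi.single c 1 =
      if hc : c = 0 then Fin.cons (t + 1) w else Fin.cons t (w + Pi.single (c.pred hc) 1) := by
    intro c w
    split_ifs with hc
    · subst hc
      funext d
      refine Fin.cases ?_ (fun b => ?_) d <;> simp
    · obtain ⟨b, rfl⟩ := Fin.exists_succ_eq.2 hc
      funext d
      refine Fin.cases ?_ (fun b' => ?_) d
      · simp [(Fin.succ_ne_zero b).symm]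
      · simp [Pi.single_apply]
  have hfin' : ∀ π : Equiv.Perm (Fin (n + 1)), (Function.support fun w : Fin n → ℤ =>
      BB F π ((Fin.cons t w : Fin (n + 1) → ℤ) + Pi.single (π 0) 1)).Finite := by
    intro π
    simp only [hsh]
    split_ifs with hc
    · exact hfin _ _
    · have := (hfin t π).preimage
        ((Equiv.addRight (Pi.single ((π 0).pred hc) 1 : Fin n → ℤ)).injective.injOn)
      exact this
  have h1 : ∀ π : Equiv.Perm (Fin (n + 1)),
      ∑ᶠ w : Fin n → ℤ, (BB F π ((Fin.cons t w : Fin (n + 1) → ℤ) + Pi.single (π 0) 1) -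
        BB F π (Fin.cons t w)) = if π 0 = 0 then
        ∑ᶠ w, term (fun w => F (Fin.cons (t + 1) w)) π w -
          ∑ᶠ w, term (fun w => F (Fin.cons t w)) π w else 0 := by
    intro π
    rw [finsum_sub_distrib (hfin' π) (hfin t π)]
    split_ifs with hc
    · simp only [← BB_cons F hc]
      simp only [hsh, dif_pos hc]
    · simp only [hsh, dif_neg hc]
      rw [sub_eq_zero]
      exact finsum_comp_equiv (Equiv.addRight (Pi.single ((π 0).pred hc) 1 : Fin n → ℤ))
        (f := fun w => BB F π (Fin.cons t w))
  have h2 : ∑ᶠ w : Fin n → ℤ, ∑ π : Equiv.Perm (Fin (n + 1)), (Equiv.Perm.sign π : ℤ) *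
      (BB F π ((Fin.cons t w : Fin (n + 1) → ℤ) + Pi.single (π 0) 1) -
        BB F π (Fin.cons t w)) = 0 := by
    simp only [local_zero hF]
    exact finsum_zero
  have hfd : ∀ π : Equiv.Perm (Fin (n + 1)), (Function.support fun w : Fin n → ℤ =>
      (BB F π ((Fin.cons t w : Fin (n + 1) → ℤ) + Pi.single (π 0) 1) -
        BB F π (Fin.cons t w))).Finite := fun π =>
    ((hfin' π).union (hfin t π)).subset (Function.support_sub _ _)
  rw [finsum_sum_comm] at h2
  · simp only [← mul_finsum, h1] at h2
    simp only [mul_ite, mul_zero] at h2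
    rw [← Finset.sum_filter] at h2
    simp only [mul_sub, Finset.sum_sub_distrib] at h2
    exact sub_eq_zero.1 h2
  · intro π _
    exact (hfd π).subset (Function.support_mul_subset_right _ _)

lemma deg_const {F : (Fin (n + 1) → ℤ) → Sph n} (hF : LClose F)
    (hs : ∀ t : ℤ, FS fun w => F (Fin.cons t w)) (t : ℕ) :
    deg (fun w => F (Fin.cons (t : ℤ) w)) = deg (fun w => F (Fin.cons 0 w)) := by
  induction t with
  | zero => rfl
  | succ t ih => rw [← ih]; push_cast; exact deg_step hF hs t

/-! Grids of loops -/

def gclip (N : Fin n → ℕ) (w : Fin n → ℤ) : Fin n → I :=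
  fun a => Set.projIcc 0 1 zero_le_one ((w a : ℝ) / N a)

def grid (N : Fin n → ℕ) (f : Ω^ (Fin n) (Sph n) bp) (w : Fin n → ℤ) : Sph n := f (gclip N w)

lemma gclip_bd {N : Fin n → ℕ} (hN : ∀ a, 0 < N a) {w : Fin n → ℤ} {a : Fin n}
    (h : w a ≤ 0 ∨ (N a : ℤ) ≤ w a) : gclip N w ∈ Cube.boundary (Fin n) := by
  have hp : (0 : ℝ) < N a := by exact_mod_cast hN a
  refine ⟨a, h.imp (fun h => ?_) (fun h => ?_)⟩
  · apply Set.projIcc_of_le_left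
    have : (w a : ℝ) ≤ 0 := by exact_mod_cast h
    exact div_nonpos_of_nonpos_of_nonneg this hp.le
  · apply Set.projIcc_of_right_le
    have : (N a : ℝ) ≤ w a := by exact_mod_cast h
    rwa [le_div_iff₀ hp, one_mul]

lemma gclip_fin {N : Fin n → ℕ} (hN : ∀ a, 0 < N a) :
    {w | gclip N w ∉ Cube.boundary (Fin n)}.Finite := by
  refine (Set.finite_Icc (0 : Fin n → ℤ) (fun a => (N a : ℤ))).subset fun w hw => ?_
  constructor <;> intro a <;> by_contra hc <;> apply hw <;> apply gclip_bd hN (a := a)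
  · exact Or.inl (le_of_lt (not_le.1 hc))
  · exact Or.inr (le_of_lt (not_le.1 hc))

lemma grid_FS {N : Fin n → ℕ} (hN : ∀ a, 0 < N a) (f : Ω^ (Fin n) (Sph n) bp) : FS (grid N f) :=
  (gclip_fin hN).subset fun _ hw hb => hw (loop_coe f _ hb)

lemma proj_close {N : ℕ} {M : ℕ} (hM : 0 < M) (hN : M ≤ N) {x y : ℤ} (h : |x - y| ≤ 1) :
    |((Set.projIcc (0 : ℝ) 1 zero_le_one ((x : ℝ) / N) : I) : ℝ) -
      (Set.projIcc (0 : ℝ) 1 zero_le_one ((y : ℝ) / N) : I)| ≤ 1 / M := by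
  have hM' : (0 : ℝ) < M := by exact_mod_cast hM
  have hN' : (M : ℝ) ≤ N := by exact_mod_cast hN
  have h1 : |(x : ℝ) / N - y / N| ≤ 1 / M := by
    rw [← sub_div, abs_div, abs_of_pos (hM'.trans_le hN')]
    have : |(x : ℝ) - y| ≤ 1 := by exact_mod_cast h
    gcongr
  refine le_trans ?_ h1
  exact Set.abs_projIcc_sub_projIcc zero_le_one

lemma exists_mesh {H : I × (Fin n → I) → Sph n} (hc : Continuous H) :
    ∃ M : ℕ, 0 < M ∧ ∀ p p' : I × (Fin n → I), |(p.1 : ℝ) - p'.1| ≤ 1 / M →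
      (∀ a, |(p.2 a : ℝ) - p'.2 a| ≤ 1 / M) → Close (H p) (H p') := by
  have hk := kap_pos (n := n)
  have hu : UniformContinuous fun x => ((H x).1 : ℝ × (Fin n → ℝ)) :=
    CompactSpace.uniformContinuous_of_continuous (continuous_subtype_val.comp hc)
  obtain ⟨δ, hδ, h⟩ := Metric.uniformContinuous_iff.1 hu (kap n / 2) (by linarith)
  obtain ⟨M, hM⟩ := exists_nat_gt (1 / δ)
  have hM' : (0 : ℝ) < M := lt_of_le_of_lt (by positivity) hM
  have hMd : (1 : ℝ) / M < δ := by
    rw [div_lt_iff₀ hδ] at hM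
    rw [div_lt_iff₀ hM']; linarith
  refine ⟨M, by exact_mod_cast hM', fun p p' h1 h2 => ?_⟩
  have hd : dist p p' < δ := by
    rw [Prod.dist_eq, max_lt_iff, dist_pi_lt_iff hδ]
    exact ⟨lt_of_le_of_lt h1 hMd, fun a => lt_of_le_of_lt (h2 a) hMd⟩
  have h3 := h hd
  rw [Prod.dist_eq, max_lt_iff] at h3
  refine ⟨h3.1.le, fun i => ?_⟩
  exact ((dist_le_pi_dist _ _ i).trans_lt h3.2).le

def evdeg (f : Ω^ (Fin n) (Sph n) bp) (K : ℤ) : Prop :=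
  ∃ N0 : ℕ, 0 < N0 ∧ ∀ N : Fin n → ℕ, (∀ a, N0 ∣ N a ∧ 0 < N a) → deg (grid N f) = K

lemma evdeg_homotopic {f g : Ω^ (Fin n) (Sph n) bp} (h : GenLoop.Homotopic f g) {K : ℤ}
    (hf : evdeg f K) : evdeg g K := by
  obtain ⟨N0, hN0, hd⟩ := hf
  obtain ⟨H, hc, h0, h1, hb⟩ := exists_of_homotopic h
  obtain ⟨M, hM, hcl⟩ := exists_mesh hc
  refine ⟨N0 * M, Nat.mul_pos hN0 hM, fun N hN => ?_⟩
  rw [← hd N fun a => ⟨(Dvd.intro _ rfl).trans (hN a).1, (hN a).2⟩]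
  have hNM : ∀ a, M ≤ N a := fun a =>
    Nat.le_of_dvd (hN a).2 ((Dvd.intro_left _ rfl).trans (hN a).1)
  let F : (Fin (n + 1) → ℤ) → Sph n := fun v =>
    H (Set.projIcc 0 1 zero_le_one ((v 0 : ℝ) / M), gclip N (Fin.tail v))
  have hF : LClose F := by
    intro v v' hv
    refine hcl _ _ (proj_close hM le_rfl (hv 0)) fun a => ?_
    exact proj_close hM (hNM a) (hv a.succ)
  have hs : ∀ t : ℤ, FS fun w => F (Fin.cons t w) := by
    intro t
    refine (gclip_fin fun a => (hN a).2).subset fun w hw hbd => hw ?_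
    change H (_, gclip N w) = bp
    exact hb _ _ hbd
  have hM' : (M : ℝ) ≠ 0 := by exact_mod_cast hM.ne'
  have e0 : (fun w => F (Fin.cons 0 w)) = grid N f := by
    funext w
    change H (Set.projIcc 0 1 zero_le_one (((0 : ℤ) : ℝ) / M), gclip N w) = _
    rw [Set.projIcc_of_le_left _ (by simp)]
    exact h0 _
  have e1 : (fun w => F (Fin.cons (M : ℤ) w)) = grid N g := by
    funext w
    change H (Set.projIcc 0 1 zero_le_one (((M : ℤ) : ℝ) / M), gclip N w) = _
    rw [Set.projIcc_of_right_le _ (by simp [hM'])]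
    exact h1 _
  rw [← e0, ← e1]
  exact deg_const hF hs M

lemma evdeg_const : evdeg (GenLoop.const : Ω^ (Fin n) (Sph n) bp) 0 := by
  refine ⟨1, one_pos, fun N hN => ?_⟩
  unfold deg
  refine Finset.sum_eq_zero fun π _ => ?_
  have : ∀ w, term (grid N GenLoop.const) π w = 0 := fun w => term_zero rfl
  simp [this]

lemma deg_add {G G1 G2 : (Fin n → ℤ) → Sph n} (h1 : FS G1) (h2 : FS G2) (s : Fin n → ℤ)
    (h : ∀ π w, term G π w = term G1 π w + term G2 π (w - s)) : deg G = deg G1 + deg G2 := by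
  unfold deg
  rw [← Finset.sum_add_distrib]
  refine Finset.sum_congr rfl fun π _ => ?_
  rw [← mul_add]
  congr 1
  rw [finsum_congr (h π), finsum_add_distrib (term_fin h1 π)]
  · congr 1
    exact finsum_comp_equiv (Equiv.subRight s) (f := term G2 π)
  · exact (term_fin h2 π).preimage (Equiv.subRight s).injective.injOn

lemma projIcc_two_mul_left {x : ℝ} (h : x ≤ 1 / 2) :
    Set.projIcc (0 : ℝ) 1 zero_le_one (2 * ((Set.projIcc (0 : ℝ) 1 zero_le_one x : I) : ℝ)) =
      Set.projIcc 0 1 zero_le_one (2 * x) := by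
  rcases le_total x 0 with h0 | h0
  · rw [Set.projIcc_of_le_left _ h0, Set.projIcc_of_le_left _ (by simp),
      Set.projIcc_of_le_left _ (by linarith)]
  · rw [Set.projIcc_of_mem _ (⟨h0, by linarith⟩ : x ∈ Set.Icc (0 : ℝ) 1)]

lemma projIcc_two_mul_right {x : ℝ} (h : 1 / 2 ≤ x) :
    Set.projIcc (0 : ℝ) 1 zero_le_one (2 * ((Set.projIcc (0 : ℝ) 1 zero_le_one x : I) : ℝ) - 1) =
      Set.projIcc 0 1 zero_le_one (2 * x - 1) := by
  rcases le_total x 1 with h0 | h0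
  · rw [Set.projIcc_of_mem _ (⟨by linarith, h0⟩ : x ∈ Set.Icc (0 : ℝ) 1)]
  · rw [Set.projIcc_of_right_le _ h0, Set.projIcc_of_right_le _ (by norm_num),
      Set.projIcc_of_right_le _ (by linarith)]

lemma evdeg_trans (a : Fin n) {f g : Ω^ (Fin n) (Sph n) bp} {K L : ℤ}
    (hf : evdeg f K) (hg : evdeg g L) : evdeg (GenLoop.transAt a f g) (K + L) := by
  obtain ⟨Nf, hNf, hf⟩ := hf
  obtain ⟨Ng, hNg, hg⟩ := hg
  refine ⟨2 * (Nf * Ng), by positivity, fun N hN => ?_⟩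
  obtain ⟨P, hP⟩ := (hN a).1
  set R := Nf * Ng * P with hR
  have hNa : N a = 2 * R := by rw [hP, hR]; ring
  have hR0 : 0 < R := by have := (hN a).2; omega
  have hR' : (0 : ℝ) < R := by exact_mod_cast hR0
  let N' : Fin n → ℕ := Function.update N a R
  have hN'a : N' a = R := Function.update_self ..
  have hN'b : ∀ b, b ≠ a → N' b = N b := fun b hb => Function.update_of_ne hb ..
  have hdvd : ∀ b, Nf * Ng ∣ N' b ∧ 0 < N' b := by
    intro b
    by_cases hb : b = a
    · subst hb; rw [hN'a]; exact ⟨Dvd.intro _ rfl, hR0⟩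
    · rw [hN'b b hb]; exact ⟨(Dvd.intro_left _ rfl).trans (hN b).1, (hN b).2⟩
  have hpos : ∀ b, 0 < N' b := fun b => (hdvd b).2
  rw [← hf N' fun b => ⟨(Dvd.intro _ rfl).trans (hdvd b).1, (hdvd b).2⟩,
    ← hg N' fun b => ⟨(Dvd.intro_left _ rfl).trans (hdvd b).1, (hdvd b).2⟩]
  have hclip : ∀ w : Fin n → ℤ, (gclip N w a : ℝ) = (Set.projIcc (0 : ℝ) 1 zero_le_one
      ((w a : ℝ) / (2 * R)) : I) := by
    intro w; simp only [gclip, hNa]; push_cast; rfl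
  have gl : ∀ w : Fin n → ℤ, w a ≤ R → grid N (GenLoop.transAt a f g) w = grid N' f w := by
    intro w hw
    have hw' : (w a : ℝ) ≤ R := by exact_mod_cast hw
    have hx : (w a : ℝ) / (2 * R) ≤ 1 / 2 := by
      rw [div_le_iff₀ (by positivity)]; linarith
    unfold grid
    rw [transAt_apply, if_pos, hclip, projIcc_two_mul_left hx]
    · congr 1
      funext b
      by_cases hb : b = a
      · subst hb
        rw [Function.update_self]
        simp only [gclip, hN'a]
        congr 1
        field_simp
      · rw [Function.update_of_ne hb]
        simp only [gclip, hN'b b hb]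
    · rw [hclip, Set.coe_projIcc]
      exact max_le (by norm_num) ((min_le_right _ _).trans hx)
  have gr : ∀ w : Fin n → ℤ, R < w a → grid N (GenLoop.transAt a f g) w =
      grid N' g (w - Pi.single a (R : ℤ)) := by
    intro w hw
    have hw' : (R : ℝ) < w a := by exact_mod_cast hw
    have hx : 1 / 2 < (w a : ℝ) / (2 * R) := by
      rw [lt_div_iff₀ (by positivity)]; linarith
    unfold grid
    rw [transAt_apply, if_neg, hclip, projIcc_two_mul_right hx.le]
    · congr 1
      funext b
      by_cases hb : b = a
      · subst hb
        rw [Function.update_self]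
        simp only [gclip, hN'a, Pi.sub_apply, Pi.single_eq_same]
        congr 1
        push_cast
        field_simp
      · rw [Function.update_of_ne hb]
        simp only [gclip, hN'b b hb, Pi.sub_apply, Pi.single_eq_of_ne hb, sub_zero]
    · rw [hclip, Set.coe_projIcc, not_le]
      exact lt_max_of_lt_right (lt_min (by norm_num) hx)
  have bf : ∀ w : Fin n → ℤ, R ≤ w a → grid N' f w = bp := fun w hw =>
    loop_coe f _ (gclip_bd hpos (a := a) (Or.inr (by rw [hN'a]; exact hw)))
  have bg : ∀ w : Fin n → ℤ, w a ≤ R → grid N' g (w - Pi.single a (R : ℤ)) = bp := fun w hw =>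
    loop_coe g _ (gclip_bd hpos (a := a) (Or.inl (by simpa using hw)))
  have gr' : ∀ w : Fin n → ℤ, R ≤ w a → grid N (GenLoop.transAt a f g) w =
      grid N' g (w - Pi.single a (R : ℤ)) := by
    intro w hw
    rcases hw.lt_or_eq with h | h
    · exact gr w h
    · rw [gl w h.ge, bf w hw, bg w h.ge]
  refine deg_add (grid_FS hpos f) (grid_FS hpos g) (Pi.single a (R : ℤ)) fun π w => ?_
  rcases lt_or_ge (w a) (R : ℤ) with h | h
  · rw [term_zero (G := grid N' g) (bg w h.le), add_zero]
    unfold term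
    congr 1
    funext j
    apply gl
    rcases vertS_range π j a with e | e <;> simp only [Pi.add_apply, e] <;> omega
  · rw [term_zero (G := grid N' f) (bf w h), zero_add]
    unfold term
    congr 1
    funext j
    rw [gr', sub_add_eq_add_sub]
    rcases vertS_range π j a with e | e <;> simp only [Pi.add_apply, e] <;> omega

end Degree2
end HE

namespace HE

section Degree3
variable {n : ℕ}

lemma hs_qmap {y : Fin n → I} (h : 0 < ht (qmap y)) (i : Fin n) :
    hs i (qmap y) = if 1 / 2 ≤ (y i : ℝ) then 1 else 0 := by
  have hd : 0 < qD y := by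
    refine lt_of_le_of_ne (qD_nonneg y) fun h0 => ?_
    rw [ht_qmap, ← h0] at h
    simp at h
  have := qden_pos y
  unfold hs
  split_ifs with h1 h2 h2
  · rfl
  · exfalso
    rw [co_qmap] at h1
    have h3 : qw y i < 0 := by unfold qw; linarith
    have h4 : 2 / qden y * (qD y * qw y i) < 0 :=
      mul_neg_of_pos_of_neg (by positivity) (mul_neg_of_pos_of_neg hd h3)
    linarith
  · exact absurd (co_qmap_nonneg h2) h1
  · rfl

lemma half_le_gclip {N L : ℕ} (hN : N = 2 * L) (hL : 0 < L) (w : ℤ) :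
    1 / 2 ≤ ((Set.projIcc (0 : ℝ) 1 zero_le_one ((w : ℝ) / N) : I) : ℝ) ↔ (L : ℤ) ≤ w := by
  have hL' : (0 : ℝ) < L := by exact_mod_cast hL
  rw [Set.coe_projIcc, le_max_iff, le_min_iff, hN]
  push_cast
  rw [le_div_iff₀ (by positivity)]
  rw [show ((L : ℤ) ≤ w) ↔ (L : ℝ) ≤ w by exact_mod_cast Iff.rfl]
  constructor
  · rintro (h | h)
    · norm_num at h
    · linarith [h.2]
  · intro h
    exact Or.inr ⟨by norm_num, by linarith⟩

lemma ht_center : ht (qmap (fun _ : Fin n => (⟨1 / 2, by norm_num, by norm_num⟩ : I))) = 2 := by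
  rw [ht_qmap]
  have e : ∀ i, qw (fun _ : Fin n => (⟨1 / 2, by norm_num, by norm_num⟩ : I)) i = 0 := by
    intro i; unfold qw; norm_num
  have hp := qden_pos (fun _ : Fin n => (⟨1 / 2, by norm_num, by norm_num⟩ : I))
  have e2 : qden (fun _ : Fin n => (⟨1 / 2, by norm_num, by norm_num⟩ : I)) =
      qD (fun _ : Fin n => (⟨1 / 2, by norm_num, by norm_num⟩ : I)) ^ 2 := by
    unfold qden
    rw [Finset.sum_eq_zero (fun i _ => by rw [e i]; norm_num), add_zero]
  rw [← e2]
  field_simp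

lemma evdeg_q : evdeg (qloop n) 1 := by
  obtain ⟨M, hM, hcl⟩ := exists_mesh (H := fun p : I × (Fin n → I) => qmap p.2) (by fun_prop)
  refine ⟨2 * M, by omega, fun N hN => ?_⟩
  have hNM : ∀ a, M ≤ N a := fun a =>
    Nat.le_of_dvd (hN a).2 ((Dvd.intro_left _ rfl).trans (hN a).1)
  choose L' hL' using fun a => (hN a).1
  let L : Fin n → ℕ := fun a => M * L' a
  have hL : ∀ a, N a = 2 * L a := fun a => by rw [hL' a]; simp only [L]; ring
  have hL0 : ∀ a, 0 < L a := fun a => by have := (hN a).2; have := hL a; omega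
  have hk := kap_le (n := n)
  have hgc : ∀ w w' : Fin n → ℤ, (∀ c, |w c - w' c| ≤ 1) →
      Close (grid N (qloop n) w) (grid N (qloop n) w') := fun w w' h =>
    hcl (0, gclip N w) (0, gclip N w') (by simp) fun a => proj_close hM (hNM a) (h a)
  have hhs : ∀ (w : Fin n → ℤ) i, 0 < ht (grid N (qloop n) w) →
      hs i (grid N (qloop n) w) = if (L i : ℤ) ≤ w i then 1 else 0 := by
    intro w i h
    have := hs_qmap (y := gclip N w) h i
    change hs i (qmap (gclip N w)) = _
    rw [this]
    simp only [gclip, half_le_gclip (hL i) (hL0 i)]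
  have hterm : ∀ (π : Equiv.Perm (Fin (n + 1))), π 0 = 0 → ∀ w : Fin n → ℤ,
      1 ≤ ht (grid N (qloop n) w) → term (grid N (qloop n)) π w = ∏ i : Fin n,
        if (π.symm i.succ : ℕ) = i + 1 ∧ w i = L i - 1 then 1 else 0 := by
    intro π hπ w hw
    unfold term AA
    rw [if_pos (by simpa [vertS_zero] using hw)]
    have hpos : ∀ j, 0 < ht (grid N (qloop n) (w + vertS π j)) := by
      intro j
      have := (hgc w (w + vertS π j) (by
        intro c
        rcases vertS_range π j c with h | h <;> simp [h])).1
      have := abs_le.1 this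
      linarith
    refine Finset.prod_congr rfl fun i _ => ?_
    rw [hhs _ _ (hpos _), hhs _ _ (hpos _)]
    simp only [Pi.add_apply, vertS, vert']
    have hne : (π.symm i.succ : ℕ) ≠ 0 := by
      intro h
      have h' : π.symm i.succ = 0 := Fin.ext h
      rw [Equiv.symm_apply_eq, hπ] at h'
      exact Fin.succ_ne_zero _ h'
    split_ifs <;> omega
  unfold deg
  rw [Finset.sum_eq_single (1 : Equiv.Perm (Fin (n + 1)))]
  · let w0 : Fin n → ℤ := fun i => L i - 1
    have hw0 : 1 ≤ ht (grid N (qloop n) w0) := by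
      have h1 := (hgc w0 (fun i => L i) (by intro c; simp [w0])).1
      have h2 : grid N (qloop n) (fun i => L i) =
          qmap (fun _ : Fin n => (⟨1 / 2, by norm_num, by norm_num⟩ : I)) := by
        change qmap _ = _
        congr 1
        funext a
        have hLa : (0 : ℝ) < L a := by exact_mod_cast hL0 a
        have e : (((L a : ℤ) : ℝ) / (N a : ℝ)) = 1 / 2 := by
          rw [hL a]; push_cast; field_simp
        unfold gclip
        rw [e, Set.projIcc_of_mem _ (⟨by norm_num, by norm_num⟩ : (1 / 2 : ℝ) ∈ Set.Icc (0 : ℝ) 1)]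
      rw [h2, ht_center] at h1
      have := abs_le.1 h1
      linarith
    rw [finsum_eq_single _ w0]
    · rw [hterm 1 rfl w0 hw0]
      have e : ∀ i : Fin n, (((1 : Equiv.Perm (Fin (n + 1))).symm i.succ : Fin (n + 1)) : ℕ) = i + 1 :=
        fun i => rfl
      simp [w0, e]
    · intro w hw
      by_contra hc
      rw [hterm 1 rfl w (term_ne hc)] at hc
      replace hc := Finset.prod_ne_zero_iff.1 hc
      apply hw
      funext i
      have := hc i (Finset.mem_univ i)
      by_contra hwi
      apply this
      rw [if_neg]
      rintro ⟨-, h⟩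
      exact hwi h
  · intro π hπ hne
    have hπ0 : π 0 = 0 := (Finset.mem_filter.1 hπ).2
    have : ∀ w, term (grid N (qloop n)) π w = 0 := by
      intro w
      by_contra hc
      rw [hterm π hπ0 w (term_ne hc)] at hc
      replace hc := Finset.prod_ne_zero_iff.1 hc
      apply hne
      refine Equiv.ext fun c => ?_
      refine Fin.cases hπ0 (fun i => ?_) c
      have := hc i (Finset.mem_univ i)
      by_contra hwi
      apply this
      rw [if_neg]
      rintro ⟨h, -⟩
      have h' : π.symm i.succ = i.succ := Fin.ext h
      rw [Equiv.symm_apply_eq] at h'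
      exact hwi h'.symm
    simp [this]
  · intro h
    exact absurd (by simp [PP]) h

lemma exists_pow [Nonempty (Fin n)] (k : ℕ) :
    ∃ f : Ω^ (Fin n) (Sph n) bp, cl f = cl (qloop n) ^ k ∧ evdeg f k := by
  induction k with
  | zero => exact ⟨GenLoop.const, by rw [pow_zero, cl_one], evdeg_const⟩
  | succ k ih =>
    obtain ⟨f, hf, hd⟩ := ih
    let a : Fin n := Classical.arbitrary _
    refine ⟨GenLoop.transAt a (qloop n) f, ?_, ?_⟩
    · rw [← cl_mul, hf, pow_succ]
    · have := evdeg_trans a (evdeg_q (n := n)) hd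
      push_cast
      rwa [add_comm]

lemma evdeg_unique {f : Ω^ (Fin n) (Sph n) bp} {K L : ℤ} (h : evdeg f K) (h' : evdeg f L) :
    K = L := by
  obtain ⟨A, hA, h⟩ := h
  obtain ⟨B, hB, h'⟩ := h'
  rw [← h (fun _ => A * B) fun _ => ⟨Dvd.intro _ rfl, Nat.mul_pos hA hB⟩,
    ← h' (fun _ => A * B) fun _ => ⟨Dvd.intro_left _ rfl, Nat.mul_pos hA hB⟩]

lemma q_pow_ne [Nonempty (Fin n)] {k : ℕ} (hk : cl (qloop n) ^ k = 1) : k = 0 := by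
  obtain ⟨f, hf, hd⟩ := exists_pow (n := n) k
  rw [hk, ← cl_one, cl_eq] at hf
  exact_mod_cast evdeg_unique (evdeg_homotopic hf hd) evdeg_const

/-- the homotopy group of the sphere -/
def sphIso [Nonempty (Fin n)] (hn : 2 ≤ n) :
    Multiplicative ℤ ≃* HomotopyGroup (Fin n) (Sph n) bp :=
  MulEquiv.ofBijective (zpowersHom _ (cl (qloop n))) ⟨by
    rw [injective_iff_map_eq_one]
    intro k hk
    have h1 : cl (qloop n) ^ (Multiplicative.toAdd k) = 1 := by simpa using hk
    have h2 : cl (qloop n) ^ (Multiplicative.toAdd k).natAbs = 1 := by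
      rcases Int.natAbs_eq (Multiplicative.toAdd k) with h | h
      · rw [h] at h1; simpa using h1
      · rw [h] at h1; simpa using h1
    have h3 := q_pow_ne h2
    have h4 : Multiplicative.toAdd k = 0 := Int.natAbs_eq_zero.1 h3
    exact h4, by
    intro z
    obtain ⟨k, hk⟩ := Subgroup.mem_zpowers_iff.1 (all_zpowers hn z)
    exact ⟨Multiplicative.ofAdd k, by simpa using hk⟩⟩

lemma pi_XX [Nonempty (Fin n)] (hn : 2 ≤ n) :
    Nonempty (HomotopyGroup (Fin n) (XX n) xb ≃* Multiplicative (ℕ → ℤ)) := by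
  have e1 : HomotopyGroup (Fin n) (XX n) xb ≃* (ℕ → HomotopyGroup (Fin n) (Sph n) bp) :=
    MulEquiv.ofBijective (pitot n) ⟨pitot_inj hn, pitot_surj⟩
  have e2 : (ℕ → HomotopyGroup (Fin n) (Sph n) bp) ≃* (ℕ → Multiplicative ℤ) :=
    MulEquiv.piCongrRight fun _ => (sphIso hn).symm
  have e3 : (ℕ → Multiplicative ℤ) ≃* Multiplicative (ℕ → ℤ) :=
    { toFun := fun x => Multiplicative.ofAdd fun k => Multiplicative.toAdd (x k)
      invFun := fun x k => Multiplicative.ofAdd (Multiplicative.toAdd x k)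
      left_inv := fun _ => rfl
      right_inv := fun _ => rfl
      map_mul' := fun _ _ => rfl }
  exact ⟨(e1.trans e2).trans e3⟩

end Degree3
end HE

namespace HE

section Homeo
variable {n : ℕ}

lemma mem_hawSphere {j : ℕ} (z : EuclideanSpace ℝ (Fin (n + 1))) :
    z ∈ hawSphere n j ↔ z 0 ^ 2 + ∑ i : Fin n, z i.succ ^ 2 = 2 * z 0 * (1 / j) := by
  unfold hawSphere
  have hj : (0 : ℝ) ≤ 1 / j := by positivity
  rw [Metric.mem_sphere, EuclideanSpace.dist_eq, Real.sqrt_eq_iff_mul_self_eq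
    (Finset.sum_nonneg fun i _ => sq_nonneg _) hj, Fin.sum_univ_succ]
  simp only [Real.dist_eq, sq_abs]
  have e : ∀ i : Fin n, (EuclideanSpace.single (0 : Fin (n + 1)) ((1 : ℝ) / j)) i.succ = 0 := by
    intro i
    simp
  have e0 : (EuclideanSpace.single (0 : Fin (n + 1)) ((1 : ℝ) / j)) 0 = 1 / j := by simp
  simp only [e, e0, sub_zero]
  constructor <;> intro h <;> nlinarith

lemma exists_idx (x : XX n) : ∃ k, ∀ j, j ≠ k → x.1 j = bp := by
  by_cases h : ∃ k, x.1 k ≠ bp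
  · obtain ⟨k, hk⟩ := h
    exact ⟨k, fun j hj => (x.2 j k hj).resolve_right hk⟩
  · push Not at h
    exact ⟨0, fun j _ => h j⟩

def SS (v : Sph n → ℝ) (x : XX n) : ℝ := ∑' k : ℕ, v (x.1 k) * (1 / ((k : ℝ) + 1))

lemma SS_eq {v : Sph n → ℝ} (hv : v bp = 0) {x : XX n} {k : ℕ} (hk : ∀ j, j ≠ k → x.1 j = bp) :
    SS v x = v (x.1 k) * (1 / ((k : ℝ) + 1)) := by
  unfold SS
  exact tsum_eq_single k fun j hj => by rw [hk j hj, hv, zero_mul]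

lemma SS_cont {v : Sph n → ℝ} (hc : Continuous v) (hv : v bp = 0) (hb : ∀ p, |v p| ≤ 2) :
    Continuous (SS v) := by
  refine continuous_of_uniform_approx_of_continuous fun u hu => ?_
  obtain ⟨ε, hε, hu⟩ := Metric.mem_uniformity_dist.1 hu
  obtain ⟨K, hK⟩ := exists_nat_gt (2 / ε)
  refine ⟨fun x => ∑ k ∈ Finset.range K, v (x.1 k) * (1 / ((k : ℝ) + 1)), ?_, fun x => hu ?_⟩
  · refine continuous_finsetSum _ fun k _ => ?_
    exact (hc.comp (rr k).continuous).mul continuous_const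
  · obtain ⟨k, hk⟩ := exists_idx x
    rw [SS_eq hv hk, Real.dist_eq]
    beta_reduce
    by_cases hkK : k < K
    · rw [Finset.sum_eq_single k (fun j _ hj => by rw [hk j hj, hv, zero_mul])
        (fun h => absurd (Finset.mem_range.2 hkK) h)]
      simpa using hε
    · rw [Finset.sum_eq_zero (fun j hj => by
        rw [hk j (by rintro rfl; exact hkK (Finset.mem_range.1 hj)), hv, zero_mul])]
      have h1 : (K : ℝ) ≤ k := by exact_mod_cast not_lt.1 hkK
      have h2 := hb (x.1 k)
      have h3 : (0 : ℝ) < k + 1 := by positivity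
      rw [sub_zero, abs_mul, abs_of_pos (by positivity : (0 : ℝ) < 1 / ((k : ℝ) + 1)),
        mul_one_div, div_lt_iff₀ h3]
      rw [div_lt_iff₀ hε] at hK
      nlinarith

lemma co_bd (i : Fin n) (p : Sph n) : |co i p| ≤ 2 := by
  have h := sph_eq p
  have h1 : co i p ^ 2 ≤ ∑ i, co i p ^ 2 :=
    Finset.single_le_sum (fun i _ => sq_nonneg (co i p)) (Finset.mem_univ i)
  rw [abs_le]
  constructor <;> nlinarith [sq_nonneg (ht p - 1)]

lemma ht_bd (p : Sph n) : |ht p| ≤ 2 := by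
  rw [abs_of_nonneg (ht_nonneg p)]; exact ht_le p

instance : CompactSpace (Sph n) := by
  refine isCompact_iff_compactSpace.1 (Metric.isCompact_of_isClosed_isBounded
    (s := {p : ℝ × (Fin n → ℝ) | p.1 ^ 2 + ∑ i, p.2 i ^ 2 = 2 * p.1}) ?_ ?_)
  · exact isClosed_eq (by fun_prop) (by fun_prop)
  · refine (Metric.isBounded_iff_subset_closedBall 0).2 ⟨2, fun p hp => ?_⟩
    rw [mem_closedBall_zero_iff, Prod.norm_def]
    refine max_le (ht_bd (n := n) ⟨p, hp⟩) ?_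
    rw [pi_norm_le_iff_of_nonneg (by norm_num)]
    exact fun i => co_bd (n := n) i ⟨p, hp⟩

instance : CompactSpace (XX n) := by
  refine isCompact_iff_compactSpace.1 (IsClosed.isCompact
    (s := {x : ℕ → Sph n | ∀ j k, j ≠ k → x j = bp ∨ x k = bp}) ?_)
  simp only [Set.ofPred_forall]
  refine isClosed_iInter fun j => isClosed_iInter fun k => isClosed_iInter fun _ => ?_
  exact (isClosed_eq (continuous_apply j) continuous_const).union
    (isClosed_eq (continuous_apply k) continuous_const)

def Psi0 (x : XX n) : EuclideanSpace ℝ (Fin (n + 1)) :=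
  WithLp.toLp 2 (Fin.cons (SS ht x) fun i => SS (co i) x)

lemma Psi0_zero (x : XX n) : Psi0 x 0 = SS ht x := rfl
lemma Psi0_succ (x : XX n) (i : Fin n) : Psi0 x i.succ = SS (co i) x := rfl

lemma Psi0_cont : Continuous (Psi0 (n := n)) := by
  refine (PiLp.continuous_toLp 2 _).comp (continuous_pi fun c => ?_)
  refine Fin.cases ?_ (fun i => ?_) c
  · exact SS_cont continuous_ht ht_bp ht_bd
  · exact SS_cont (continuous_co i) (co_bp i) (co_bd i)

lemma Psi0_mem_sphere {x : XX n} {k : ℕ} (hk : ∀ j, j ≠ k → x.1 j = bp) :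
    Psi0 x ∈ hawSphere n (k + 1) := by
  rw [mem_hawSphere, Psi0_zero]
  simp only [Psi0_succ]
  rw [SS_eq ht_bp hk]
  simp only [SS_eq (co_bp _) hk, mul_pow, ← Finset.sum_mul]
  have := sph_eq (x.1 k)
  push_cast
  rw [← add_mul, this]
  ring

lemma Psi0_mem (x : XX n) : Psi0 x ∈ hawaiian n := by
  obtain ⟨k, hk⟩ := exists_idx x
  exact Set.mem_biUnion (x := k + 1) (by simp) (Psi0_mem_sphere hk)

def Psi (x : XX n) : hawaiian n := ⟨Psi0 x, Psi0_mem x⟩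

lemma Psi_inj : Function.Injective (Psi (n := n)) := by
  intro x y hxy
  have h : Psi0 x = Psi0 y := congrArg Subtype.val hxy
  obtain ⟨k, hk⟩ := exists_idx x
  obtain ⟨l, hl⟩ := exists_idx y
  have h0 : SS ht x = SS ht y := by rw [← Psi0_zero, ← Psi0_zero, h]
  have hi : ∀ i, SS (co i) x = SS (co i) y := fun i => by rw [← Psi0_succ, ← Psi0_succ, h]
  have hkp : (0 : ℝ) < (k : ℝ) + 1 := by positivity
  have hlp : (0 : ℝ) < (l : ℝ) + 1 := by positivity
  by_cases hkl : k = l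
  · subst hkl
    refine XX_ext fun j => ?_
    by_cases hj : j = k
    · subst hj
      refine sph_ext ?_ fun i => ?_
      · rw [SS_eq ht_bp hk, SS_eq ht_bp hl] at h0
        exact mul_right_cancel₀ (by positivity) h0
      · have := hi i
        rw [SS_eq (co_bp i) hk, SS_eq (co_bp i) hl] at this
        exact mul_right_cancel₀ (by positivity) this
    · rw [hk j hj, hl j hj]
  · have m1 := (mem_hawSphere _).1 (Psi0_mem_sphere hk)
    have m2 := (mem_hawSphere _).1 (Psi0_mem_sphere hl)
    rw [h, m2, Psi0_zero] at m1
    have h3 : SS ht y = 0 := by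
      by_contra hne
      apply hkl
      have h4 : (1 : ℝ) / ((l + 1 : ℕ) : ℝ) = 1 / ((k + 1 : ℕ) : ℝ) :=
        mul_left_cancel₀ (mul_ne_zero two_ne_zero hne) m1
      rw [one_div, one_div, inv_inj] at h4
      have : l + 1 = k + 1 := by exact_mod_cast h4
      omega
    rw [h3] at h0
    have hx : x.1 k = bp := by
      apply eq_bp_of_ht
      rw [SS_eq ht_bp hk] at h0
      exact (mul_eq_zero.1 h0).resolve_right (by positivity)
    have hy : y.1 l = bp := by
      apply eq_bp_of_ht
      rw [SS_eq ht_bp hl] at h3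
      exact (mul_eq_zero.1 h3).resolve_right (by positivity)
    refine XX_ext fun j => ?_
    have e1 : x.1 j = bp := by
      by_cases hj : j = k
      · rw [hj, hx]
      · exact hk j hj
    have e2 : y.1 j = bp := by
      by_cases hj : j = l
      · rw [hj, hy]
      · exact hl j hj
    rw [e1, e2]

lemma Psi_surj : Function.Surjective (Psi (n := n)) := by
  rintro ⟨z, hz⟩
  obtain ⟨j, hj, hz'⟩ := Set.mem_iUnion₂.1 hz
  obtain ⟨k, rfl⟩ : ∃ k, j = k + 1 := ⟨j - 1, by have : 1 ≤ j := hj; omega⟩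
  rw [mem_hawSphere] at hz'
  have hkp : (0 : ℝ) < (k : ℝ) + 1 := by positivity
  let p : Sph n := ⟨(((k : ℝ) + 1) * z 0, fun i => ((k : ℝ) + 1) * z i.succ), by
    simp only [mul_pow, ← Finset.mul_sum]
    rw [← mul_add, hz']
    push_cast
    field_simp⟩
  have hp0 : ht p = ((k : ℝ) + 1) * z 0 := rfl
  have hpi : ∀ i, co i p = ((k : ℝ) + 1) * z i.succ := fun i => rfl
  let x : XX n := ⟨fun j => if j = k then p else bp, fun i j hij => by
    by_cases h : i = k
    · right; exact if_neg (by omega)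
    · left; exact if_neg h⟩
  have hxk : x.1 k = p := if_pos rfl
  have hk : ∀ j, j ≠ k → x.1 j = bp := fun j hj => if_neg hj
  refine ⟨x, Subtype.ext ?_⟩
  change Psi0 x = z
  ext c
  refine Fin.cases ?_ (fun i => ?_) c
  · rw [Psi0_zero, SS_eq ht_bp hk, hxk, hp0]
    field_simp
  · rw [Psi0_succ, SS_eq (co_bp i) hk, hxk, hpi]
    field_simp

lemma Psi_cont : Continuous (Psi (n := n)) := Psi0_cont.subtype_mk _

def PsiH : XX n ≃ₜ hawaiian n :=
  Continuous.homeoOfEquivCompactToT2 (f := Equiv.ofBijective Psi ⟨Psi_inj, Psi_surj⟩) Psi_cont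

lemma PsiH_xb : PsiH (xb : XX n) = hawaiianPt n := by
  change Psi xb = _
  apply Subtype.ext
  change Psi0 xb = 0
  have hk : ∀ j, j ≠ 0 → (xb : XX n).1 j = bp := fun _ _ => rfl
  have hb : (xb : XX n).1 0 = bp := rfl
  ext c
  refine Fin.cases ?_ (fun i => ?_) c
  · rw [Psi0_zero, SS_eq ht_bp hk, hb, ht_bp, zero_mul]; rfl
  · rw [Psi0_succ, SS_eq (co_bp i) hk, hb, co_bp, zero_mul]; rfl

end Homeo
end HE

/-- For `n = m+2 ≥ 2`, the `n`-th homotopy group of the `n`-dimensional Hawaiian earring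
is isomorphic to the countable direct product `∏_{j ∈ ℕ} ℤ`. -/
theorem pi_hawaiian_iso (m : ℕ) :
    Nonempty (HomotopyGroup (Fin (m+2)) (hawaiian (m+2)) (hawaiianPt (m+2)) ≃*
      Multiplicative (ℕ → ℤ)) := by
  obtain ⟨e⟩ := HE.pi_XX (n := m + 2) (by omega)
  exact ⟨(HE.piequiv HE.PsiH HE.PsiH_xb).symm.trans e⟩
end
end
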